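/- arXiv:1912.05178 — 3 statements merged into one kernel-verified Lean document; each statement's English description precedes it below -/
import Mathlib

section
/- Lemma 2.5(i)-(ii): Let v be a classical solution of v_t = v_rr + ((m−1)/r) v_r − (b(r,t)/r²) v on [0,R] × (t1,t2), not identically zero, satisfying the boundary condition (1.5) and v(0,t) = 0 for all t ∈ (t1,t2). Let t0 ∈ (t1,t2) and let ε0 > 0 be such that for every t ∈ (t0 − ε0, t0) all zeros of v(·,t) are simple and Z(v(·,t)) is constant equal to n+1. Then there exist n+1 continuous functions ζ_0, ζ_1, ..., ζ_n : (t0 − ε0, t0) → [0,R] such that for every t ∈ (t0 − ε0, t0): ζ_0(t) = 0 < ζ_1(t) < ... < ζ_{n−1}(t) < ζ_n(t), and {r ∈ [0,R] : v(r,t) = 0} = {ζ_i(t) : 0 ≤ i ≤ n}; moreover, for each 0 ≤ i ≤ n the limit ζ_i(t0) := lim_{t → t0⁻} ζ_i(t) exists. -/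
open Set Filter

lemma zc_bint {R K : ℝ} (hR : 0 < R) {g : ℝ → ℝ} (hc : ContinuousOn g (Ioo 0 R))
    (hb : ∀ r ∈ Ioo 0 R, |g r| ≤ K) : IntervalIntegrable g MeasureTheory.volume 0 R := by
  rw [intervalIntegrable_iff_integrableOn_Ioo_of_le hR.le]
  refine MeasureTheory.IntegrableOn.of_bound (C := K) (by simp) (hc.aestronglyMeasurable measurableSet_Ioo) ?_
  filter_upwards [MeasureTheory.ae_restrict_mem measurableSet_Ioo] with r hr
  simpa using hb r hr

lemma zc_deriv_int {R K s1 s2 s0 : ℝ} (hR : 0 < R) (hs : s0 ∈ Ioo s1 s2) {F F' : ℝ → ℝ → ℝ}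
    (hc : ∀ s ∈ Ioo s1 s2, ContinuousOn (F s) (Ioo 0 R))
    (hc' : ∀ s ∈ Ioo s1 s2, ContinuousOn (F' s) (Ioo 0 R))
    (hb : ∀ s ∈ Ioo s1 s2, ∀ r ∈ Ioo 0 R, |F s r| ≤ K)
    (hb' : ∀ s ∈ Ioo s1 s2, ∀ r ∈ Ioo 0 R, |F' s r| ≤ K)
    (hd : ∀ s ∈ Ioo s1 s2, ∀ r ∈ Ioo 0 R, HasDerivAt (fun s => F s r) (F' s r) s) :
    HasDerivAt (fun s => ∫ r in (0:ℝ)..R, F s r) (∫ r in (0:ℝ)..R, F' s0 r) s0 := by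
  have hI : uIoc 0 R = Ioc 0 R := uIoc_of_le hR.le
  have hae : ∀ᵐ r : ℝ, r ∈ uIoc 0 R → r ∈ Ioo 0 R := by
    have : ∀ᵐ r : ℝ, r ≠ R := by
      simp [MeasureTheory.ae_iff]
    filter_upwards [this] with r hr h
    rw [hI] at h
    exact ⟨h.1, lt_of_le_of_ne h.2 hr⟩
  refine (intervalIntegral.hasDerivAt_integral_of_dominated_loc_of_deriv_le (𝕜 := ℝ)
    (bound := fun _ => K) (F := F) (F' := F') (s := Ioo s1 s2)
    (isOpen_Ioo.mem_nhds hs) ?_ (zc_bint hR (hc _ hs) (hb _ hs)) ?_ ?_ ?_ ?_).2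
  · filter_upwards [isOpen_Ioo.mem_nhds hs] with s hs'
    have := (zc_bint hR (hc _ hs') (hb _ hs')).aestronglyMeasurable
    rwa [hI]
  · have := (zc_bint hR (hc' _ hs) (hb' _ hs)).aestronglyMeasurable
    rwa [hI]
  · filter_upwards [hae] with r hr h s hs'
    exact hb' s hs' r (hr h)
  · exact intervalIntegrable_const
  · filter_upwards [hae] with r hr h s hs'
    exact hd s hs' r (hr h)

lemma zc_ode_end {S C : ℝ} (hS : 0 < S) (hC : 0 ≤ C) {I D dI dD : ℝ → ℝ}
    (hI : ∀ s ∈ Ioo 0 S, HasDerivAt I (dI s) s)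
    (hD : ∀ s ∈ Ioo 0 S, HasDerivAt D (dD s) s)
    (hIpos : ∀ s ∈ Ioo 0 S, 0 < I s) (hDpos : ∀ s ∈ Ioo 0 S, 0 ≤ D s)
    (h1 : ∀ s ∈ Ioo 0 S, dI s ≤ (2 + C) * D s + I s + I s / (2 * s))
    (h2 : ∀ s ∈ Ioo 0 S, -(C / 2) * (s * D s * I s) ≤ (D s + s * dD s) * I s - s * D s * dI s)
    (h3 : ∀ k : ℕ, ∃ K : ℝ, ∀ s ∈ Ioo 0 S, I s ≤ K * s ^ k) : False := by
  set S' := S / 2 with hS'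
  have hS'0 : 0 < S' := by positivity
  have hsub : ∀ s ∈ Ioc 0 S', s ∈ Ioo 0 S := fun s hs => ⟨hs.1, by have := hs.2; linarith⟩
  -- monotonicity of exp(Cs/2) N
  have hN : MonotoneOn (fun s => Real.exp (C / 2 * s) * (s * D s / I s)) (Ioc 0 S') := by
    have hder : ∀ s ∈ Ioo 0 S, HasDerivAt (fun s => Real.exp (C / 2 * s) * (s * D s / I s))
        (Real.exp (C / 2 * s) * (C / 2) * (s * D s / I s) + Real.exp (C / 2 * s) *
          (((1 * D s + s * dD s) * I s - s * D s * dI s) / (I s) ^ 2)) s := by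
      intro s hs
      have e1 : HasDerivAt (fun s : ℝ => Real.exp (C / 2 * s)) (Real.exp (C / 2 * s) * (C / 2)) s := by
        simpa using ((hasDerivAt_id s).const_mul (C / 2)).exp
      exact e1.mul (((hasDerivAt_id s).mul (hD s hs)).div (hI s hs) (hIpos s hs).ne')
    refine monotoneOn_of_deriv_nonneg (convex_Ioc _ _) ?_ ?_ ?_
    · intro s hs
      exact (hder s (hsub s hs)).continuousAt.continuousWithinAt
    · intro s hs
      exact (hder s (hsub s (interior_subset hs))).differentiableAt.differentiableWithinAt
    · intro s hs
      have hs := hsub s (interior_subset hs)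
      rw [(hder s hs).deriv]
      have hp := hIpos s hs
      have := h2 s hs
      have : Real.exp (C / 2 * s) * (C / 2) * (s * D s / I s) + Real.exp (C / 2 * s) *
          (((1 * D s + s * dD s) * I s - s * D s * dI s) / (I s) ^ 2)
          = Real.exp (C / 2 * s) * ((((D s + s * dD s) * I s - s * D s * dI s) +
            C / 2 * (s * D s * I s)) / (I s)^2) := by
        field_simp
        ring
      rw [this]
      have h4 : 0 ≤ ((D s + s * dD s) * I s - s * D s * dI s) + C / 2 * (s * D s * I s) := by linarith
      positivity
  set Nb := Real.exp (C / 2 * S') * (S' * D S' / I S') with hNb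
  have hNle : ∀ s ∈ Ioc 0 S', s * D s ≤ Nb * I s := by
    intro s hs
    have h := hN hs ⟨hS'0, le_refl _⟩ hs.2
    simp only at h
    have hp := hIpos s (hsub s hs)
    have hd := hDpos s (hsub s hs)
    have : 1 ≤ Real.exp (C / 2 * s) := Real.one_le_exp (by have := hs.1; positivity)
    have h5 : s * D s / I s ≤ Nb := by
      refine le_trans ?_ h
      have h0 : 0 ≤ s * D s / I s := by have := hs.1; positivity
      nlinarith
    rwa [div_le_iff₀ hp] at h5
  obtain ⟨K, hK⟩ := exists_nat_ge ((2 + C) * Nb + S + 1 / 2)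
  have hanti : AntitoneOn (fun s => I s / s ^ K) (Ioc 0 S') := by
    have hder : ∀ s ∈ Ioo 0 S, HasDerivAt (fun s => I s / s ^ K)
        ((dI s * s ^ K - I s * (K * s ^ (K - 1))) / (s ^ K) ^ 2) s := by
      intro s hs
      exact (hI s hs).div (hasDerivAt_pow K s) (pow_pos hs.1 K).ne'
    refine antitoneOn_of_deriv_nonpos (convex_Ioc _ _) ?_ ?_ ?_
    · intro s hs
      exact (hder s (hsub s hs)).continuousAt.continuousWithinAt
    · intro s hs
      exact (hder s (hsub s (interior_subset hs))).differentiableAt.differentiableWithinAt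
    · intro s hs'
      have hs0 := interior_subset hs'
      have hs := hsub s hs0
      rw [(hder s hs).deriv]
      apply div_nonpos_of_nonpos_of_nonneg _ (by positivity)
      have hp := hIpos s hs
      have hs1 := hs.1
      have key : s * dI s ≤ K * I s := by
        have a1 := mul_le_mul_of_nonneg_left (h1 s hs) hs1.le
        have a2 := hNle s hs0
        have a3 : s * ((2 + C) * D s + I s + I s / (2 * s)) = (2 + C) * (s * D s) + s * I s + I s / 2 := by
          field_simp
        have a4 : (2 + C) * (s * D s) ≤ (2 + C) * (Nb * I s) := by gcongr
        have a5 : s * I s ≤ S * I s := by have := hs.2; gcongr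
        have a6 := mul_le_mul_of_nonneg_right hK hp.le
        nlinarith
      rcases Nat.eq_zero_or_pos K with h0 | h0
      · subst h0
        simp at key ⊢
        nlinarith
      · obtain ⟨j, rfl⟩ : ∃ j, K = j + 1 := ⟨K - 1, by omega⟩
        have : dI s * s ^ (j + 1) - I s * (((j + 1 : ℕ) : ℝ) * s ^ (j + 1 - 1)) =
          s ^ j * (s * dI s - ((j + 1 : ℕ) : ℝ) * I s) := by
          simp only [Nat.add_sub_cancel]; ring
        rw [this]
        apply mul_nonpos_of_nonneg_of_nonpos (by positivity)
        linarith
  obtain ⟨B, hB⟩ := h3 (K + 1)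
  set c := I S' / S' ^ K with hc
  have hc0 : 0 < c := div_pos (hIpos S' (hsub S' ⟨hS'0, le_refl _⟩)) (by positivity)
  have hfin : ∀ s ∈ Ioc 0 S', c ≤ B * s := by
    intro s hs
    have h := hanti hs ⟨hS'0, le_refl _⟩ hs.2
    have hb := hB s (hsub s hs)
    have hs0 := hs.1
    simp only at h
    refine h.trans ?_
    rw [div_le_iff₀ (by positivity)]
    calc I s ≤ B * s ^ (K + 1) := hb
      _ = _ := by ring
  have hB0 : 0 < B := by
    have := hfin S' ⟨hS'0, le_refl _⟩
    by_contra hh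
    push Not at hh
    nlinarith
  have := hfin (min S' (c / (2 * B))) ⟨by positivity, min_le_left _ _⟩
  have h6 : B * min S' (c / (2 * B)) ≤ B * (c / (2 * B)) := by gcongr; exact min_le_right _ _
  have h7 : B * (c / (2 * B)) = c / 2 := by field_simp
  linarith

lemma zc_slice_alg {I D A E Q P W dI dD s C : ℝ} (hs : 0 < s) (hI : 0 < I)
    (h1 : D + P = 0) (h2 : dI - 2 * D + 2 * A - 1 / (2 * s) * I = 0)
    (h3 : 0 ≤ dD + 1 / (2 * s) * D - 2 * E - W) (hW : 0 ≤ W)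
    (h4 : ∀ l : ℝ, 0 ≤ E + 1 / 4 * Q + 2 * l * (P + 1 / 2 * A) + l ^ 2 * I)
    (h5 : Q ≤ C * D) (h6 : -2 * A ≤ I + Q) :
    dI ≤ (2 + C) * D + I + I / (2 * s) ∧
    -(C / 2) * (s * D * I) ≤ (D + s * dD) * I - s * D * dI := by
  have e : 1 / (2 * s) * I = I / (2 * s) := by ring
  refine ⟨by rw [e] at h2; nlinarith, ?_⟩
  have h7 := h4 (-(P + 1 / 2 * A) / I)
  have h8 : (P + 1 / 2 * A) ^ 2 ≤ (E + 1 / 4 * Q) * I := by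
    have : (E + 1 / 4 * Q + 2 * (-(P + 1 / 2 * A) / I) * (P + 1 / 2 * A) + (-(P + 1 / 2 * A) / I) ^ 2 * I) * I
      = (E + 1 / 4 * Q) * I - (P + 1 / 2 * A) ^ 2 := by
      field_simp
      ring
    nlinarith [mul_nonneg h7 hI.le]
  have hP : P = -D := by linarith
  subst hP
  have hdI : s * dI = 2 * s * D - 2 * s * A + I / 2 := by
    have : dI = 2 * D - 2 * A + 1 / (2 * s) * I := by linarith
    rw [this]; field_simp
  have hdD : 2 * s * E - D / 2 ≤ s * dD := by
    have : 0 ≤ s * (dD + 1 / (2 * s) * D - 2 * E) := mul_nonneg hs.le (by linarith)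
    have e2 : s * (dD + 1 / (2 * s) * D - 2 * E) = s * dD + D / 2 - 2 * s * E := by field_simp
    linarith
  have h9 := mul_le_mul_of_nonneg_right hdD hI.le
  have h10 : s * D * dI = D * (2 * s * D - 2 * s * A + I / 2) := by rw [← hdI]; ring
  rw [h10]
  have h11 := mul_le_mul_of_nonneg_left h8 hs.le
  have h12 := mul_le_mul_of_nonneg_left h5 (mul_pos hs hI).le
  nlinarith [mul_nonneg hs.le (sq_nonneg A)]

lemma zc_absmul (a b K L : ℝ) (ha : a ^ 2 ≤ K) (hb : b ^ 2 ≤ L) : |a * b| ≤ K + L := by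
  rw [abs_le]; constructor <;> nlinarith [sq_nonneg (a + b), sq_nonneg (a - b), sq_nonneg a, sq_nonneg b]

set_option maxHeartbeats 2000000 in
lemma zc_slice {R x0 s κ M C L : ℝ} (hx0 : 0 < x0) (hx0R : x0 < R) (hs : 0 < s) (hκ : 0 < κ)
    (hC : 0 ≤ C) (hM : 0 ≤ M) {u ur urr us urs : ℝ → ℝ}
    (hu : ∀ r ∈ Ioo 0 R, HasDerivAt u (ur r) r) (hur : ∀ r ∈ Ioo 0 R, HasDerivAt ur (urr r) r)
    (hus : ∀ r ∈ Ioo 0 R, HasDerivAt us (urs r) r)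
    (curr : ContinuousOn urr (Ioo 0 R)) (curs : ContinuousOn urs (Ioo 0 R))
    (bu : ∀ r ∈ Ioo 0 R, u r ^ 2 ≤ M * r ^ 3) (bur : ∀ r ∈ Ioo 0 R, ur r ^ 2 ≤ M * r)
    (bus : ∀ r ∈ Ioo 0 R, us r ^ 2 ≤ M * r ^ 3) (burs : ∀ r ∈ Ioo 0 R, urs r ^ 2 ≤ M * r)
    (lu : Tendsto u (nhdsWithin R (Iio R)) (nhds 0))
    (lus : Tendsto us (nhdsWithin R (Iio R)) (nhds 0))
    (lur : Tendsto ur (nhdsWithin R (Iio R)) (nhds L))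
    (bf : ∀ r ∈ Ioo 0 R, (-us r - urr r + κ * u r / r ^ 2) ^ 2 ≤ C * (ur r ^ 2 + κ * u r ^ 2 / r ^ 2))
    (hI : 0 < ∫ r in (0:ℝ)..R, u r ^ 2 * Real.exp (-(r - x0) ^ 2 / (4 * s))) :
    (∫ r in (0:ℝ)..R, (2 * u r * us r + u r ^ 2 * ((r - x0) / (2 * s)) ^ 2) *
        Real.exp (-(r - x0) ^ 2 / (4 * s))) ≤
      (2 + C) * (∫ r in (0:ℝ)..R, (ur r ^ 2 + κ * u r ^ 2 / r ^ 2) * Real.exp (-(r - x0) ^ 2 / (4 * s)))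
        + (∫ r in (0:ℝ)..R, u r ^ 2 * Real.exp (-(r - x0) ^ 2 / (4 * s)))
        + (∫ r in (0:ℝ)..R, u r ^ 2 * Real.exp (-(r - x0) ^ 2 / (4 * s))) / (2 * s) ∧
    -(C / 2) * (s * (∫ r in (0:ℝ)..R, (ur r ^ 2 + κ * u r ^ 2 / r ^ 2) * Real.exp (-(r - x0) ^ 2 / (4 * s)))
        * (∫ r in (0:ℝ)..R, u r ^ 2 * Real.exp (-(r - x0) ^ 2 / (4 * s)))) ≤
      ((∫ r in (0:ℝ)..R, (ur r ^ 2 + κ * u r ^ 2 / r ^ 2) * Real.exp (-(r - x0) ^ 2 / (4 * s)))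
        + s * (∫ r in (0:ℝ)..R, (2 * ur r * urs r + 2 * κ * u r * us r / r ^ 2 +
          (ur r ^ 2 + κ * u r ^ 2 / r ^ 2) * ((r - x0) / (2 * s)) ^ 2) *
            Real.exp (-(r - x0) ^ 2 / (4 * s))))
        * (∫ r in (0:ℝ)..R, u r ^ 2 * Real.exp (-(r - x0) ^ 2 / (4 * s)))
      - s * (∫ r in (0:ℝ)..R, (ur r ^ 2 + κ * u r ^ 2 / r ^ 2) * Real.exp (-(r - x0) ^ 2 / (4 * s)))
        * (∫ r in (0:ℝ)..R, (2 * u r * us r + u r ^ 2 * ((r - x0) / (2 * s)) ^ 2) *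
        Real.exp (-(r - x0) ^ 2 / (4 * s))) := by
  have hR : 0 < R := hx0.trans hx0R
  have cu : ContinuousOn u (Ioo 0 R) := fun r hr => (hu r hr).continuousAt.continuousWithinAt
  have cur : ContinuousOn ur (Ioo 0 R) := fun r hr => (hur r hr).continuousAt.continuousWithinAt
  have cus : ContinuousOn us (Ioo 0 R) := fun r hr => (hus r hr).continuousAt.continuousWithinAt
  obtain ⟨G, hG⟩ : ∃ G : ℝ → ℝ, G = fun r => Real.exp (-(r - x0) ^ 2 / (4 * s)) := ⟨_, rfl⟩
  obtain ⟨h, hh⟩ : ∃ h : ℝ → ℝ, h = fun r => (r - x0) / (2 * s) := ⟨_, rfl⟩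
  obtain ⟨w, hw⟩ : ∃ w : ℝ → ℝ, w = fun r => κ / r ^ 2 := ⟨_, rfl⟩
  obtain ⟨f, hf⟩ : ∃ f : ℝ → ℝ, f = fun r => -us r - urr r + w r * u r := ⟨_, rfl⟩
  obtain ⟨X, hX⟩ : ∃ X : ℝ → ℝ, X = fun r => urr r - w r * u r - h r * ur r := ⟨_, rfl⟩
  have cG : Continuous G := by rw [hG]; fun_prop
  have ch : Continuous h := by rw [hh]; fun_prop
  have cw : ContinuousOn w (Ioo 0 R) := by
    rw [hw]
    exact continuousOn_const.div (by fun_prop) (fun r hr => (pow_pos hr.1 2).ne')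
  have cGo := cG.continuousOn (s := Ioo 0 R)
  have cho := ch.continuousOn (s := Ioo 0 R)
  have cf : ContinuousOn f (Ioo 0 R) := by rw [hf]; fun_prop
  have cX : ContinuousOn X (Ioo 0 R) := by rw [hX]; fun_prop
  have hG0 : ∀ r, 0 < G r := fun r => by rw [hG]; positivity
  have hG1 : ∀ r, G r ≤ 1 := fun r => by
    rw [hG]; simp only; rw [Real.exp_le_one_iff]
    apply div_nonpos_of_nonpos_of_nonneg (by nlinarith [sq_nonneg (r - x0)]) (by positivity)
  have dG : ∀ r, HasDerivAt G (-h r * G r) r := by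
    intro r
    rw [hG, hh]
    have h1 : HasDerivAt (fun r : ℝ => -(r - x0) ^ 2 / (4 * s)) (-((r - x0) / (2 * s))) r := by
      refine (((((hasDerivAt_id' r).sub_const x0).fun_pow 2).fun_neg.div_const (4 * s))).congr_deriv ?_
      simp
      field_simp
      ring
    refine h1.exp.congr_deriv ?_
    simp only
    ring
  have dh : ∀ r, HasDerivAt h (1 / (2 * s)) r := by
    intro r
    rw [hh]
    exact ((hasDerivAt_id r).sub_const x0).div_const (2 * s)
  have dw : ∀ r ∈ Ioo 0 R, HasDerivAt w (-2 * κ / r ^ 3) r := by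
    intro r hr
    rw [hw]
    have hr0 := hr.1.ne'
    refine ((hasDerivAt_const r κ).fun_div ((hasDerivAt_id' r).fun_pow 2) (pow_pos hr.1 2).ne').congr_deriv ?_
    simp
    field_simp
  -- bounds
  set H := (R / (2 * s)) ^ 2 with hHdef
  have bh : ∀ r ∈ Ioo 0 R, h r ^ 2 ≤ H := by
    intro r hr
    rw [hh, hHdef, sq_le_sq, abs_div, abs_div, abs_of_pos hR]
    gcongr
    rw [abs_le]; constructor <;> linarith [hr.1, hr.2]
  have bu' : ∀ r ∈ Ioo 0 R, u r ^ 2 ≤ M * R ^ 3 := fun r hr => (bu r hr).trans (by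
    have := hr.1; have := hr.2; gcongr)
  have bus' : ∀ r ∈ Ioo 0 R, us r ^ 2 ≤ M * R ^ 3 := fun r hr => (bus r hr).trans (by
    have := hr.1; have := hr.2; gcongr)
  have bur' : ∀ r ∈ Ioo 0 R, ur r ^ 2 ≤ M * R := fun r hr => (bur r hr).trans (by
    have := hr.1; have := hr.2; gcongr)
  have burs' : ∀ r ∈ Ioo 0 R, urs r ^ 2 ≤ M * R := fun r hr => (burs r hr).trans (by
    have := hr.1; have := hr.2; gcongr)
  have hw0 : ∀ r, 0 ≤ w r := fun r => by rw [hw]; positivity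
  have hwr : ∀ r ∈ Ioo 0 R, ∀ y, y ≤ M * r ^ 3 → w r * y ≤ κ * M * r := by
    intro r hr y hy
    have hr0 := hr.1
    calc w r * y ≤ w r * (M * r ^ 3) := mul_le_mul_of_nonneg_left hy (hw0 r)
      _ = κ * M * r := by rw [hw]; field_simp
  have bwu : ∀ r ∈ Ioo 0 R, w r * u r ^ 2 ≤ κ * M * R := fun r hr =>
    (hwr r hr _ (bu r hr)).trans (by have := hr.2; gcongr)
  have bwus : ∀ r ∈ Ioo 0 R, w r * us r ^ 2 ≤ κ * M * R := fun r hr =>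
    (hwr r hr _ (bus r hr)).trans (by have := hr.2; gcongr)
  have bf1 : ∀ r ∈ Ioo 0 R, f r ^ 2 ≤ C * (ur r ^ 2 + w r * u r ^ 2) := by
    intro r hr
    have := bf r hr
    rw [hf, hw]
    convert this using 2 <;> ring
  have bf' : ∀ r ∈ Ioo 0 R, f r ^ 2 ≤ C * (M * R + κ * M * R) := fun r hr =>
    (bf1 r hr).trans (by have := bur' r hr; have := bwu r hr; gcongr)
  set Fb := C * (M * R + κ * M * R) with hFb
  have hXe : ∀ r, X r = -(us r) - f r - h r * ur r := by intro r; rw [hX, hf]; ring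
  have bhur : ∀ r ∈ Ioo 0 R, (h r * ur r) ^ 2 ≤ H * (M * R) := by
    intro r hr
    rw [mul_pow]
    have := bh r hr; have := bur' r hr
    gcongr
  have bX : ∀ r ∈ Ioo 0 R, X r ^ 2 ≤ 3 * (M * R ^ 3 + Fb + H * (M * R)) := by
    intro r hr
    rw [hXe]
    nlinarith [bus' r hr, bf' r hr, bhur r hr, sq_nonneg (us r - f r), sq_nonneg (us r - h r * ur r),
      sq_nonneg (f r - h r * ur r)]
  set Xb := 3 * (M * R ^ 3 + Fb + H * (M * R)) with hXb
  have mulG : ∀ (g : ℝ → ℝ) (K : ℝ), ContinuousOn g (Ioo 0 R) → (∀ r ∈ Ioo 0 R, |g r| ≤ K) →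
      IntervalIntegrable (fun r => g r * G r) MeasureTheory.volume 0 R := by
    intro g K cg hg
    refine zc_bint (K := K) hR (cg.mul cGo) ?_
    intro r hr
    rw [abs_mul, abs_of_pos (hG0 r)]
    calc |g r| * G r ≤ |g r| * 1 := by have := hG1 r; gcongr
      _ ≤ K := by rw [mul_one]; exact hg r hr
  -- integrability
  have iI := mulG (fun r => u r ^ 2) (M * R ^ 3) (by fun_prop) (fun r hr => by
    rw [abs_of_nonneg (by positivity)]; exact bu' r hr)
  have iD := mulG (fun r => ur r ^ 2 + w r * u r ^ 2) (M * R + κ * M * R) (by fun_prop) (fun r hr => by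
    have := hw0 r
    rw [abs_of_nonneg (by positivity)]; exact add_le_add (bur' r hr) (bwu r hr))
  have iA := mulG (fun r => u r * f r) (M * R ^ 3 + Fb) (by fun_prop) (fun r hr =>
    zc_absmul _ _ _ _ (bu' r hr) (bf' r hr))
  have iP := mulG (fun r => u r * X r) (M * R ^ 3 + Xb) (by fun_prop) (fun r hr =>
    zc_absmul _ _ _ _ (bu' r hr) (bX r hr))
  have iQ := mulG (fun r => f r ^ 2) Fb (by fun_prop) (fun r hr => by
    rw [abs_of_nonneg (by positivity)]; exact bf' r hr)
  have iE := mulG (fun r => X r * X r + f r * X r) ((Xb + Xb) + (Fb + Xb)) (by fun_prop) (fun r hr =>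
    (abs_add_le _ _).trans (add_le_add (zc_absmul _ _ _ _ (bX r hr) (bX r hr))
      (zc_absmul _ _ _ _ (bf' r hr) (bX r hr))))
  have iW := mulG (fun r => κ * x0 / (s * r ^ 3) * u r ^ 2) (κ * x0 / s * M) (by
      refine ContinuousOn.mul (continuousOn_const.div (by fun_prop) (fun r hr => ?_)) (by fun_prop)
      have := hr.1; positivity) (fun r hr => by
    have hr0 := hr.1
    rw [abs_of_nonneg (by positivity)]
    calc κ * x0 / (s * r ^ 3) * u r ^ 2 ≤ κ * x0 / (s * r ^ 3) * (M * r ^ 3) :=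
          mul_le_mul_of_nonneg_left (bu r hr) (by positivity)
      _ = κ * x0 / s * M := by field_simp)
  have buh : ∀ r ∈ Ioo 0 R, u r ^ 2 * h r ^ 2 ≤ M * R ^ 3 * H := fun r hr => by
    have := bu' r hr; have := bh r hr; gcongr
  have ih1 := mulG (fun r => 2 * u r * us r + u r ^ 2 * h r ^ 2) (2 * (M * R ^ 3 + M * R ^ 3) + M * R ^ 3 * H)
    (by fun_prop) (fun r hr => by
      refine (abs_add_le _ _).trans (add_le_add ?_ ?_)
      · rw [mul_assoc, abs_mul, abs_two]
        have := zc_absmul _ _ _ _ (bu' r hr) (bus' r hr)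
        gcongr
      · rw [abs_of_nonneg (by positivity)]; exact buh r hr)
  have ih2 := mulG (fun r => 2 * ur r * urs r + 2 * (w r * (u r * us r)) + (ur r ^ 2 + w r * u r ^ 2) * h r ^ 2)
    (2 * (M * R + M * R) + 2 * (κ * M * R + κ * M * R) + (M * R + κ * M * R) * H)
    (by fun_prop) (fun r hr => by
      have hw0r := hw0 r
      refine (abs_add_le _ _).trans (add_le_add ((abs_add_le _ _).trans (add_le_add ?_ ?_)) ?_)
      · rw [mul_assoc, abs_mul, abs_two]
        have := zc_absmul _ _ _ _ (bur' r hr) (burs' r hr)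
        gcongr
      · rw [abs_mul, abs_two, abs_mul, abs_of_nonneg hw0r]
        have h1 := zc_absmul _ _ _ _ (le_refl (u r ^ 2)) (le_refl (us r ^ 2))
        have h2 := mul_le_mul_of_nonneg_left h1 hw0r
        have := bwu r hr; have := bwus r hr
        nlinarith
      · rw [abs_of_nonneg (by positivity)]
        have := bur' r hr; have := bwu r hr; have := bh r hr
        gcongr)
  -- limits at zero
  have tr : Tendsto (fun r : ℝ => r) (nhdsWithin 0 (Ioi 0)) (nhds 0) := tendsto_nhdsWithin_of_tendsto_nhds tendsto_id
  have hIoo : Ioo 0 R ∈ nhdsWithin (0:ℝ) (Ioi 0) := Ioo_mem_nhdsGT hR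
  have sq0 : ∀ (g : ℝ → ℝ) (q : ℝ → ℝ), (∀ r ∈ Ioo 0 R, g r ^ 2 ≤ q r) →
      Tendsto q (nhdsWithin 0 (Ioi 0)) (nhds 0) → Tendsto g (nhdsWithin 0 (Ioi 0)) (nhds 0) := by
    intro g q hg hq
    have h1 : Tendsto (fun r => g r ^ 2) (nhdsWithin 0 (Ioi 0)) (nhds 0) := by
      refine tendsto_of_tendsto_of_tendsto_of_le_of_le' tendsto_const_nhds hq ?_ ?_
      · exact Eventually.of_forall fun r => sq_nonneg _
      · filter_upwards [hIoo] with r hr using hg r hr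
    have h2 := h1.sqrt
    simp only [Real.sqrt_sq_eq_abs, Real.sqrt_zero] at h2
    exact (tendsto_zero_iff_abs_tendsto_zero _).2 h2
  have tM : Tendsto (fun r : ℝ => M * r) (nhdsWithin 0 (Ioi 0)) (nhds 0) := by simpa using tr.const_mul M
  have tM3 : Tendsto (fun r : ℝ => M * r ^ 3) (nhdsWithin 0 (Ioi 0)) (nhds 0) := by
    simpa using (tr.pow 3).const_mul M
  have zu := sq0 u _ bu tM3
  have zus := sq0 us _ bus tM3
  have zur := sq0 ur _ bur tM
  have zwu : Tendsto (fun r => w r * u r ^ 2) (nhdsWithin 0 (Ioi 0)) (nhds 0) := by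
    refine tendsto_of_tendsto_of_tendsto_of_le_of_le' tendsto_const_nhds
      (by simpa using tr.const_mul (κ * M)) ?_ ?_
    · exact Eventually.of_forall fun r => mul_nonneg (hw0 r) (sq_nonneg _)
    · filter_upwards [hIoo] with r hr using hwr r hr _ (bu r hr)
  have zG : Tendsto G (nhdsWithin 0 (Ioi 0)) (nhds (G 0)) := cG.continuousAt.continuousWithinAt
  have zh : Tendsto h (nhdsWithin 0 (Ioi 0)) (nhds (h 0)) := ch.continuousAt.continuousWithinAt
  have RG : Tendsto G (nhdsWithin R (Iio R)) (nhds (G R)) := cG.continuousAt.continuousWithinAt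
  have Rh : Tendsto h (nhdsWithin R (Iio R)) (nhds (h R)) := ch.continuousAt.continuousWithinAt
  have Rw : Tendsto w (nhdsWithin R (Iio R)) (nhds (w R)) := by
    rw [hw]
    have : ContinuousAt (fun r : ℝ => κ / r ^ 2) R :=
      continuousAt_const.div (by fun_prop) (by positivity)
    exact this.continuousWithinAt
  -- FTC 1
  have F1 := intervalIntegral.integral_eq_sub_of_hasDerivAt_of_tendsto hR (f := fun r => u r * ur r * G r)
    (f' := fun r => (ur r ^ 2 + w r * u r ^ 2) * G r + (u r * X r) * G r)
    (fun r hr => by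
      have := ((hu r hr).mul (hur r hr)).mul (dG r)
      refine this.congr_deriv ?_
      rw [hX]; simp only [Pi.mul_apply]; ring) (iD.add iP) ((zu.mul zur).mul zG) ((lu.mul lur).mul RG)
  have F2 := intervalIntegral.integral_eq_sub_of_hasDerivAt_of_tendsto hR
    (f := fun r => (-2) * (u r * ur r * G r) - h r * (u r ^ 2 * G r))
    (f' := fun r => (2 * u r * us r + u r ^ 2 * h r ^ 2) * G r - 2 * ((ur r ^ 2 + w r * u r ^ 2) * G r) +
      2 * ((u r * f r) * G r) - 1 / (2 * s) * (u r ^ 2 * G r))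
    (fun r hr => by
      have := ((((hu r hr).mul (hur r hr)).mul (dG r)).const_mul (-2)).sub
        ((dh r).mul (((hu r hr).pow 2).mul (dG r)))
      refine this.congr_deriv ?_
      rw [hf]; simp only [Pi.mul_apply, Pi.pow_apply]; ring)
    (((ih1.sub (iD.const_mul 2)).add (iA.const_mul 2)).sub (iI.const_mul (1 / (2 * s))))
    ((((zu.mul zur).mul zG).const_mul (-2)).sub (zh.mul ((zu.pow 2).mul zG)))
    ((((lu.mul lur).mul RG).const_mul (-2)).sub (Rh.mul ((lu.pow 2).mul RG)))
  have F3 := intervalIntegral.integral_eq_sub_of_hasDerivAt_of_tendsto hR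
    (f := fun r => 2 * (ur r * us r * G r) + h r * (ur r ^ 2 * G r) - h r * (w r * u r ^ 2 * G r))
    (f' := fun r => (2 * ur r * urs r + 2 * (w r * (u r * us r)) + (ur r ^ 2 + w r * u r ^ 2) * h r ^ 2) * G r
      + 1 / (2 * s) * ((ur r ^ 2 + w r * u r ^ 2) * G r)
      - 2 * ((X r * X r + f r * X r) * G r) - (κ * x0 / (s * r ^ 3) * u r ^ 2) * G r)
    (fun r hr => by
      have := (((((hur r hr).mul (hus r hr)).mul (dG r)).const_mul 2).add
        ((dh r).mul (((hur r hr).pow 2).mul (dG r)))).sub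
        ((dh r).mul (((dw r hr).mul ((hu r hr).pow 2)).mul (dG r)))
      refine this.congr_deriv ?_
      have hr0 := hr.1.ne'
      have e1 : κ * x0 / (s * r ^ 3) = w r / s + h r * (-2 * κ / r ^ 3) := by
        rw [hw, hh]; field_simp; ring
      rw [e1, hf, hX]; simp only [Pi.mul_apply, Pi.pow_apply]
      ring)
    (((ih2.add (iD.const_mul (1 / (2 * s)))).sub (iE.const_mul 2)).sub iW)
    (((((zur.mul zus).mul zG).const_mul 2).add (zh.mul ((zur.pow 2).mul zG))).sub (zh.mul (zwu.mul zG)))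
    (((((lur.mul lus).mul RG).const_mul 2).add (Rh.mul ((lur.pow 2).mul RG))).sub
      (Rh.mul ((Rw.mul (lu.pow 2)).mul RG)))
  rw [intervalIntegral.integral_add iD iP] at F1
  rw [intervalIntegral.integral_sub ((ih1.sub (iD.const_mul 2)).add (iA.const_mul 2)) (iI.const_mul (1 / (2 * s))),
    intervalIntegral.integral_add (ih1.sub (iD.const_mul 2)) (iA.const_mul 2),
    intervalIntegral.integral_sub ih1 (iD.const_mul 2), intervalIntegral.integral_const_mul,
    intervalIntegral.integral_const_mul, intervalIntegral.integral_const_mul] at F2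
  rw [intervalIntegral.integral_sub ((ih2.add (iD.const_mul (1 / (2 * s)))).sub (iE.const_mul 2)) iW,
    intervalIntegral.integral_sub (ih2.add (iD.const_mul (1 / (2 * s)))) (iE.const_mul 2),
    intervalIntegral.integral_add ih2 (iD.const_mul (1 / (2 * s))), intervalIntegral.integral_const_mul,
    intervalIntegral.integral_const_mul] at F3
  have hCS : ∀ l : ℝ, 0 ≤ (∫ r in (0:ℝ)..R, (X r * X r + f r * X r) * G r) +
      1 / 4 * (∫ r in (0:ℝ)..R, f r ^ 2 * G r) +
      2 * l * ((∫ r in (0:ℝ)..R, (u r * X r) * G r) + 1 / 2 * (∫ r in (0:ℝ)..R, (u r * f r) * G r)) +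
      l ^ 2 * (∫ r in (0:ℝ)..R, u r ^ 2 * G r) := by
    intro l
    have h0 : 0 ≤ ∫ r in (0:ℝ)..R, (((X r * X r + f r * X r) * G r + 1 / 4 * (f r ^ 2 * G r) +
      2 * l * ((u r * X r) * G r + 1 / 2 * ((u r * f r) * G r))) + l ^ 2 * (u r ^ 2 * G r)) := by
      apply intervalIntegral.integral_nonneg hR.le
      intro r _
      have : (((X r * X r + f r * X r) * G r + 1 / 4 * (f r ^ 2 * G r) +
        2 * l * ((u r * X r) * G r + 1 / 2 * ((u r * f r) * G r))) + l ^ 2 * (u r ^ 2 * G r)) =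
        (X r + f r / 2 + l * u r) ^ 2 * G r := by ring
      rw [this]
      have := hG0 r
      positivity
    rw [intervalIntegral.integral_add ((iE.add (iQ.const_mul (1 / 4))).add
        ((iP.add (iA.const_mul (1 / 2))).const_mul (2 * l))) (iI.const_mul (l ^ 2)),
      intervalIntegral.integral_add (iE.add (iQ.const_mul (1 / 4)))
        ((iP.add (iA.const_mul (1 / 2))).const_mul (2 * l)),
      intervalIntegral.integral_add iE (iQ.const_mul (1 / 4)), intervalIntegral.integral_const_mul,
      intervalIntegral.integral_const_mul, intervalIntegral.integral_const_mul,
      intervalIntegral.integral_add iP (iA.const_mul (1 / 2)), intervalIntegral.integral_const_mul] at h0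
    exact h0
  have hW : 0 ≤ ∫ r in (0:ℝ)..R, κ * x0 / (s * r ^ 3) * u r ^ 2 * G r := by
    apply intervalIntegral.integral_nonneg hR.le
    intro r hr
    have := hG0 r; have := hr.1
    positivity
  have h5 : (∫ r in (0:ℝ)..R, f r ^ 2 * G r) ≤ C * (∫ r in (0:ℝ)..R, (ur r ^ 2 + w r * u r ^ 2) * G r) := by
    rw [← intervalIntegral.integral_const_mul]
    refine intervalIntegral.integral_mono_on_of_le_Ioo hR.le iQ (iD.const_mul C) ?_
    intro r hr
    have := mul_le_mul_of_nonneg_right (bf1 r hr) (hG0 r).le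
    linarith
  have h6 : -2 * (∫ r in (0:ℝ)..R, (u r * f r) * G r) ≤ (∫ r in (0:ℝ)..R, u r ^ 2 * G r) +
      ∫ r in (0:ℝ)..R, f r ^ 2 * G r := by
    rw [← intervalIntegral.integral_const_mul, ← intervalIntegral.integral_add iI iQ]
    refine intervalIntegral.integral_mono_on_of_le_Ioo hR.le (iA.const_mul _) (iI.add iQ) ?_
    intro r hr
    have h7 := mul_nonneg (sq_nonneg (u r + f r)) (hG0 r).le
    have h8 : (u r + f r) ^ 2 * G r = u r ^ 2 * G r + f r ^ 2 * G r - -2 * (u r * f r * G r) := by ring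
    rw [h8] at h7
    exact sub_nonneg.1 h7
  have hI' : 0 < ∫ r in (0:ℝ)..R, u r ^ 2 * G r := by rw [hG]; exact hI
  have hRh : 0 ≤ h R := by rw [hh]; exact div_nonneg (by linarith) (by positivity)
  have := zc_slice_alg hs hI' (by rw [F1]; ring) (by rw [F2]; ring) (by
    rw [F3]; have := hG0 R; simp; positivity) hW hCS h5 h6
  have eD : ∀ r, κ * u r ^ 2 / r ^ 2 = w r * u r ^ 2 := fun r => by rw [hw]; ring
  have eE : ∀ r, 2 * κ * u r * us r / r ^ 2 = 2 * (w r * (u r * us r)) := fun r => by rw [hw]; ring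
  simp only [eD, eE]
  rw [hG, hh] at this
  exact this

set_option maxHeartbeats 1000000 in
lemma zc_core {R x0 S κ M C δ : ℝ} (hx0 : 0 < x0) (hx0R : x0 < R) (hS : 0 < S) (hκ : 0 < κ)
    (hC : 0 ≤ C) (hM : 0 ≤ M) (hδ : 0 < δ) {u ur urr us urs : ℝ → ℝ → ℝ}
    (hu : ∀ s ∈ Ioo 0 S, ∀ r ∈ Ioo 0 R, HasDerivAt (fun r => u r s) (ur r s) r)
    (hur : ∀ s ∈ Ioo 0 S, ∀ r ∈ Ioo 0 R, HasDerivAt (fun r => ur r s) (urr r s) r)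
    (hus : ∀ s ∈ Ioo 0 S, ∀ r ∈ Ioo 0 R, HasDerivAt (fun r => us r s) (urs r s) r)
    (hut : ∀ s ∈ Ioo 0 S, ∀ r ∈ Ioo 0 R, HasDerivAt (fun s => u r s) (us r s) s)
    (hurt : ∀ s ∈ Ioo 0 S, ∀ r ∈ Ioo 0 R, HasDerivAt (fun s => ur r s) (urs r s) s)
    (curr : ∀ s ∈ Ioo 0 S, ContinuousOn (fun r => urr r s) (Ioo 0 R))
    (curs : ∀ s ∈ Ioo 0 S, ContinuousOn (fun r => urs r s) (Ioo 0 R))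
    (bu : ∀ s ∈ Ioo 0 S, ∀ r ∈ Ioo 0 R, u r s ^ 2 ≤ M * r ^ 3)
    (bur : ∀ s ∈ Ioo 0 S, ∀ r ∈ Ioo 0 R, ur r s ^ 2 ≤ M * r)
    (bus : ∀ s ∈ Ioo 0 S, ∀ r ∈ Ioo 0 R, us r s ^ 2 ≤ M * r ^ 3)
    (burs : ∀ s ∈ Ioo 0 S, ∀ r ∈ Ioo 0 R, urs r s ^ 2 ≤ M * r)
    (lu : ∀ s ∈ Ioo 0 S, Tendsto (fun r => u r s) (nhdsWithin R (Iio R)) (nhds 0))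
    (lus : ∀ s ∈ Ioo 0 S, Tendsto (fun r => us r s) (nhdsWithin R (Iio R)) (nhds 0))
    (lur : ∀ s ∈ Ioo 0 S, ∃ L, Tendsto (fun r => ur r s) (nhdsWithin R (Iio R)) (nhds L))
    (bf : ∀ s ∈ Ioo 0 S, ∀ r ∈ Ioo 0 R,
      (-us r s - urr r s + κ * u r s / r ^ 2) ^ 2 ≤ C * (ur r s ^ 2 + κ * u r s ^ 2 / r ^ 2))
    (hne : ∀ s ∈ Ioo 0 S, ∃ r ∈ Ioo 0 R, u r s ≠ 0)
    (hvan : ∀ k : ℕ, ∃ K : ℝ, ∀ s ∈ Ioo 0 S, ∀ r ∈ Ioo 0 R, |r - x0| < δ → |u r s| ≤ K * s ^ k) :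
    False := by
  have hR : 0 < R := hx0.trans hx0R
  have cu : ∀ s ∈ Ioo 0 S, ContinuousOn (fun r => u r s) (Ioo 0 R) :=
    fun s hs r hr => (hu s hs r hr).continuousAt.continuousWithinAt
  have cur : ∀ s ∈ Ioo 0 S, ContinuousOn (fun r => ur r s) (Ioo 0 R) :=
    fun s hs r hr => (hur s hs r hr).continuousAt.continuousWithinAt
  have cus : ∀ s ∈ Ioo 0 S, ContinuousOn (fun r => us r s) (Ioo 0 R) :=
    fun s hs r hr => (hus s hs r hr).continuousAt.continuousWithinAt
  have bu' : ∀ s ∈ Ioo 0 S, ∀ r ∈ Ioo 0 R, u r s ^ 2 ≤ M * R ^ 3 := fun s hs r hr => (bu s hs r hr).trans (by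
    have := hr.1; have := hr.2; gcongr)
  have bus' : ∀ s ∈ Ioo 0 S, ∀ r ∈ Ioo 0 R, us r s ^ 2 ≤ M * R ^ 3 := fun s hs r hr => (bus s hs r hr).trans (by
    have := hr.1; have := hr.2; gcongr)
  have bur' : ∀ s ∈ Ioo 0 S, ∀ r ∈ Ioo 0 R, ur r s ^ 2 ≤ M * R := fun s hs r hr => (bur s hs r hr).trans (by
    have := hr.1; have := hr.2; gcongr)
  have burs' : ∀ s ∈ Ioo 0 S, ∀ r ∈ Ioo 0 R, urs r s ^ 2 ≤ M * R := fun s hs r hr => (burs s hs r hr).trans (by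
    have := hr.1; have := hr.2; gcongr)
  have hwr : ∀ r ∈ Ioo 0 R, ∀ y, y ≤ M * r ^ 3 → κ * y / r ^ 2 ≤ κ * M * R := by
    intro r hr y hy
    have hr0 := hr.1
    calc κ * y / r ^ 2 ≤ κ * (M * r ^ 3) / r ^ 2 := by gcongr
      _ = κ * M * r := by field_simp
      _ ≤ _ := by have := hr.2; gcongr
  have hG1 : ∀ s ∈ Ioo 0 S, ∀ r, Real.exp (-(r - x0) ^ 2 / (4 * s)) ≤ 1 := fun s hs r => by
    have := hs.1
    rw [Real.exp_le_one_iff]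
    apply div_nonpos_of_nonpos_of_nonneg (by nlinarith [sq_nonneg (r - x0)]) (by positivity)
  have dG : ∀ s ∈ Ioo 0 S, ∀ r, HasDerivAt (fun s => Real.exp (-(r - x0) ^ 2 / (4 * s)))
      (((r - x0) / (2 * s)) ^ 2 * Real.exp (-(r - x0) ^ 2 / (4 * s))) s := by
    intro s hs r
    have hs0 := hs.1.ne'
    have h1 : HasDerivAt (fun s : ℝ => -(r - x0) ^ 2 / (4 * s)) (((r - x0) / (2 * s)) ^ 2) s := by
      refine ((hasDerivAt_const s (-(r - x0) ^ 2)).fun_div ((hasDerivAt_id' s).const_mul 4)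
        (by have := hs.1; positivity)).congr_deriv ?_
      simp
      field_simp
      norm_num
    refine h1.exp.congr_deriv ?_
    ring
  have cGs : ∀ s, ContinuousOn (fun r => Real.exp (-(r - x0) ^ 2 / (4 * s))) (Ioo 0 R) := fun s => by fun_prop
  have mulb : ∀ s ∈ Ioo 0 S, ∀ r, ∀ g K : ℝ, |g| ≤ K → |g * Real.exp (-(r - x0) ^ 2 / (4 * s))| ≤ K := by
    intro s hs r g K hg
    rw [abs_mul, abs_of_pos (Real.exp_pos _)]
    calc |g| * Real.exp (-(r - x0) ^ 2 / (4 * s)) ≤ |g| * 1 := by have := hG1 s hs r; gcongr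
      _ ≤ K := by rw [mul_one]; exact hg
  have bh : ∀ s0 ∈ Ioo 0 S, ∀ s ∈ Ioo (s0 / 2) S, ∀ r ∈ Ioo 0 R, ((r - x0) / (2 * s)) ^ 2 ≤ (R / s0) ^ 2 := by
    intro s0 hs0 s hs r hr
    have h0 := hs0.1; have h1 := hs.1
    rw [sq_le_sq, abs_div, abs_div, abs_of_pos hR, abs_of_pos h0, abs_of_pos (by linarith : 0 < 2 * s)]
    have : |r - x0| ≤ R := by rw [abs_le]; constructor <;> linarith [hr.1, hr.2]
    gcongr
    linarith
  have csq : ∀ r ∈ Ioo 0 R, r ^ 2 ≠ 0 := fun r hr => (pow_pos hr.1 2).ne'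
  have cD : ∀ s ∈ Ioo 0 S, ContinuousOn (fun r => ur r s ^ 2 + κ * u r s ^ 2 / r ^ 2) (Ioo 0 R) := by
    intro s hs
    have := cu s hs; have := cur s hs
    exact ContinuousOn.add (by fun_prop) (ContinuousOn.div (by fun_prop) (by fun_prop) csq)
  have bD : ∀ s ∈ Ioo 0 S, ∀ r ∈ Ioo 0 R, ur r s ^ 2 + κ * u r s ^ 2 / r ^ 2 ≤ M * R + κ * M * R :=
    fun s hs r hr => add_le_add (bur' s hs r hr) (hwr r hr _ (bu s hs r hr))
  have hsubs : ∀ s0 ∈ Ioo 0 S, ∀ s ∈ Ioo (s0 / 2) S, s ∈ Ioo 0 S := by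
    intro s0 hs0 s hs
    exact ⟨by have := hs0.1; have := hs.1; linarith, hs.2⟩
  have hIpos : ∀ s ∈ Ioo 0 S, 0 < ∫ r in (0:ℝ)..R, u r s ^ 2 * Real.exp (-(r - x0) ^ 2 / (4 * s)) := by
    intro s hs
    have := cu s hs
    have hc : ContinuousOn (fun r => u r s ^ 2 * Real.exp (-(r - x0) ^ 2 / (4 * s))) (Ioo 0 R) :=
      ContinuousOn.mul (by fun_prop) (cGs s)
    have hi : IntervalIntegrable (fun r => u r s ^ 2 * Real.exp (-(r - x0) ^ 2 / (4 * s)))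
        MeasureTheory.volume 0 R := zc_bint (K := M * R ^ 3) hR hc (fun r hr => mulb s hs r _ _ (by
          rw [abs_of_nonneg (by positivity)]; exact bu' s hs r hr))
    obtain ⟨r1, hr1, hne1⟩ := hne s hs
    have hpos : 0 < u r1 s ^ 2 * Real.exp (-(r1 - x0) ^ 2 / (4 * s)) := by positivity
    have hca := (hc.continuousAt (isOpen_Ioo.mem_nhds hr1)).eventually (lt_mem_nhds hpos)
    rw [intervalIntegral.integral_pos_iff_support_of_nonneg_ae
      (Eventually.of_forall fun r => by simp only [Pi.zero_apply]; positivity) hi]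
    refine ⟨hR, ?_⟩
    obtain ⟨ε, hε, hball⟩ := Metric.eventually_nhds_iff_ball.1 (hca.and (isOpen_Ioo.mem_nhds hr1))
    refine lt_of_lt_of_le (Metric.measure_ball_pos MeasureTheory.volume r1 hε) (MeasureTheory.measure_mono ?_)
    intro y hy
    have := hball y hy
    exact ⟨this.1.ne', this.2.1, this.2.2.le⟩
  refine zc_ode_end (S := S) (C := C) hS hC
    (I := fun s => ∫ r in (0:ℝ)..R, u r s ^ 2 * Real.exp (-(r - x0) ^ 2 / (4 * s)))
    (D := fun s => ∫ r in (0:ℝ)..R, (ur r s ^ 2 + κ * u r s ^ 2 / r ^ 2) * Real.exp (-(r - x0) ^ 2 / (4 * s)))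
    (dI := fun s => ∫ r in (0:ℝ)..R, (2 * u r s * us r s + u r s ^ 2 * ((r - x0) / (2 * s)) ^ 2) *
        Real.exp (-(r - x0) ^ 2 / (4 * s)))
    (dD := fun s => ∫ r in (0:ℝ)..R, (2 * ur r s * urs r s + 2 * κ * u r s * us r s / r ^ 2 +
          (ur r s ^ 2 + κ * u r s ^ 2 / r ^ 2) * ((r - x0) / (2 * s)) ^ 2) *
            Real.exp (-(r - x0) ^ 2 / (4 * s))) ?_ ?_ hIpos ?_ ?_ ?_ ?_
  · intro s0 hs0
    have hb2 : ∀ s ∈ Ioo (s0 / 2) S, ∀ r ∈ Ioo 0 R, |2 * u r s * us r s + u r s ^ 2 * ((r - x0) / (2 * s)) ^ 2|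
        ≤ 2 * (M * R ^ 3 + M * R ^ 3) + M * R ^ 3 * (R / s0) ^ 2 := by
      intro s hs r hr
      have hs' := hsubs s0 hs0 s hs
      refine (abs_add_le _ _).trans (add_le_add ?_ ?_)
      · rw [mul_assoc, abs_mul, abs_two]
        have := zc_absmul _ _ _ _ (bu' s hs' r hr) (bus' s hs' r hr)
        gcongr
      · rw [abs_of_nonneg (by positivity)]
        have := bu' s hs' r hr; have := bh s0 hs0 s hs r hr; gcongr
    refine zc_deriv_int (F := fun s r => u r s ^ 2 * Real.exp (-(r - x0) ^ 2 / (4 * s)))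
      (F' := fun s r => (2 * u r s * us r s + u r s ^ 2 * ((r - x0) / (2 * s)) ^ 2) *
        Real.exp (-(r - x0) ^ 2 / (4 * s))) (s1 := s0 / 2) (s2 := S)
        (K := max (M * R ^ 3) (2 * (M * R ^ 3 + M * R ^ 3) + M * R ^ 3 * (R / s0) ^ 2)) hR
        ⟨by have := hs0.1; linarith, hs0.2⟩ ?_ ?_ ?_ ?_ ?_
    · intro s hs
      have := cu s (hsubs s0 hs0 s hs)
      exact ContinuousOn.mul (by fun_prop) (cGs s)
    · intro s hs
      have := cu s (hsubs s0 hs0 s hs); have := cus s (hsubs s0 hs0 s hs)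
      exact ContinuousOn.mul (by fun_prop) (cGs s)
    · intro s hs r hr
      refine mulb s (hsubs s0 hs0 s hs) r _ _ (le_trans ?_ (le_max_left _ _))
      rw [abs_of_nonneg (by positivity)]; exact bu' s (hsubs s0 hs0 s hs) r hr
    · intro s hs r hr
      exact mulb s (hsubs s0 hs0 s hs) r _ _ (le_trans (hb2 s hs r hr) (le_max_right _ _))
    · intro s hs r hr
      have hs' := hsubs s0 hs0 s hs
      refine (((hut s hs' r hr).fun_pow 2).fun_mul (dG s hs' r)).congr_deriv ?_
      simp
      ring
  · intro s0 hs0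
    have hb2 : ∀ s ∈ Ioo (s0 / 2) S, ∀ r ∈ Ioo 0 R, |2 * ur r s * urs r s + 2 * κ * u r s * us r s / r ^ 2 +
          (ur r s ^ 2 + κ * u r s ^ 2 / r ^ 2) * ((r - x0) / (2 * s)) ^ 2|
        ≤ 2 * (M * R + M * R) + 2 * (κ * M * R + κ * M * R) + (M * R + κ * M * R) * (R / s0) ^ 2 := by
      intro s hs r hr
      have hs' := hsubs s0 hs0 s hs
      refine (abs_add_le _ _).trans (add_le_add ((abs_add_le _ _).trans (add_le_add ?_ ?_)) ?_)
      · rw [mul_assoc, abs_mul, abs_two]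
        have := zc_absmul _ _ _ _ (bur' s hs' r hr) (burs' s hs' r hr)
        gcongr
      · have h1 := zc_absmul _ _ _ _ (le_refl (u r s ^ 2)) (le_refl (us r s ^ 2))
        have hr0 := hr.1
        have e : |2 * κ * u r s * us r s / r ^ 2| = 2 * (κ / r ^ 2 * |u r s * us r s|) := by
          rw [show 2 * κ * u r s * us r s / r ^ 2 = 2 * κ / r ^ 2 * (u r s * us r s) by ring, abs_mul,
            abs_of_pos (by positivity)]; ring
        rw [e]
        have h2 := mul_le_mul_of_nonneg_left h1 (by positivity : 0 ≤ κ / r ^ 2)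
        have h3 := hwr r hr _ (bu s hs' r hr)
        have h4 := hwr r hr _ (bus s hs' r hr)
        have h5 : κ / r ^ 2 * (u r s ^ 2 + us r s ^ 2) = κ * u r s ^ 2 / r ^ 2 + κ * us r s ^ 2 / r ^ 2 := by ring
        linarith
      · have hr0 := hr.1
        rw [abs_of_nonneg (by positivity)]
        have := bD s hs' r hr; have := bh s0 hs0 s hs r hr
        gcongr
    refine zc_deriv_int (F := fun s r => (ur r s ^ 2 + κ * u r s ^ 2 / r ^ 2) * Real.exp (-(r - x0) ^ 2 / (4 * s)))
      (F' := fun s r => (2 * ur r s * urs r s + 2 * κ * u r s * us r s / r ^ 2 +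
          (ur r s ^ 2 + κ * u r s ^ 2 / r ^ 2) * ((r - x0) / (2 * s)) ^ 2) *
            Real.exp (-(r - x0) ^ 2 / (4 * s))) (s1 := s0 / 2) (s2 := S)
        (K := max (M * R + κ * M * R) (2 * (M * R + M * R) + 2 * (κ * M * R + κ * M * R) +
          (M * R + κ * M * R) * (R / s0) ^ 2)) hR
        ⟨by have := hs0.1; linarith, hs0.2⟩ ?_ ?_ ?_ ?_ ?_
    · intro s hs
      exact ContinuousOn.mul (cD s (hsubs s0 hs0 s hs)) (cGs s)
    · intro s hs
      have hs' := hsubs s0 hs0 s hs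
      have := cu s hs'; have := cus s hs'; have := cur s hs'; have := curs s hs'
      refine ContinuousOn.mul (ContinuousOn.add (ContinuousOn.add (by fun_prop)
        (ContinuousOn.div (by fun_prop) (by fun_prop) csq)) ((cD s hs').mul (by fun_prop))) (cGs s)
    · intro s hs r hr
      have hr0 := hr.1
      refine mulb s (hsubs s0 hs0 s hs) r _ _ (le_trans ?_ (le_max_left _ _))
      rw [abs_of_nonneg (by positivity)]; exact bD s (hsubs s0 hs0 s hs) r hr
    · intro s hs r hr
      exact mulb s (hsubs s0 hs0 s hs) r _ _ (le_trans (hb2 s hs r hr) (le_max_right _ _))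
    · intro s hs r hr
      have hs' := hsubs s0 hs0 s hs
      refine ((((hurt s hs' r hr).fun_pow 2).fun_add ((((hut s hs' r hr).fun_pow 2).const_mul κ).div_const
        (r ^ 2))).fun_mul (dG s hs' r)).congr_deriv ?_
      simp
      ring
  · intro s hs
    apply intervalIntegral.integral_nonneg hR.le
    intro r hr
    positivity
  · intro s hs
    obtain ⟨L, hL⟩ := lur s hs
    exact (zc_slice hx0 hx0R hs.1 hκ hC hM (hu s hs) (hur s hs) (hus s hs) (curr s hs) (curs s hs)
      (bu s hs) (bur s hs) (bus s hs) (burs s hs) (lu s hs) (lus s hs) hL (bf s hs) (hIpos s hs)).1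
  · intro s hs
    obtain ⟨L, hL⟩ := lur s hs
    exact (zc_slice hx0 hx0R hs.1 hκ hC hM (hu s hs) (hur s hs) (hus s hs) (curr s hs) (curs s hs)
      (bu s hs) (bur s hs) (bus s hs) (burs s hs) (lu s hs) (lus s hs) hL (bf s hs) (hIpos s hs)).2
  · intro k
    obtain ⟨K, hK⟩ := hvan k
    refine ⟨(K ^ 2 * S ^ k + M * R ^ 3 * (k.factorial * (4 / δ ^ 2) ^ k)) * R, ?_⟩
    intro s hs
    have hs0 := hs.1
    have := cu s hs
    have hpt : ∀ r ∈ Ioo 0 R, u r s ^ 2 * Real.exp (-(r - x0) ^ 2 / (4 * s)) ≤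
        (K ^ 2 * S ^ k + M * R ^ 3 * (k.factorial * (4 / δ ^ 2) ^ k)) * s ^ k := by
      intro r hr
      rw [add_mul]
      by_cases hrx : |r - x0| < δ
      · have h1 := hK s hs r hr hrx
        have h2 : u r s ^ 2 ≤ (K * s ^ k) ^ 2 := by
          rw [← sq_abs (u r s)]; gcongr
        have h3 : s ^ k ≤ S ^ k := by have := hs.2; gcongr
        calc u r s ^ 2 * Real.exp (-(r - x0) ^ 2 / (4 * s)) ≤ u r s ^ 2 * 1 := by
              have := hG1 s hs r; gcongr
          _ ≤ (K * s ^ k) ^ 2 := by rw [mul_one]; exact h2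
          _ = K ^ 2 * s ^ k * s ^ k := by ring
          _ ≤ K ^ 2 * S ^ k * s ^ k := by gcongr
          _ ≤ _ := by
            have : 0 ≤ M * R ^ 3 * (k.factorial * (4 / δ ^ 2) ^ k) * s ^ k := by positivity
            linarith
      · push Not at hrx
        have h1 : Real.exp (-(r - x0) ^ 2 / (4 * s)) ≤ k.factorial * (4 / δ ^ 2) ^ k * s ^ k := by
          have h2 := Real.pow_div_factorial_le_exp (δ ^ 2 / (4 * s)) (by positivity) k
          have h3 : Real.exp (-(r - x0) ^ 2 / (4 * s)) ≤ Real.exp (-(δ ^ 2 / (4 * s))) := by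
            rw [Real.exp_le_exp, neg_div, neg_le_neg_iff]
            rw [← sq_abs (r - x0)]
            gcongr
          refine h3.trans ?_
          rw [Real.exp_neg]
          rw [inv_le_comm₀ (Real.exp_pos _) (by positivity)]
          refine le_trans (le_of_eq ?_) h2
          rw [mul_assoc, ← mul_pow, mul_inv, ← inv_pow, div_eq_mul_inv _ ((k.factorial : ℝ)), mul_comm]
          congr 2
          field_simp
        calc u r s ^ 2 * Real.exp (-(r - x0) ^ 2 / (4 * s)) ≤
            M * R ^ 3 * (k.factorial * (4 / δ ^ 2) ^ k * s ^ k) := by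
              have := bu' s hs r hr; gcongr
          _ ≤ _ := by
            have : 0 ≤ K ^ 2 * S ^ k * s ^ k := by positivity
            linarith
    calc (∫ r in (0:ℝ)..R, u r s ^ 2 * Real.exp (-(r - x0) ^ 2 / (4 * s)))
        ≤ ∫ r in (0:ℝ)..R, (K ^ 2 * S ^ k + M * R ^ 3 * (k.factorial * (4 / δ ^ 2) ^ k)) * s ^ k := by
          refine intervalIntegral.integral_mono_on_of_le_Ioo hR.le ?_ intervalIntegrable_const hpt
          exact zc_bint (K := M * R ^ 3) hR (ContinuousOn.mul (by fun_prop) (cGs s))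
            (fun r hr => mulb s hs r _ _ (by
              rw [abs_of_nonneg (by positivity)]; exact bu' s hs r hr))
      _ = _ := by simp; ring

set_option maxHeartbeats 1000000 in
lemma zc_core_z {R x0 S p M C δ : ℝ} (hx0 : 0 < x0) (hx0R : x0 < R) (hS : 0 < S) (hp : 1 / 2 ≤ p)
    (hC : 0 ≤ C) (hM : 0 ≤ M) (hδ : 0 < δ) {z zr zrr zs zrs : ℝ → ℝ → ℝ}
    (hz : ∀ s ∈ Ioo 0 S, ∀ r ∈ Ioo 0 R, HasDerivAt (fun r => z r s) (zr r s) r)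
    (hzr : ∀ s ∈ Ioo 0 S, ∀ r ∈ Ioo 0 R, HasDerivAt (fun r => zr r s) (zrr r s) r)
    (hzs : ∀ s ∈ Ioo 0 S, ∀ r ∈ Ioo 0 R, HasDerivAt (fun r => zs r s) (zrs r s) r)
    (hzt : ∀ s ∈ Ioo 0 S, ∀ r ∈ Ioo 0 R, HasDerivAt (fun s => z r s) (zs r s) s)
    (hzrt : ∀ s ∈ Ioo 0 S, ∀ r ∈ Ioo 0 R, HasDerivAt (fun s => zr r s) (zrs r s) s)
    (czrr : ∀ s ∈ Ioo 0 S, ContinuousOn (fun r => zrr r s) (Ioo 0 R))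
    (czrs : ∀ s ∈ Ioo 0 S, ContinuousOn (fun r => zrs r s) (Ioo 0 R))
    (bz : ∀ s ∈ Ioo 0 S, ∀ r ∈ Ioo 0 R, |z r s| ≤ M * r)
    (bzr : ∀ s ∈ Ioo 0 S, ∀ r ∈ Ioo 0 R, |zr r s| ≤ M)
    (bzs : ∀ s ∈ Ioo 0 S, ∀ r ∈ Ioo 0 R, |zs r s| ≤ M * r)
    (bzrs : ∀ s ∈ Ioo 0 S, ∀ r ∈ Ioo 0 R, |zrs r s| ≤ M)
    (lz : ∀ s ∈ Ioo 0 S, Tendsto (fun r => z r s) (nhdsWithin R (Iio R)) (nhds 0))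
    (lzs : ∀ s ∈ Ioo 0 S, Tendsto (fun r => zs r s) (nhdsWithin R (Iio R)) (nhds 0))
    (lzr : ∀ s ∈ Ioo 0 S, ∃ L, Tendsto (fun r => zr r s) (nhdsWithin R (Iio R)) (nhds L))
    (bf : ∀ s ∈ Ioo 0 S, ∀ r ∈ Ioo 0 R,
      |-zs r s - zrr r s - 2 * p / r * zr r s + 2 * p / r ^ 2 * z r s| ≤ C * (|z r s| / r + |zr r s|))
    (hne : ∀ s ∈ Ioo 0 S, ∃ r ∈ Ioo 0 R, z r s ≠ 0)
    (hvan : ∀ k : ℕ, ∃ K : ℝ, ∀ s ∈ Ioo 0 S, ∀ r ∈ Ioo 0 R, |r - x0| < δ → |z r s| ≤ K * s ^ k) :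
    False := by
  have hR : 0 < R := hx0.trans hx0R
  have hp0 : 0 < p := by linarith
  obtain ⟨q, hq⟩ : ∃ q : ℝ → ℝ, q = fun r => r ^ p := ⟨_, rfl⟩
  have dq : ∀ r ∈ Ioo 0 R, HasDerivAt q (q r * (p / r)) r := by
    intro r hr
    rw [hq]
    refine (Real.hasDerivAt_rpow_const (Or.inl hr.1.ne')).congr_deriv ?_
    rw [Real.rpow_sub_one hr.1.ne']
    ring
  have hq0 : ∀ r ∈ Ioo 0 R, 0 < q r := fun r hr => by rw [hq]; exact Real.rpow_pos_of_pos hr.1 p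
  have cq : Continuous q := by rw [hq]; exact Real.continuous_rpow_const hp0.le
  obtain ⟨B, hB⟩ : ∃ B : ℝ, B = R ^ (2 * p - 1) := ⟨_, rfl⟩
  have hB0 : 0 ≤ B := by rw [hB]; positivity
  have bq : ∀ r ∈ Ioo 0 R, q r ^ 2 ≤ B * r := by
    intro r hr
    have h1 : q r ^ 2 = r ^ (2 * p - 1) * r := by
      rw [hq]; simp only
      rw [← Real.rpow_natCast, ← Real.rpow_mul hr.1.le, Real.rpow_sub_one hr.1.ne']
      rw [div_mul_cancel₀ _ hr.1.ne']
      congr 1; push_cast; ring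
    rw [h1, hB]
    have := hr.1
    gcongr
    · linarith
    · exact hr.2.le
  have bqR : ∀ r ∈ Ioo 0 R, |q r| ≤ R ^ p := by
    intro r hr
    rw [abs_of_pos (hq0 r hr), hq]
    exact Real.rpow_le_rpow hr.1.le hr.2.le hp0.le
  have sqle : ∀ a b : ℝ, |a| ≤ b → a ^ 2 ≤ b ^ 2 := fun a b h => by
    rw [← sq_abs a]; gcongr
  have cst : ∀ r ∈ Ioo 0 R, ∀ a b : ℝ, |a| ≤ M * r → |b| ≤ M → (q r * (b + p * a / r)) ^ 2 ≤ B * (M + p * M) ^ 2 * r := by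
    intro r hr a b ha hb
    have hr0 := hr.1
    have h1 : |b + p * a / r| ≤ M + p * M := by
      refine (abs_add_le _ _).trans (add_le_add hb ?_)
      rw [abs_div, abs_mul, abs_of_pos hp0, abs_of_pos hr0, div_le_iff₀ hr0]
      nlinarith
    rw [mul_pow]
    calc q r ^ 2 * (b + p * a / r) ^ 2 ≤ (B * r) * (M + p * M) ^ 2 := by
          have := bq r hr; have := sqle _ _ h1; gcongr
      _ = _ := by ring
  have cst2 : ∀ r ∈ Ioo 0 R, ∀ a : ℝ, |a| ≤ M * r → (q r * a) ^ 2 ≤ B * (M + p * M) ^ 2 * r ^ 3 := by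
    intro r hr a ha
    have hr0 := hr.1
    rw [mul_pow]
    have h2 : (M * r) ^ 2 ≤ ((M + p * M) * r) ^ 2 := by
      have : M ≤ M + p * M := by nlinarith
      gcongr
    calc q r ^ 2 * a ^ 2 ≤ (B * r) * ((M + p * M) * r) ^ 2 := by
          have := bq r hr; have := (sqle _ _ ha).trans h2; gcongr
      _ = _ := by ring
  have crinv : ContinuousOn (fun r : ℝ => r⁻¹) (Ioo 0 R) :=
    continuousOn_inv₀.mono (fun r hr => hr.1.ne')
  have lq : Tendsto q (nhdsWithin R (Iio R)) (nhds (q R)) := cq.continuousAt.continuousWithinAt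
  have lid : Tendsto (fun r : ℝ => r) (nhdsWithin R (Iio R)) (nhds R) := continuousAt_id.continuousWithinAt
  obtain ⟨C', hC'⟩ : ∃ C' : ℝ, C' = 2 * C ^ 2 * (2 + (1 + 2 * p ^ 2) / (p * (p + 1))) := ⟨_, rfl⟩
  have hC'0 : 0 ≤ C' := by rw [hC']; positivity
  refine zc_core (R := R) (x0 := x0) (S := S) (κ := p * (p + 1)) (M := B * (M + p * M) ^ 2) (C := C') (δ := δ)
    (u := fun r s => q r * z r s) (ur := fun r s => q r * (zr r s + p * z r s / r))
    (urr := fun r s => q r * (zrr r s + 2 * p * zr r s / r + p * (p - 1) * z r s / r ^ 2))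
    (us := fun r s => q r * zs r s) (urs := fun r s => q r * (zrs r s + p * zs r s / r))
    hx0 hx0R hS (by positivity) hC'0 (by positivity) hδ ?_ ?_ ?_ ?_ ?_ ?_ ?_ ?_ ?_ ?_ ?_ ?_ ?_ ?_ ?_ ?_ ?_
  · intro s hs r hr
    refine ((dq r hr).fun_mul (hz s hs r hr)).congr_deriv ?_
    ring
  · intro s hs r hr
    have hr0 := hr.1.ne'
    refine ((dq r hr).fun_mul ((hzr s hs r hr).fun_add
      (((hz s hs r hr).const_mul p).fun_div (hasDerivAt_id' r) hr0))).congr_deriv ?_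
    field_simp
    ring
  · intro s hs r hr
    refine ((dq r hr).fun_mul (hzs s hs r hr)).congr_deriv ?_
    ring
  · intro s hs r hr
    exact (hzt s hs r hr).const_mul (q r)
  · intro s hs r hr
    exact ((hzrt s hs r hr).fun_add (((hzt s hs r hr).const_mul p).div_const r)).const_mul (q r)
  · intro s hs
    have c1 : ContinuousOn (fun r => z r s) (Ioo 0 R) := fun r hr => (hz s hs r hr).continuousAt.continuousWithinAt
    have c2 : ContinuousOn (fun r => zr r s) (Ioo 0 R) := fun r hr => (hzr s hs r hr).continuousAt.continuousWithinAt
    have c3 := czrr s hs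
    have : (fun r => q r * (zrr r s + 2 * p * zr r s / r + p * (p - 1) * z r s / r ^ 2)) =
      (fun r => q r * (zrr r s + 2 * p * zr r s * r⁻¹ + p * (p - 1) * z r s * (r⁻¹) ^ 2)) := by
      ext r; rw [inv_pow]; ring
    rw [this]
    have cq' := cq.continuousOn (s := Ioo 0 R)
    exact cq'.mul ((c3.add ((c2.const_mul (2 * p)).mul crinv)).add ((c1.const_mul _).mul (crinv.pow 2)))
  · intro s hs
    have c1 : ContinuousOn (fun r => zs r s) (Ioo 0 R) := fun r hr => (hzs s hs r hr).continuousAt.continuousWithinAt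
    have c3 := czrs s hs
    have cq' := cq.continuousOn (s := Ioo 0 R)
    exact cq'.mul (c3.add ((c1.const_mul p).mul crinv))
  · intro s hs r hr
    exact cst2 r hr _ (bz s hs r hr)
  · intro s hs r hr
    exact cst r hr _ _ (bz s hs r hr) (bzr s hs r hr)
  · intro s hs r hr
    exact cst2 r hr _ (bzs s hs r hr)
  · intro s hs r hr
    exact cst r hr _ _ (bzs s hs r hr) (bzrs s hs r hr)
  · intro s hs
    simpa using lq.mul (lz s hs)
  · intro s hs
    simpa using lq.mul (lzs s hs)
  · intro s hs
    obtain ⟨L, hL⟩ := lzr s hs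
    exact ⟨_, lq.mul (hL.add (((lz s hs).const_mul p).div lid hR.ne'))⟩
  · intro s hs r hr
    have hr0 := hr.1
    have h1 := sqle _ _ (bf s hs r hr)
    set a := z r s / r with ha
    set b := zr r s with hb
    have hza : z r s = a * r := by rw [ha]; field_simp
    have e1 : -(q r * zs r s) - q r * (zrr r s + 2 * p * b / r + p * (p - 1) * z r s / r ^ 2) +
        p * (p + 1) * (q r * z r s) / r ^ 2 =
        q r * (-zs r s - zrr r s - 2 * p / r * b + 2 * p / r ^ 2 * z r s) := by
      field_simp
      ring
    rw [e1, mul_pow]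
    have e2 : (q r * (b + p * z r s / r)) ^ 2 + p * (p + 1) * (q r * z r s) ^ 2 / r ^ 2 =
      q r ^ 2 * ((b + p * a) ^ 2 + p * (p + 1) * a ^ 2) := by
      rw [hza]; field_simp
    rw [e2]
    have h2 : (C * (|z r s| / r + |b|)) ^ 2 ≤ C' * ((b + p * a) ^ 2 + p * (p + 1) * a ^ 2) := by
      have e3 : |z r s| / r = |a| := by rw [ha, abs_div, abs_of_pos hr0]
      rw [e3, mul_pow, hC']
      have h3 : (|a| + |b|) ^ 2 ≤ 2 * (a ^ 2 + b ^ 2) := by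
        nlinarith [sq_nonneg (|a| - |b|), sq_abs a, sq_abs b]
      have h4 : b ^ 2 ≤ 2 * (b + p * a) ^ 2 + 2 * p ^ 2 * a ^ 2 := by
        nlinarith [sq_nonneg (b + 2 * p * a)]
      have h5 : a ^ 2 + b ^ 2 ≤ (2 + (1 + 2 * p ^ 2) / (p * (p + 1))) * ((b + p * a) ^ 2 + p * (p + 1) * a ^ 2) := by
        have e4 : (2 + (1 + 2 * p ^ 2) / (p * (p + 1))) * ((b + p * a) ^ 2 + p * (p + 1) * a ^ 2)
          = 2 * (b + p * a) ^ 2 + 2 * (p * (p + 1) * a ^ 2) + (1 + 2 * p ^ 2) * a ^ 2 +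
            (1 + 2 * p ^ 2) / (p * (p + 1)) * (b + p * a) ^ 2 := by field_simp; ring
        rw [e4]
        have t1 : 0 ≤ 2 * (p * (p + 1) * a ^ 2) := by positivity
        have t2 : 0 ≤ (1 + 2 * p ^ 2) / (p * (p + 1)) * (b + p * a) ^ 2 := by positivity
        nlinarith
      have h6 := mul_le_mul_of_nonneg_left (h3.trans (mul_le_mul_of_nonneg_left h5 two_pos.le)) (sq_nonneg C)
      linarith
    have h7 := mul_le_mul_of_nonneg_left (h1.trans h2) (sq_nonneg (q r))
    linarith
  · intro s hs
    obtain ⟨r, hr, h⟩ := hne s hs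
    exact ⟨r, hr, mul_ne_zero (hq0 r hr).ne' h⟩
  · intro k
    obtain ⟨K, hK⟩ := hvan k
    refine ⟨R ^ p * K, fun s hs r hr h => ?_⟩
    have h1 := hK s hs r hr h
    rw [abs_mul, mul_assoc]
    have := bqR r hr
    gcongr

/-- directional derivative -/
noncomputable def zcD (w : ℝ × ℝ) (F : ℝ × ℝ → ℝ) (p : ℝ × ℝ) : ℝ := fderiv ℝ F p w

/-- vanishing of time derivatives up to order k -/
def zcVan (J : Set ℝ) (t0 : ℝ) : ℕ → (ℝ × ℝ → ℝ) → Prop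
  | 0, F => ∀ r ∈ J, F (r, t0) = 0
  | k + 1, F => (∀ r ∈ J, F (r, t0) = 0) ∧ zcVan J t0 k (zcD (0, 1) F)

lemma zcD_smooth {U : Set (ℝ × ℝ)} (hU : IsOpen U) {F : ℝ × ℝ → ℝ}
    (hF : ContDiffOn ℝ (⊤ : ℕ∞) F U) (w : ℝ × ℝ) : ContDiffOn ℝ (⊤ : ℕ∞) (zcD w F) U := by
  have h : ContDiffOn ℝ (⊤ : ℕ∞) (fderiv ℝ F) U := hF.fderiv_of_isOpen hU (by simp)
  exact h.clm_apply contDiffOn_const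

lemma zcD_congr {U : Set (ℝ × ℝ)} (hU : IsOpen U) {F G : ℝ × ℝ → ℝ}
    (h : ∀ p ∈ U, F p = G p) (w : ℝ × ℝ) : ∀ p ∈ U, zcD w F p = zcD w G p := by
  intro p hp
  have : F =ᶠ[nhds p] G := by
    filter_upwards [hU.mem_nhds hp] with q hq using h q hq
  unfold zcD
  rw [this.fderiv_eq]

lemma zcD_comm {U : Set (ℝ × ℝ)} (hU : IsOpen U) {F : ℝ × ℝ → ℝ}
    (hF : ContDiffOn ℝ (⊤ : ℕ∞) F U) (w w' : ℝ × ℝ) :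
    ∀ p ∈ U, zcD w (zcD w' F) p = zcD w' (zcD w F) p := by
  intro p hp
  have h1 : ContDiffAt ℝ (⊤ : ℕ∞) F p := hF.contDiffAt (hU.mem_nhds hp)
  have h2 : IsSymmSndFDerivAt ℝ F p := h1.isSymmSndFDerivAt (by simp; exact WithTop.coe_le_coe.2 (le_top : (2:ℕ∞) ≤ ⊤))
  have h3 : ContDiffOn ℝ (⊤ : ℕ∞) (fderiv ℝ F) U := hF.fderiv_of_isOpen hU (by simp)
  have h4 : DifferentiableAt ℝ (fderiv ℝ F) p :=
    (h3.contDiffAt (hU.mem_nhds hp)).differentiableAt (by simp)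
  have h5 : ∀ a b : ℝ × ℝ, zcD a (zcD b F) p = fderiv ℝ (fderiv ℝ F) p a b := by
    intro a b
    unfold zcD
    rw [fderiv_clm_apply h4 (by fun_prop)]
    simp
  rw [h5, h5]
  exact h2 w w'

lemma zcD_diff {U : Set (ℝ × ℝ)} (hU : IsOpen U) {F : ℝ × ℝ → ℝ}
    (hF : ContDiffOn ℝ (⊤ : ℕ∞) F U) {p : ℝ × ℝ} (hp : p ∈ U) : DifferentiableAt ℝ F p :=
  (hF.contDiffAt (hU.mem_nhds hp)).differentiableAt (by simp)

lemma zcD_t {U : Set (ℝ × ℝ)} (hU : IsOpen U) {F : ℝ × ℝ → ℝ}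
    (hF : ContDiffOn ℝ (⊤ : ℕ∞) F U) {r t : ℝ} (hp : (r, t) ∈ U) :
    HasDerivAt (fun t => F (r, t)) (zcD (0, 1) F (r, t)) t := by
  have h1 := (zcD_diff hU hF hp).hasFDerivAt
  have h2 : HasDerivAt (fun t : ℝ => (r, t)) ((0 : ℝ), (1 : ℝ)) t :=
    (hasDerivAt_const t r).prodMk (hasDerivAt_id t)
  exact h1.comp_hasDerivAt t h2

lemma zcD_r {U : Set (ℝ × ℝ)} (hU : IsOpen U) {F : ℝ × ℝ → ℝ}
    (hF : ContDiffOn ℝ (⊤ : ℕ∞) F U) {r t : ℝ} (hp : (r, t) ∈ U) :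
    HasDerivAt (fun r => F (r, t)) (zcD (1, 0) F (r, t)) r := by
  have h1 := (zcD_diff hU hF hp).hasFDerivAt
  have h2 : HasDerivAt (fun r : ℝ => (r, t)) ((1 : ℝ), (0 : ℝ)) r :=
    (hasDerivAt_id r).prodMk (hasDerivAt_const r t)
  exact h1.comp_hasDerivAt r h2

section
variable {a b t0 t1 t2 : ℝ}

lemma zcVan_zero {J : Set ℝ} {k : ℕ} {F : ℝ × ℝ → ℝ} (h : zcVan J t0 k F) :
    ∀ r ∈ J, F (r, t0) = 0 := by
  cases k with
  | zero => exact h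
  | succ k => exact h.1

lemma zcVan_mono {J : Set ℝ} : ∀ (k : ℕ) {F : ℝ × ℝ → ℝ}, zcVan J t0 (k + 1) F → zcVan J t0 k F := by
  intro k
  induction k with
  | zero => intro F h; exact h.1
  | succ k ih => intro F h; exact ⟨h.1, ih h.2⟩

lemma zcVan_congr (ht0 : t0 ∈ Ioo t1 t2) : ∀ (k : ℕ) {F G : ℝ × ℝ → ℝ},
    (∀ p ∈ Ioo a b ×ˢ Ioo t1 t2, F p = G p) → zcVan (Ioo a b) t0 k F → zcVan (Ioo a b) t0 k G := by
  intro k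
  induction k with
  | zero => intro F G h hF r hr; rw [← h (r, t0) ⟨hr, ht0⟩]; exact hF r hr
  | succ k ih =>
    intro F G h hF
    refine ⟨fun r hr => ?_, ih (zcD_congr (isOpen_Ioo.prod isOpen_Ioo) h _) hF.2⟩
    rw [← h (r, t0) ⟨hr, ht0⟩]; exact hF.1 r hr

lemma zcVan_add (ht0 : t0 ∈ Ioo t1 t2) : ∀ (k : ℕ) {F G : ℝ × ℝ → ℝ},
    ContDiffOn ℝ (⊤ : ℕ∞) F (Ioo a b ×ˢ Ioo t1 t2) → ContDiffOn ℝ (⊤ : ℕ∞) G (Ioo a b ×ˢ Ioo t1 t2) →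
    zcVan (Ioo a b) t0 k F → zcVan (Ioo a b) t0 k G → zcVan (Ioo a b) t0 k (fun p => F p + G p) := by
  have hU : IsOpen (Ioo a b ×ˢ Ioo t1 t2) := isOpen_Ioo.prod isOpen_Ioo
  intro k
  induction k with
  | zero => intro F G _ _ h1 h2 r hr; simp [h1 r hr, h2 r hr]
  | succ k ih =>
    intro F G hF hG h1 h2
    refine ⟨fun r hr => by simp [h1.1 r hr, h2.1 r hr], ?_⟩
    refine zcVan_congr ht0 k ?_ (ih (zcD_smooth hU hF _) (zcD_smooth hU hG _) h1.2 h2.2)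
    intro p hp
    unfold zcD
    rw [fderiv_fun_add (zcD_diff hU hF hp) (zcD_diff hU hG hp)]
    rfl

lemma zcVan_mul (ht0 : t0 ∈ Ioo t1 t2) : ∀ (k : ℕ) {F G : ℝ × ℝ → ℝ},
    ContDiffOn ℝ (⊤ : ℕ∞) F (Ioo a b ×ˢ Ioo t1 t2) → ContDiffOn ℝ (⊤ : ℕ∞) G (Ioo a b ×ˢ Ioo t1 t2) →
    zcVan (Ioo a b) t0 k G → zcVan (Ioo a b) t0 k (fun p => F p * G p) := by
  have hU : IsOpen (Ioo a b ×ˢ Ioo t1 t2) := isOpen_Ioo.prod isOpen_Ioo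
  intro k
  induction k with
  | zero => intro F G _ _ h1 r hr; simp [h1 r hr]
  | succ k ih =>
    intro F G hF hG h1
    refine ⟨fun r hr => by simp [h1.1 r hr], ?_⟩
    have e1 := ih hF (zcD_smooth hU hG (0, 1)) h1.2
    have e2 := ih (zcD_smooth hU hF (0, 1)) hG (zcVan_mono k h1)
    refine zcVan_congr ht0 k ?_ (zcVan_add ht0 k (hF.mul (zcD_smooth hU hG (0, 1)))
      ((zcD_smooth hU hF (0, 1)).mul hG) e1 e2)
    intro p hp
    unfold zcD
    rw [fderiv_fun_mul (zcD_diff hU hF hp) (zcD_diff hU hG hp)]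
    simp
    ring

lemma zcVan_r (ht0 : t0 ∈ Ioo t1 t2) : ∀ (k : ℕ) {F : ℝ × ℝ → ℝ},
    ContDiffOn ℝ (⊤ : ℕ∞) F (Ioo a b ×ˢ Ioo t1 t2) →
    zcVan (Ioo a b) t0 k F → zcVan (Ioo a b) t0 k (zcD (1, 0) F) := by
  have hU : IsOpen (Ioo a b ×ˢ Ioo t1 t2) := isOpen_Ioo.prod isOpen_Ioo
  have h0 : ∀ F : ℝ × ℝ → ℝ, ContDiffOn ℝ (⊤ : ℕ∞) F (Ioo a b ×ˢ Ioo t1 t2) →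
      (∀ r ∈ Ioo a b, F (r, t0) = 0) → ∀ r ∈ Ioo a b, zcD (1, 0) F (r, t0) = 0 := by
    intro F hF h r hr
    have h1 := zcD_r hU hF (r := r) (t := t0) ⟨hr, ht0⟩
    have h2 : HasDerivAt (fun r => F (r, t0)) 0 r := by
      refine (hasDerivAt_const r (0 : ℝ)).congr_of_eventuallyEq ?_
      filter_upwards [isOpen_Ioo.mem_nhds hr] with q hq using h q hq
    exact h1.unique h2
  intro k
  induction k with
  | zero => intro F hF h; exact h0 F hF h
  | succ k ih =>
    intro F hF h
    exact ⟨h0 F hF h.1, zcVan_congr ht0 k (zcD_comm hU hF _ _) (ih (zcD_smooth hU hF _) h.2)⟩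

lemma zc_taylor {ε a' b' : ℝ} (hε : 0 < ε) (ht1 : t1 < t0 - ε) (ht2 : t0 < t2) (ha : a < a') (hb : b' < b) :
    ∀ (k : ℕ) {F : ℝ × ℝ → ℝ}, ContDiffOn ℝ (⊤ : ℕ∞) F (Ioo a b ×ˢ Ioo t1 t2) →
    zcVan (Ioo a b) t0 k F →
    ∃ K : ℝ, ∀ r ∈ Icc a' b', ∀ s ∈ Icc 0 ε, |F (r, t0 - s)| ≤ K * s ^ k := by
  have hU : IsOpen (Ioo a b ×ˢ Ioo t1 t2) := isOpen_Ioo.prod isOpen_Ioo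
  intro k
  induction k with
  | zero =>
    intro F hF _
    have hc : IsCompact (Icc a' b' ×ˢ Icc (t0 - ε) t0) := isCompact_Icc.prod isCompact_Icc
    have hs : Icc a' b' ×ˢ Icc (t0 - ε) t0 ⊆ Ioo a b ×ˢ Ioo t1 t2 :=
      Set.prod_mono (fun r hr => ⟨by linarith [hr.1], by linarith [hr.2]⟩)
        (fun r hr => ⟨by linarith [hr.1], by linarith [hr.2]⟩)
    obtain ⟨K, hK⟩ := hc.exists_bound_of_continuousOn (hF.continuousOn.mono hs)
    refine ⟨K, fun r hr s hs => ?_⟩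
    have := hK (r, t0 - s) ⟨hr, by constructor <;> simp <;> linarith [hs.1, hs.2]⟩
    simpa using this
  | succ k ih =>
    intro F hF h
    obtain ⟨K, hK⟩ := ih (zcD_smooth hU hF (0, 1)) h.2
    refine ⟨K, fun r hr s hs => ?_⟩
    have hr' : r ∈ Ioo a b := ⟨by linarith [hr.1], by linarith [hr.2]⟩
    have hK0 : 0 ≤ K := by
      have := (abs_nonneg _).trans (hK r hr ε ⟨hε.le, le_rfl⟩)
      exact nonneg_of_mul_nonneg_left this (by positivity)
    have key := (convex_Icc (0:ℝ) s).norm_image_sub_le_of_norm_hasDerivWithin_le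
      (f := fun u => F (r, t0 - u)) (f' := fun u => - zcD (0, 1) F (r, t0 - u)) (C := K * s ^ k)
      (x := 0) (y := s) ?_ ?_ ⟨le_rfl, hs.1⟩ ⟨hs.1, le_rfl⟩
    · simp only [sub_zero, h.1 r hr', Real.norm_eq_abs, abs_of_nonneg hs.1] at key
      rw [pow_succ, ← mul_assoc]; exact key
    · intro u hu
      have h1 := zcD_t hU hF (r := r) (t := t0 - u)
        ⟨hr', by constructor <;> simp <;> linarith [hu.1, hu.2, hs.1, hs.2]⟩
      have h2 : HasDerivAt (fun u => t0 - u) (-1) u := by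
        simpa using (hasDerivAt_id u).const_sub t0
      have h3 := HasDerivAt.comp u h1 h2
      rw [mul_neg_one] at h3
      exact h3.hasDerivWithinAt
    · intro u hu
      rw [norm_neg, Real.norm_eq_abs]
      refine (hK r hr u ⟨hu.1, hu.2.trans hs.2⟩).trans ?_
      have := hu.1
      have := hu.2
      gcongr

lemma zc_van {ε a' b' : ℝ} (hε : 0 < ε) (ht1 : t1 < t0 - ε) (ht2 : t0 < t2) (ha : a < a') (hb : b' < b)
    {F c1 c2 : ℝ × ℝ → ℝ} (hF : ContDiffOn ℝ (⊤ : ℕ∞) F (Ioo a b ×ˢ Ioo t1 t2))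
    (hc1 : ContDiffOn ℝ (⊤ : ℕ∞) c1 (Ioo a b ×ˢ Ioo t1 t2))
    (hc2 : ContDiffOn ℝ (⊤ : ℕ∞) c2 (Ioo a b ×ˢ Ioo t1 t2))
    (hpde : ∀ p ∈ Ioo a b ×ˢ Ioo t1 t2, zcD (0, 1) F p = zcD (1, 0) (zcD (1, 0) F) p
      + c1 p * zcD (1, 0) F p + c2 p * F p)
    (h0 : ∀ r ∈ Ioo a b, F (r, t0) = 0) (k : ℕ) :
    ∃ K : ℝ, ∀ r ∈ Icc a' b', ∀ s ∈ Icc 0 ε, |F (r, t0 - s)| ≤ K * s ^ k := by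
  have hU : IsOpen (Ioo a b ×ˢ Ioo t1 t2) := isOpen_Ioo.prod isOpen_Ioo
  have ht0 : t0 ∈ Ioo t1 t2 := ⟨by linarith, ht2⟩
  refine zc_taylor hε ht1 ht2 ha hb k hF ?_
  induction k with
  | zero => exact h0
  | succ k ih =>
    refine ⟨h0, ?_⟩
    have s1 := zcD_smooth hU hF (1, 0)
    have s2 := zcD_smooth hU s1 (1, 0)
    have e1 := zcVan_r ht0 k hF ih
    have e2 := zcVan_r ht0 k s1 e1
    have e3 := zcVan_mul ht0 k hc1 s1 e1
    have e4 := zcVan_mul ht0 k hc2 hF ih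
    have e5 := zcVan_add ht0 k s2 (hc1.mul s1) e2 e3
    have e6 := zcVan_add ht0 k (s2.add (hc1.mul s1)) (hc2.mul hF) e5 e4
    exact zcVan_congr ht0 k (fun p hp => (hpde p hp).symm) e6

end

/-- directional derivative within a set -/
noncomputable def zcE (Q : Set (ℝ × ℝ)) (w : ℝ × ℝ) (F : ℝ × ℝ → ℝ) (p : ℝ × ℝ) : ℝ :=
  fderivWithin ℝ F Q p w

section
variable {R t1 t2 : ℝ}

lemma zcE_uniq (hR : 0 < R) : UniqueDiffOn ℝ (Icc 0 R ×ˢ Ioo t1 t2) :=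
  (uniqueDiffOn_Icc hR).prod isOpen_Ioo.uniqueDiffOn

lemma zcE_smooth (hR : 0 < R) {F : ℝ × ℝ → ℝ}
    (hF : ContDiffOn ℝ (⊤ : ℕ∞) F (Icc 0 R ×ˢ Ioo t1 t2)) (w : ℝ × ℝ) :
    ContDiffOn ℝ (⊤ : ℕ∞) (zcE (Icc 0 R ×ˢ Ioo t1 t2) w F) (Icc 0 R ×ˢ Ioo t1 t2) := by
  have h : ContDiffOn ℝ (⊤ : ℕ∞) (fderivWithin ℝ F (Icc 0 R ×ˢ Ioo t1 t2)) (Icc 0 R ×ˢ Ioo t1 t2) :=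
    hF.fderivWithin (zcE_uniq hR) (by simp)
  exact h.clm_apply contDiffOn_const

lemma zcE_r {F : ℝ × ℝ → ℝ}
    (hF : ContDiffOn ℝ (⊤ : ℕ∞) F (Icc 0 R ×ˢ Ioo t1 t2)) {r t : ℝ} (hr : r ∈ Icc 0 R)
    (ht : t ∈ Ioo t1 t2) :
    HasDerivWithinAt (fun r => F (r, t)) (zcE (Icc 0 R ×ˢ Ioo t1 t2) (1, 0) F (r, t)) (Icc 0 R) r := by
  have h1 := ((hF.differentiableOn (by simp)) (r, t) ⟨hr, ht⟩).hasFDerivWithinAt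
  have h2 : HasDerivWithinAt (fun r : ℝ => (r, t)) ((1 : ℝ), (0 : ℝ)) (Icc 0 R) r :=
    ((hasDerivAt_id r).prodMk (hasDerivAt_const r t)).hasDerivWithinAt
  have h3 : MapsTo (fun r : ℝ => (r, t)) (Icc 0 R) (Icc 0 R ×ˢ Ioo t1 t2) := fun x hx => ⟨hx, ht⟩
  exact h1.comp_hasDerivWithinAt r h2 h3

lemma zcE_r' {F : ℝ × ℝ → ℝ}
    (hF : ContDiffOn ℝ (⊤ : ℕ∞) F (Icc 0 R ×ˢ Ioo t1 t2)) {r t : ℝ} (hr : r ∈ Ioo 0 R)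
    (ht : t ∈ Ioo t1 t2) :
    HasDerivAt (fun r => F (r, t)) (zcE (Icc 0 R ×ˢ Ioo t1 t2) (1, 0) F (r, t)) r :=
  (zcE_r hF ⟨hr.1.le, hr.2.le⟩ ht).hasDerivAt (Icc_mem_nhds hr.1 hr.2)

lemma zcE_t {F : ℝ × ℝ → ℝ}
    (hF : ContDiffOn ℝ (⊤ : ℕ∞) F (Icc 0 R ×ˢ Ioo t1 t2)) {r t : ℝ} (hr : r ∈ Icc 0 R)
    (ht : t ∈ Ioo t1 t2) :
    HasDerivAt (fun t => F (r, t)) (zcE (Icc 0 R ×ˢ Ioo t1 t2) (0, 1) F (r, t)) t := by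
  have h1 := ((hF.differentiableOn (by simp)) (r, t) ⟨hr, ht⟩).hasFDerivWithinAt
  have h2 : HasDerivWithinAt (fun t : ℝ => (r, t)) ((0 : ℝ), (1 : ℝ)) (Ioo t1 t2) t :=
    ((hasDerivAt_const t r).prodMk (hasDerivAt_id t)).hasDerivWithinAt
  exact (h1.comp_hasDerivWithinAt t h2 (fun x hx => ⟨hr, hx⟩)).hasDerivAt (isOpen_Ioo.mem_nhds ht)

lemma zcE_eq (w : ℝ × ℝ) (F : ℝ × ℝ → ℝ) :
    ∀ p ∈ Ioo 0 R ×ˢ Ioo t1 t2, zcE (Icc 0 R ×ˢ Ioo t1 t2) w F p = zcD w F p := by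
  intro p hp
  unfold zcE zcD
  rw [fderivWithin_of_mem_nhds]
  exact prod_mem_nhds (Icc_mem_nhds hp.1.1 hp.1.2) (isOpen_Ioo.mem_nhds hp.2)

lemma zcE_eq2 (w w' : ℝ × ℝ) (F : ℝ × ℝ → ℝ) :
    ∀ p ∈ Ioo 0 R ×ˢ Ioo t1 t2, zcE (Icc 0 R ×ˢ Ioo t1 t2) w (zcE (Icc 0 R ×ˢ Ioo t1 t2) w' F) p
      = zcD w (zcD w' F) p := by
  intro p hp
  rw [zcE_eq w _ p hp]
  exact zcD_congr (isOpen_Ioo.prod isOpen_Ioo) (zcE_eq w' F) w p hp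

lemma zc_box {x0 ε p C δ t0 : ℝ} (hx0 : 0 < x0) (hx0R : x0 < R) (hε : 0 < ε) (hp : 1 / 2 ≤ p)
    (hC : 0 ≤ C) (hδ : 0 < δ) (ht1 : t1 < t0 - ε) (ht2 : t0 < t2) {F : ℝ × ℝ → ℝ}
    (hF : ContDiffOn ℝ (⊤ : ℕ∞) F (Icc 0 R ×ˢ Ioo t1 t2))
    (h0 : ∀ t ∈ Ioo t1 t2, F (0, t) = 0) (hFR : ∀ t ∈ Ioo t1 t2, F (R, t) = 0)
    (bf : ∀ r ∈ Ioo 0 R, ∀ t ∈ Ioo (t0 - ε) t0,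
      |zcD (0, 1) F (r, t) - zcD (1, 0) (zcD (1, 0) F) (r, t) - 2 * p / r * zcD (1, 0) F (r, t)
        + 2 * p / r ^ 2 * F (r, t)| ≤ C * (|F (r, t)| / r + |zcD (1, 0) F (r, t)|))
    (hne : ∀ t ∈ Ioo (t0 - ε) t0, ∃ r ∈ Ioo 0 R, F (r, t) ≠ 0)
    (hvan : ∀ k : ℕ, ∃ K : ℝ, ∀ s ∈ Ioo 0 ε, ∀ r ∈ Ioo 0 R, |r - x0| < δ → |F (r, t0 - s)| ≤ K * s ^ k) :
    False := by
  have hR : 0 < R := hx0.trans hx0R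
  set Q := Icc 0 R ×ˢ Ioo t1 t2 with hQ
  have hU : IsOpen (Ioo 0 R ×ˢ Ioo t1 t2) := isOpen_Ioo.prod isOpen_Ioo
  have hUQ : Ioo 0 R ×ˢ Ioo t1 t2 ⊆ Q := Set.prod_mono Ioo_subset_Icc_self subset_rfl
  have hFU := hF.mono hUQ
  have s1 := zcE_smooth hR hF (1, 0)
  have s2 := zcE_smooth hR hF (0, 1)
  have s11 := zcE_smooth hR s1 (1, 0)
  have s12 := zcE_smooth hR s2 (1, 0)
  rw [← hQ] at s1 s2 s11 s12
  have hc : IsCompact (Icc 0 R ×ˢ Icc (t0 - ε) t0) := isCompact_Icc.prod isCompact_Icc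
  have hsub : Icc 0 R ×ˢ Icc (t0 - ε) t0 ⊆ Q :=
    Set.prod_mono subset_rfl (fun r hr => ⟨by linarith [hr.1], by linarith [hr.2]⟩)
  obtain ⟨M1, hM1⟩ := hc.exists_bound_of_continuousOn (s1.continuousOn.mono hsub)
  obtain ⟨M2, hM2⟩ := hc.exists_bound_of_continuousOn (s12.continuousOn.mono hsub)
  set M := max 0 (max M1 M2) with hM
  have hM0 : 0 ≤ M := le_max_left _ _
  have b1 : ∀ r ∈ Icc 0 R, ∀ t ∈ Icc (t0 - ε) t0, |zcE Q (1, 0) F (r, t)| ≤ M := fun r hr t ht =>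
    (hM1 (r, t) ⟨hr, ht⟩).trans ((le_max_left _ _).trans (le_max_right _ _))
  have b2 : ∀ r ∈ Icc 0 R, ∀ t ∈ Icc (t0 - ε) t0, |zcE Q (1, 0) (zcE Q (0, 1) F) (r, t)| ≤ M :=
    fun r hr t ht =>
    (hM2 (r, t) ⟨hr, ht⟩).trans ((le_max_right _ _).trans (le_max_right _ _))
  have tm : ∀ s ∈ Ioo 0 ε, t0 - s ∈ Ioo (t0 - ε) t0 := fun s hs => ⟨by linarith [hs.2], by linarith [hs.1]⟩
  have tm' : ∀ s ∈ Ioo 0 ε, t0 - s ∈ Icc (t0 - ε) t0 := fun s hs => ⟨by linarith [hs.2], by linarith [hs.1]⟩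
  have tm2 : ∀ s ∈ Ioo 0 ε, t0 - s ∈ Ioo t1 t2 := fun s hs => ⟨by linarith [hs.2], by linarith [hs.1]⟩
  have bdt : ∀ x ∈ Icc 0 R, (∀ t ∈ Ioo t1 t2, F (x, t) = 0) →
      ∀ t ∈ Ioo t1 t2, zcE Q (0, 1) F (x, t) = 0 := by
    intro x hx h t ht
    have h1 := zcE_t hF hx ht
    refine h1.unique ((hasDerivAt_const t (0:ℝ)).congr_of_eventuallyEq ?_)
    filter_upwards [isOpen_Ioo.mem_nhds ht] with q hq using h q hq
  have mv : ∀ G : ℝ × ℝ → ℝ, ContDiffOn ℝ (⊤ : ℕ∞) G Q → (∀ t ∈ Ioo t1 t2, G (0, t) = 0) →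
      (∀ r ∈ Icc 0 R, ∀ t ∈ Icc (t0 - ε) t0, |zcE Q (1, 0) G (r, t)| ≤ M) →
      ∀ r ∈ Icc 0 R, ∀ t ∈ Icc (t0 - ε) t0, |G (r, t)| ≤ M * r := by
    intro G hG hG0 hb r hr t ht
    have ht' : t ∈ Ioo t1 t2 := ⟨by linarith [ht.1], by linarith [ht.2]⟩
    have key := (convex_Icc (0:ℝ) R).norm_image_sub_le_of_norm_hasDerivWithin_le
      (f := fun u => G (u, t)) (C := M) (x := 0) (y := r)
      (fun u hu => zcE_r hG hu ht') (fun u hu => hb u hu t ht) ⟨le_rfl, hR.le⟩ hr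
    simpa [hG0 t ht', abs_of_nonneg hr.1] using key
  have hd : ∀ s : ℝ, HasDerivAt (fun u => t0 - u) (-1) s := fun s => by
    simpa using (hasDerivAt_id s).const_sub t0
  have lim : ∀ G : ℝ × ℝ → ℝ, ContDiffOn ℝ (⊤ : ℕ∞) G Q → ∀ t ∈ Ioo t1 t2,
      Tendsto (fun r => G (r, t)) (nhdsWithin R (Iio R)) (nhds (G (R, t))) := by
    intro G hG t ht
    have h1 : ContinuousWithinAt (fun r => G (r, t)) (Icc 0 R) R :=
      (zcE_r hG ⟨hR.le, le_rfl⟩ ht).continuousWithinAt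
    refine h1.tendsto.mono_left ?_
    rw [← nhdsWithin_Ioo_eq_nhdsLT hR]
    exact nhdsWithin_mono _ Ioo_subset_Icc_self
  have cts : ∀ G : ℝ × ℝ → ℝ, ContDiffOn ℝ (⊤ : ℕ∞) G Q → ∀ t ∈ Ioo t1 t2,
      ContinuousOn (fun r => G (r, t)) (Ioo 0 R) := by
    intro G hG t ht r hr
    exact (zcE_r' hG hr ht).continuousAt.continuousWithinAt
  refine zc_core_z (R := R) (x0 := x0) (S := ε) (p := p) (M := M) (C := C) (δ := δ) hx0 hx0R hε hp hC hM0 hδ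
    (z := fun r s => F (r, t0 - s)) (zr := fun r s => zcE Q (1, 0) F (r, t0 - s))
    (zrr := fun r s => zcE Q (1, 0) (zcE Q (1, 0) F) (r, t0 - s))
    (zs := fun r s => - zcE Q (0, 1) F (r, t0 - s))
    (zrs := fun r s => - zcE Q (1, 0) (zcE Q (0, 1) F) (r, t0 - s))
    ?_ ?_ ?_ ?_ ?_ ?_ ?_ ?_ ?_ ?_ ?_ ?_ ?_ ?_ ?_ ?_ ?_
  · intro s hs r hr; exact zcE_r' hF hr (tm2 s hs)
  · intro s hs r hr; exact zcE_r' s1 hr (tm2 s hs)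
  · intro s hs r hr; exact (zcE_r' s2 hr (tm2 s hs)).neg
  · intro s hs r hr
    have h3 := HasDerivAt.comp s (zcE_t hF ⟨hr.1.le, hr.2.le⟩ (tm2 s hs)) (hd s)
    rw [mul_neg_one] at h3
    exact h3
  · intro s hs r hr
    have h3 := HasDerivAt.comp s (zcE_t s1 ⟨hr.1.le, hr.2.le⟩ (tm2 s hs)) (hd s)
    rw [mul_neg_one, ← hQ, zcE_eq2 _ _ _ _ ⟨hr, tm2 s hs⟩, zcD_comm hU hFU _ _ _ ⟨hr, tm2 s hs⟩,
      ← zcE_eq2 _ _ _ _ ⟨hr, tm2 s hs⟩] at h3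
    exact h3
  · intro s hs; exact cts _ s11 _ (tm2 s hs)
  · intro s hs; exact (cts _ s12 _ (tm2 s hs)).neg
  · intro s hs r hr; exact mv F hF h0 b1 r ⟨hr.1.le, hr.2.le⟩ _ (tm' s hs)
  · intro s hs r hr; exact b1 r ⟨hr.1.le, hr.2.le⟩ _ (tm' s hs)
  · intro s hs r hr
    rw [abs_neg]
    exact mv _ s2 (bdt 0 ⟨le_rfl, hR.le⟩ h0) b2 r ⟨hr.1.le, hr.2.le⟩ _ (tm' s hs)
  · intro s hs r hr
    rw [abs_neg]
    exact b2 r ⟨hr.1.le, hr.2.le⟩ _ (tm' s hs)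
  · intro s hs
    have := lim F hF _ (tm2 s hs)
    rwa [hFR _ (tm2 s hs)] at this
  · intro s hs
    have := (lim _ s2 _ (tm2 s hs)).neg
    rwa [bdt R ⟨hR.le, le_rfl⟩ hFR _ (tm2 s hs), neg_zero] at this
  · intro s hs; exact ⟨_, lim _ s1 _ (tm2 s hs)⟩
  · intro s hs r hr
    have := bf r hr _ (tm s hs)
    have hp' : (r, t0 - s) ∈ Ioo 0 R ×ˢ Ioo t1 t2 := ⟨hr, tm2 s hs⟩
    simp only [neg_neg]
    rw [hQ, zcE_eq2 _ _ _ _ hp', zcE_eq _ _ _ hp', zcE_eq _ _ _ hp']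
    exact this
  · intro s hs; exact hne _ (tm s hs)
  · exact hvan

end

lemma zc_alg {R M η P : ℝ} (hR : 0 < R) (hM : 0 < M) (hη : 0 < η) (hP : 0 ≤ P) :
    ∃ C : ℝ, 0 ≤ C ∧ ∀ r ∈ Ioo 0 R, ∀ f g : ℝ, |f| ≤ M → |g| ≤ M → η - M * (R - r) ≤ |f| →
      2 * |g| + P * (|f| / r) ≤ C * (|(R - r) * f| / r + |-f + (R - r) * g|) := by
  obtain ⟨δ, hδ, hδ1, hδ2⟩ : ∃ δ : ℝ, 0 < δ ∧ δ ≤ R / 2 ∧ M * δ ≤ η / 4 := by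
    refine ⟨min (R / 2) (η / (4 * M)), by positivity, min_le_left _ _, ?_⟩
    calc M * min (R / 2) (η / (4 * M)) ≤ M * (η / (4 * M)) := by gcongr; exact min_le_right _ _
      _ = η / 4 := by field_simp
  refine ⟨(2 * M + P * M * (2 / R)) * (2 / η) + (2 / δ + 2 * R / δ ^ 2 + P / δ), by positivity, ?_⟩
  intro r hr f g hf hg hfe
  have hr0 := hr.1
  have hw : 0 < R - r := by linarith [hr.2]
  set w := R - r with hwdef
  have hX : |f| - w * |g| ≤ |-f + w * g| := by
    have := abs_sub_abs_le_abs_sub f (w * g)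
    rw [abs_mul, abs_of_pos hw] at this
    rw [show -f + w * g = -(f - w * g) by ring, abs_neg]
    exact this
  have hX2 : w * |g| - |f| ≤ |-f + w * g| := by
    have := abs_sub_abs_le_abs_sub (w * g) f
    rw [abs_mul, abs_of_pos hw] at this
    rw [show -f + w * g = (w * g - f) by ring]
    exact this
  have hY : |w * f| / r = w * (|f| / r) := by rw [abs_mul, abs_of_pos hw]; ring
  rw [hY]
  set X := |-f + w * g| with hXd
  have hX0 : 0 ≤ X := abs_nonneg _
  obtain ⟨A, hA⟩ : ∃ A, A = |f| / r := ⟨_, rfl⟩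
  have hA0 : 0 ≤ A := by rw [hA]; positivity
  have hfA : |f| = r * A := by rw [hA]; field_simp
  rw [← hA]
  have e1 : 0 ≤ (2 * M + P * M * (2 / R)) * (2 / η) := by positivity
  have e2 : 0 ≤ 2 / δ + 2 * R / δ ^ 2 + P / δ := by positivity
  have hwA : 0 ≤ w * A := by positivity
  rcases lt_or_ge w δ with h | h
  · have h1 : η / 2 ≤ X := by
      have : M * w ≤ M * δ := by gcongr
      have : w * |g| ≤ w * M := by gcongr
      nlinarith
    have h2 : A ≤ M * (2 / R) := by
      rw [hA]
      calc |f| / r ≤ M / (R / 2) := by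
            gcongr; linarith
        _ = M * (2 / R) := by field_simp
    have h3 : 2 * |g| + P * A ≤ 2 * M + P * M * (2 / R) := by
      have : P * A ≤ P * (M * (2 / R)) := by gcongr
      nlinarith
    have h4 : 2 * M + P * M * (2 / R) = (2 * M + P * M * (2 / R)) * (2 / η) * (η / 2) := by
      field_simp
    have h5 : (2 * M + P * M * (2 / R)) * (2 / η) * (η / 2) ≤ (2 * M + P * M * (2 / R)) * (2 / η) * X := by
      gcongr
    nlinarith [mul_nonneg e1 hwA, mul_nonneg e2 hwA, mul_nonneg e2 hX0]
  · have h1 : A ≤ 1 / δ * (w * A) := by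
      have : δ * A ≤ w * A := by gcongr
      rw [div_mul_eq_mul_div, le_div_iff₀ hδ]; linarith
    have h2 : |f| ≤ R / δ * (w * A) := by
      rw [hfA]
      calc r * A ≤ R * (1 / δ * (w * A)) := by
            gcongr; exact hr.2.le
        _ = _ := by ring
    have h3 : |g| ≤ 1 / δ * (X + R / δ * (w * A)) := by
      have : δ * |g| ≤ w * |g| := by gcongr
      rw [div_mul_eq_mul_div, le_div_iff₀ hδ]; linarith
    have h4 : 2 * |g| + P * A ≤ 2 / δ * X + (2 * R / δ ^ 2 + P / δ) * (w * A) := by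
      have : P * A ≤ P * (1 / δ * (w * A)) := by gcongr
      calc 2 * |g| + P * A ≤ 2 * (1 / δ * (X + R / δ * (w * A))) + P * (1 / δ * (w * A)) := by gcongr
        _ = _ := by field_simp; ring
    have h5 : 0 ≤ 2 / δ * (w * A) := by positivity
    have h6 : 0 ≤ (2 * R / δ ^ 2 + P / δ) * X := by positivity
    nlinarith [mul_nonneg e1 hwA, mul_nonneg e1 hX0]

lemma zc_uc (m : ℕ) (hm : 2 ≤ m) {R t1 t2 : ℝ} (hR : 0 < R)
    {b v : ℝ → ℝ → ℝ}
    (hb_smooth : ContDiffOn ℝ (⊤ : ℕ∞) (fun p : ℝ × ℝ => b p.1 p.2) (Icc 0 R ×ˢ Ioo t1 t2))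
    (hb0 : ∀ t ∈ Ioo t1 t2, b 0 t = (m : ℝ) - 1)
    (hv_smooth : ContDiffOn ℝ (⊤ : ℕ∞) (fun p : ℝ × ℝ => v p.1 p.2) (Icc 0 R ×ˢ Ioo t1 t2))
    (hpde : ∀ r ∈ Ioo (0:ℝ) R, ∀ t ∈ Ioo t1 t2,
      deriv (fun s => v r s) t =
        deriv (deriv (fun x => v x t)) r + (((m : ℝ) - 1) / r) * deriv (fun x => v x t) r
          - (b r t / r ^ 2) * v r t)
    (hbcR : (∀ t ∈ Ioo t1 t2, v R t = 0) ∨ (∀ t ∈ Ioo t1 t2, v R t ≠ 0))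
    (hv0 : ∀ t ∈ Ioo t1 t2, v 0 t = 0)
    {t0 : ℝ} (ht0 : t0 ∈ Ioo t1 t2) {ε : ℝ} (hε : 0 < ε) (hε' : t1 < t0 - ε)
    (hne : ∀ t ∈ Ioo (t0 - ε) t0, ∃ r ∈ Ioo 0 R, v r t ≠ 0)
    {x y : ℝ} (hx : 0 < x) (hxy : x < y) (hy : y < R) (hvan : ∀ r ∈ Ioo x y, v r t0 = 0) : False := by
  obtain ⟨F, hFd⟩ : ∃ F : ℝ × ℝ → ℝ, F = fun p => v p.1 p.2 := ⟨_, rfl⟩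
  have hFv : ∀ r t, v r t = F (r, t) := fun r t => by rw [hFd]
  rw [← hFd] at hv_smooth
  have hm1 : (1:ℝ) ≤ (m:ℝ) - 1 := by
    have : (2:ℝ) ≤ m := by exact_mod_cast hm
    linarith
  have hU : IsOpen (Ioo 0 R ×ˢ Ioo t1 t2) := isOpen_Ioo.prod isOpen_Ioo
  have hUQ : Ioo 0 R ×ˢ Ioo t1 t2 ⊆ Icc 0 R ×ˢ Ioo t1 t2 := Set.prod_mono Ioo_subset_Icc_self subset_rfl
  have hFU := hv_smooth.mono hUQ
  have hbU := hb_smooth.mono hUQ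
  have sub2 : Ioo x y ×ˢ Ioo t1 t2 ⊆ Ioo 0 R ×ˢ Ioo t1 t2 :=
    Set.prod_mono (fun r hr => ⟨hx.trans hr.1, hr.2.trans hy⟩) subset_rfl
  have pde : ∀ r ∈ Ioo 0 R, ∀ t ∈ Ioo t1 t2, zcD (0, 1) F (r, t) = zcD (1, 0) (zcD (1, 0) F) (r, t)
      + ((m:ℝ) - 1) / r * zcD (1, 0) F (r, t) - b r t / r ^ 2 * F (r, t) := by
    intro r hr t ht
    have h := hpde r hr t ht
    simp only [hFv] at h
    rw [(zcD_t hU hFU (r := r) (t := t) ⟨hr, ht⟩).deriv,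
      (zcD_r hU hFU (r := r) (t := t) ⟨hr, ht⟩).deriv] at h
    have h2 : deriv (fun x => F (x, t)) =ᶠ[nhds r] fun x => zcD (1, 0) F (x, t) := by
      filter_upwards [isOpen_Ioo.mem_nhds hr] with q hq
      exact (zcD_r hU hFU (r := q) (t := t) ⟨hq, ht⟩).deriv
    rw [h2.deriv_eq, (zcD_r hU (zcD_smooth hU hFU _) (r := r) (t := t) ⟨hr, ht⟩).deriv] at h
    exact h
  -- vanishing
  have van : ∀ k : ℕ, ∃ K : ℝ, ∀ s ∈ Ioo 0 ε, ∀ r ∈ Ioo 0 R, |r - (x + y) / 2| < (y - x) / 4 →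
      |F (r, t0 - s)| ≤ K * s ^ k := by
    intro k
    have c1 : ContDiffOn ℝ (⊤ : ℕ∞) (fun p : ℝ × ℝ => ((m:ℝ) - 1) / p.1) (Ioo x y ×ˢ Ioo t1 t2) :=
      contDiffOn_const.div contDiffOn_fst (fun p hp => (hx.trans hp.1.1).ne')
    have c2 : ContDiffOn ℝ (⊤ : ℕ∞) (fun p : ℝ × ℝ => -(b p.1 p.2 / p.1 ^ 2)) (Ioo x y ×ˢ Ioo t1 t2) :=
      ((hbU.mono sub2).div (contDiffOn_fst.pow 2) (fun p hp => (pow_pos (hx.trans hp.1.1) 2).ne')).neg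
    obtain ⟨K, hK⟩ := zc_van (t0 := t0) (a' := (3 * x + y) / 4) (b' := (x + 3 * y) / 4) hε hε' ht0.2
      (by linarith) (by linarith) (hFU.mono sub2) c1 c2 (by
        rintro ⟨r, t⟩ hp
        have h := pde r (sub2 hp).1 t hp.2
        simp only
        rw [h]; ring) (fun r hr => by rw [← hFv]; exact hvan r hr) k
    refine ⟨K, fun s hs r hr hrx => hK r ?_ s ⟨hs.1.le, hs.2.le⟩⟩
    rw [abs_lt] at hrx
    constructor <;> linarith [hrx.1, hrx.2]
  -- bounds
  have hc : IsCompact (Icc 0 R ×ˢ Icc (t0 - ε) t0) := isCompact_Icc.prod isCompact_Icc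
  have hsub : Icc 0 R ×ˢ Icc (t0 - ε) t0 ⊆ Icc 0 R ×ˢ Ioo t1 t2 :=
    Set.prod_mono subset_rfl (fun r hr => ⟨by linarith [hr.1], by linarith [hr.2, ht0.2]⟩)
  have mv : ∀ G : ℝ × ℝ → ℝ, ContDiffOn ℝ (⊤ : ℕ∞) G (Icc 0 R ×ˢ Ioo t1 t2) → ∃ M : ℝ, 0 < M ∧
      (∀ r ∈ Icc 0 R, ∀ t ∈ Icc (t0 - ε) t0, |zcE (Icc 0 R ×ˢ Ioo t1 t2) (1, 0) G (r, t)| ≤ M) ∧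
      ∀ r ∈ Icc 0 R, ∀ r' ∈ Icc 0 R, ∀ t ∈ Icc (t0 - ε) t0, |G (r, t) - G (r', t)| ≤ M * |r - r'| := by
    intro G hG
    obtain ⟨M, hM⟩ := hc.exists_bound_of_continuousOn ((zcE_smooth hR hG (1, 0)).continuousOn.mono hsub)
    have hb : ∀ r ∈ Icc 0 R, ∀ t ∈ Icc (t0 - ε) t0,
        |zcE (Icc 0 R ×ˢ Ioo t1 t2) (1, 0) G (r, t)| ≤ max 1 M := fun r hr t ht =>
      (hM (r, t) ⟨hr, ht⟩).trans (le_max_right _ _)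
    refine ⟨max 1 M, by positivity, hb, ?_⟩
    intro r hr r' hr' t ht
    have ht' : t ∈ Ioo t1 t2 := (hsub (show (r, t) ∈ _ from ⟨hr, ht⟩)).2
    exact (convex_Icc (0:ℝ) R).norm_image_sub_le_of_norm_hasDerivWithin_le
      (f := fun u => G (u, t))
      (fun u hu => zcE_r hG hu ht') (fun u hu => hb u hu t ht) hr' hr
  have h0R : (0:ℝ) ∈ Icc 0 R := ⟨le_rfl, hR.le⟩
  have hRR : R ∈ Icc 0 R := ⟨hR.le, le_rfl⟩
  obtain ⟨Cb, hCb, -, hbb⟩ := mv _ hb_smooth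
  have bb : ∀ r ∈ Ioo 0 R, ∀ t ∈ Ioo (t0 - ε) t0, |b r t - ((m:ℝ) - 1)| ≤ Cb * r := by
    intro r hr t ht
    have h := hbb r ⟨hr.1.le, hr.2.le⟩ 0 h0R t ⟨ht.1.le, ht.2.le⟩
    simp only [sub_zero, abs_of_pos hr.1] at h
    rwa [hb0 t ⟨by linarith [ht.1], by linarith [ht.2, ht0.2]⟩] at h
  have main : ∀ r ∈ Ioo 0 R, ∀ t ∈ Ioo (t0 - ε) t0,
      |(b r t - ((m:ℝ) - 1)) / r ^ 2 * F (r, t)| ≤ Cb * (|F (r, t)| / r) := by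
    intro r hr t ht
    have hr0 := hr.1
    rw [abs_mul, abs_div, abs_of_pos (show 0 < r ^ 2 by positivity)]
    calc |b r t - ((m:ℝ) - 1)| / r ^ 2 * |F (r, t)| ≤ Cb * r / r ^ 2 * |F (r, t)| := by
          gcongr; exact bb r hr t ht
      _ = Cb * (|F (r, t)| / r) := by field_simp
  have hx0 : 0 < (x + y) / 2 := by linarith
  have hx0R : (x + y) / 2 < R := by linarith
  have tt : ∀ t ∈ Ioo (t0 - ε) t0, t ∈ Ioo t1 t2 := fun t ht =>
    ⟨by linarith [ht.1], by linarith [ht.2, ht0.2]⟩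
  rcases hbcR with hbc | hbc
  · refine zc_box (p := ((m:ℝ) - 1) / 2) hx0 hx0R hε (by linarith) hCb.le
      (show 0 < (y - x) / 4 by linarith) hε' ht0.2 hv_smooth
      (fun t ht => by rw [← hFv]; exact hv0 t ht) (fun t ht => by rw [← hFv]; exact hbc t ht) ?_
      (fun t ht => by simpa only [hFv] using hne t ht) van
    intro r hr t ht
    have hr0 := hr.1
    rw [pde r hr t (tt t ht)]
    rw [show zcD (1, 0) (zcD (1, 0) F) (r, t) + ((m:ℝ) - 1) / r * zcD (1, 0) F (r, t)
      - b r t / r ^ 2 * F (r, t) - zcD (1, 0) (zcD (1, 0) F) (r, t)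
      - 2 * (((m:ℝ) - 1) / 2) / r * zcD (1, 0) F (r, t) + 2 * (((m:ℝ) - 1) / 2) / r ^ 2 * F (r, t)
      = -((b r t - ((m:ℝ) - 1)) / r ^ 2 * F (r, t)) by ring, abs_neg]
    refine (main r hr t ht).trans ?_
    have := abs_nonneg (zcD (1, 0) F (r, t))
    nlinarith
  · obtain ⟨M1, hM1, hM1b, hM1c⟩ := mv _ hv_smooth
    obtain ⟨M2, hM2⟩ := hc.exists_bound_of_continuousOn (hv_smooth.continuousOn.mono hsub)
    obtain ⟨M, hM⟩ : ∃ M, M = max M1 M2 := ⟨_, rfl⟩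
    have hM0 : 0 < M := by rw [hM]; exact lt_max_of_lt_left hM1
    have bF : ∀ r ∈ Ioo 0 R, ∀ t ∈ Ioo (t0 - ε) t0, |F (r, t)| ≤ M := fun r hr t ht =>
      (hM2 (r, t) ⟨⟨hr.1.le, hr.2.le⟩, ⟨ht.1.le, ht.2.le⟩⟩).trans (by rw [hM]; exact le_max_right _ _)
    have bD : ∀ r ∈ Ioo 0 R, ∀ t ∈ Ioo (t0 - ε) t0, |zcD (1, 0) F (r, t)| ≤ M := fun r hr t ht => by
      rw [← zcE_eq (R := R) (t1 := t1) (t2 := t2) _ _ _ ⟨hr, tt t ht⟩]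
      exact (hM1b r ⟨hr.1.le, hr.2.le⟩ t ⟨ht.1.le, ht.2.le⟩).trans (by rw [hM]; exact le_max_left _ _)
    obtain ⟨η, hη, hηb⟩ : ∃ η : ℝ, 0 < η ∧ ∀ t ∈ Icc (t0 - ε) t0, η ≤ |F (R, t)| := by
      have hcont : ContinuousOn (fun t => |F (R, t)|) (Icc (t0 - ε) t0) := by
        refine ContinuousOn.abs ?_
        exact hv_smooth.continuousOn.comp (by fun_prop) (fun t ht => hsub ⟨hRR, ht⟩)
      obtain ⟨t', ht', hmin⟩ := isCompact_Icc.exists_isMinOn ⟨t0, by constructor <;> linarith⟩ hcont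
      refine ⟨|F (R, t')|, ?_, fun t ht => hmin ht⟩
      rw [abs_pos, ← hFv]
      exact hbc t' (hsub (show (R, t') ∈ _ from ⟨hRR, ht'⟩)).2
    have bL : ∀ r ∈ Ioo 0 R, ∀ t ∈ Ioo (t0 - ε) t0, η - M * (R - r) ≤ |F (r, t)| := by
      intro r hr t ht
      have h1 := hM1c R hRR r ⟨hr.1.le, hr.2.le⟩ t ⟨ht.1.le, ht.2.le⟩
      have h2 := hηb t ⟨ht.1.le, ht.2.le⟩
      have h3 := abs_sub_abs_le_abs_sub (F (R, t)) (F (r, t))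
      have h4 : 0 < R - r := by linarith [hr.2]
      rw [abs_of_pos h4] at h1
      have h5 : M1 * (R - r) ≤ M * (R - r) := by
        gcongr; rw [hM]; exact le_max_left _ _
      linarith
    obtain ⟨C, hC0, hC⟩ := zc_alg (P := (m:ℝ) - 1) hR hM0 hη (by linarith)
    obtain ⟨G, hGd⟩ : ∃ G : ℝ × ℝ → ℝ, G = fun p => (R - p.1) * F p := ⟨_, rfl⟩
    have hG : ∀ r t, G (r, t) = (R - r) * F (r, t) := fun r t => by rw [hGd]
    have hGs : ContDiffOn ℝ (⊤ : ℕ∞) G (Icc 0 R ×ˢ Ioo t1 t2) := by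
      rw [hGd]; exact (contDiffOn_const.sub contDiffOn_fst).mul hv_smooth
    have hGU := hGs.mono hUQ
    have g1 : ∀ r ∈ Ioo 0 R, ∀ t ∈ Ioo t1 t2, zcD (1, 0) G (r, t) = -F (r, t) + (R - r) * zcD (1, 0) F (r, t) := by
      intro r hr t ht
      refine (zcD_r hU hGU (r := r) (t := t) ⟨hr, ht⟩).unique ?_
      simp only [hG]
      have h := ((hasDerivAt_id r).const_sub R).mul (zcD_r hU hFU (r := r) (t := t) ⟨hr, ht⟩)
      exact h.congr_deriv (by simp)
    have g2 : ∀ r ∈ Ioo 0 R, ∀ t ∈ Ioo t1 t2, zcD (0, 1) G (r, t) = (R - r) * zcD (0, 1) F (r, t) := by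
      intro r hr t ht
      refine (zcD_t hU hGU (r := r) (t := t) ⟨hr, ht⟩).unique ?_
      simp only [hG]
      exact (zcD_t hU hFU (r := r) (t := t) ⟨hr, ht⟩).const_mul _
    have g3 : ∀ r ∈ Ioo 0 R, ∀ t ∈ Ioo t1 t2, zcD (1, 0) (zcD (1, 0) G) (r, t)
        = -2 * zcD (1, 0) F (r, t) + (R - r) * zcD (1, 0) (zcD (1, 0) F) (r, t) := by
      intro r hr t ht
      refine (zcD_r hU (zcD_smooth hU hGU _) (r := r) (t := t) ⟨hr, ht⟩).unique ?_
      have h := (zcD_r hU hFU (r := r) (t := t) ⟨hr, ht⟩).neg.add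
        (((hasDerivAt_id r).const_sub R).mul (zcD_r hU (zcD_smooth hU hFU (1, 0)) (r := r) (t := t) ⟨hr, ht⟩))
      refine (h.congr_deriv ?_).congr_of_eventuallyEq ?_
      · simp; ring
      · filter_upwards [isOpen_Ioo.mem_nhds hr] with q hq
        rw [g1 q hq t ht]; simp
    refine zc_box (p := ((m:ℝ) - 1) / 2) (F := G) (C := Cb + C) hx0 hx0R hε (by linarith) (by linarith)
      (show 0 < (y - x) / 4 by linarith) hε' ht0.2 hGs
      (fun t ht => by rw [hG, ← hFv, hv0 t ht, mul_zero]) (fun t ht => by rw [hG, sub_self, zero_mul]) ?_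
      ?_ ?_
    · intro r hr t ht
      have hr0 := hr.1
      have hw : 0 < R - r := by linarith [hr.2]
      have key := hC r hr _ _ (bF r hr t ht) (bD r hr t ht) (bL r hr t ht)
      have hm' := main r hr t ht
      rw [g2 r hr t (tt t ht), g3 r hr t (tt t ht), g1 r hr t (tt t ht), hG, pde r hr t (tt t ht)]
      generalize zcD (1, 0) (zcD (1, 0) F) (r, t) = f2 at *
      generalize zcD (1, 0) F (r, t) = f1 at *
      generalize F (r, t) = f at *
      rw [show (R - r) * (f2 + ((m:ℝ) - 1) / r * f1 - b r t / r ^ 2 * f) - (-2 * f1 + (R - r) * f2)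
        - 2 * (((m:ℝ) - 1) / 2) / r * (-f + (R - r) * f1) + 2 * (((m:ℝ) - 1) / 2) / r ^ 2 * ((R - r) * f)
        = -((R - r) * ((b r t - ((m:ℝ) - 1)) / r ^ 2 * f)) + (2 * f1 + ((m:ℝ) - 1) * (f / r)) by ring]
      have a1 : |(R - r) * ((b r t - ((m:ℝ) - 1)) / r ^ 2 * f)| ≤ Cb * (|(R - r) * f| / r) := by
        rw [abs_mul, abs_mul (R - r) f, abs_of_pos hw]
        calc (R - r) * |(b r t - ((m:ℝ) - 1)) / r ^ 2 * f| ≤ (R - r) * (Cb * (|f| / r)) := by gcongr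
          _ = _ := by ring
      have a2 : |2 * f1 + ((m:ℝ) - 1) * (f / r)| ≤ 2 * |f1| + ((m:ℝ) - 1) * (|f| / r) := by
        refine (abs_add_le _ _).trans (le_of_eq ?_)
        rw [abs_mul, abs_mul, abs_div, abs_of_pos hr0, abs_of_pos (show (0:ℝ) < 2 by norm_num),
          abs_of_pos (show (0:ℝ) < (m:ℝ) - 1 by linarith)]
      refine (abs_add_le _ _).trans ?_
      rw [abs_neg]
      have a3 : 0 ≤ Cb * |-f + (R - r) * f1| := by positivity
      nlinarith
    · intro t ht
      obtain ⟨r, hr, h⟩ := hne t ht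
      refine ⟨r, hr, ?_⟩
      rw [hG, ← hFv]
      exact mul_ne_zero (by linarith [hr.2]) h
    · intro k
      obtain ⟨K, hK⟩ := van k
      refine ⟨R * K, fun s hs r hr hrx => ?_⟩
      have h := hK s hs r hr hrx
      have hw : 0 < R - r := by linarith [hr.2]
      rw [hG, abs_mul, abs_of_pos hw]
      calc (R - r) * |F (r, t0 - s)| ≤ R * (K * s ^ k) := by
            gcongr; linarith [hr.1]
        _ = _ := by ring

lemma zc_limit {R t0 ε : ℝ} {v : ℝ → ℝ → ℝ} {g : ℝ → ℝ} (hε : 0 < ε)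
    (hg : ContinuousOn g (Ioo (t0 - ε) t0)) (hgR : ∀ t ∈ Ioo (t0 - ε) t0, g t ∈ Icc 0 R)
    (hz : ∀ t ∈ Ioo (t0 - ε) t0, v (g t) t = 0)
    (hc : ∀ r ∈ Icc 0 R, ContinuousAt (fun t => v r t) t0)
    (huc : ∀ x y : ℝ, 0 < x → x < y → y < R → (∀ r ∈ Ioo x y, v r t0 = 0) → False) :
    ∃ L : ℝ, Tendsto g (nhdsWithin t0 (Iio t0)) (nhds L) := by
  have hI : Ioo (t0 - ε) t0 ∈ nhdsWithin t0 (Iio t0) := Ioo_mem_nhdsLT (by linarith)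
  refine tendsto_of_no_upcrossings (s := univ) dense_univ ?_ ?_ ?_
  · rintro x - y - hxy ⟨hx, hy⟩
    have hxe := hx.and_eventually hI
    have hye := hy.and_eventually hI
    obtain ⟨t, h1, h2⟩ := hxe.exists
    obtain ⟨t', h1', h2'⟩ := hye.exists
    have hx0 : 0 < x := lt_of_le_of_lt (hgR t h2).1 h1
    have hyR : y < R := lt_of_lt_of_le h1' (hgR t' h2').2
    refine huc x y hx0 hxy hyR ?_
    intro r hr
    have hfr : ∃ᶠ t in nhdsWithin t0 (Iio t0), v r t = 0 := by
      rw [frequently_iff]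
      intro U hU
      obtain ⟨l, hl, hlU⟩ := (mem_nhdsLT_iff_exists_Ioo_subset' (show t0 - ε < t0 by linarith)).1 hU
      have hl' : l < t0 := hl
      have hV : Ioo (max l (t0 - ε)) t0 ∈ nhdsWithin t0 (Iio t0) :=
        Ioo_mem_nhdsLT (max_lt hl' (by linarith))
      obtain ⟨s, h1, h2⟩ := (hx.and_eventually hV).exists
      obtain ⟨s', h1', h2'⟩ := (hy.and_eventually hV).exists
      have hsub : uIcc s s' ⊆ Ioo (max l (t0 - ε)) t0 := ordConnected_Ioo.uIcc_subset h2 h2'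
      have hsub2 : Ioo (max l (t0 - ε)) t0 ⊆ Ioo (t0 - ε) t0 :=
        Ioo_subset_Ioo_left (le_max_right _ _)
      have hiv := intermediate_value_uIcc (hg.mono (hsub.trans hsub2))
      have hrm : r ∈ uIcc (g s) (g s') := by
        rw [uIcc_of_le (by linarith)]
        exact ⟨by linarith [hr.1], by linarith [hr.2]⟩
      obtain ⟨q, hq, hqr⟩ := hiv hrm
      have hq2 := hsub hq
      refine ⟨q, hlU ⟨lt_of_le_of_lt (le_max_left _ _) hq2.1, hq2.2⟩, ?_⟩
      have := hz q (hsub2 hq2)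
      rwa [hqr] at this
    by_contra hne
    have hca := hc r ⟨by linarith [hr.1], by linarith [hr.2]⟩
    have hev : ∀ᶠ t in nhdsWithin t0 (Iio t0), v r t ≠ 0 :=
      (hca.eventually_ne hne).filter_mono nhdsWithin_le_nhds
    exact (hfr.and_eventually hev).exists.elim (fun t h => h.2 h.1)
  · refine ⟨R, ?_⟩
    rw [eventually_map]
    filter_upwards [hI] with t ht using (hgR t ht).2
  · refine ⟨0, ?_⟩
    rw [eventually_map]
    filter_upwards [hI] with t ht using (hgR t ht).1

lemma zc_local {R t1 t2 t : ℝ} {v : ℝ → ℝ → ℝ}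
    (hvc : ContinuousOn (fun p : ℝ × ℝ => v p.1 p.2) (Icc 0 R ×ˢ Ioo t1 t2)) (ht : t ∈ Ioo t1 t2)
    {x0 ε : ℝ} (hε : 0 < ε) (hx0 : x0 ∈ Ioo 0 R) (h0 : v x0 t = 0)
    (hd : deriv (fun x => v x t) x0 ≠ 0) :
    ∀ᶠ s in nhds t, ∃ w ∈ Icc 0 R, v w s = 0 ∧ |w - x0| < ε := by
  have hda : HasDerivAt (fun x => v x t) (deriv (fun x => v x t) x0) x0 :=
    (differentiableAt_of_deriv_ne_zero hd).hasDerivAt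
  set d := deriv (fun x => v x t) x0 with hdd
  have hsl := (hasDerivAt_iff_tendsto_slope.1 hda).const_mul d
  have hpos : ∀ᶠ y in nhdsWithin x0 {x0}ᶜ, 0 < d * slope (fun x => v x t) x0 y :=
    hsl.eventually_const_lt (mul_self_pos.2 hd)
  have hr : ∀ᶠ y in nhdsWithin x0 (Ioi x0), 0 < d * slope (fun x => v x t) x0 y :=
    hpos.filter_mono (nhdsWithin_mono _ (fun y hy => ne_of_gt hy))
  have hl : ∀ᶠ y in nhdsWithin x0 (Iio x0), 0 < d * slope (fun x => v x t) x0 y :=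
    hpos.filter_mono (nhdsWithin_mono _ (fun y hy => ne_of_lt hy))
  have hr2 : Ioo x0 (min R (x0 + ε)) ∈ nhdsWithin x0 (Ioi x0) :=
    Ioo_mem_nhdsGT (lt_min hx0.2 (by linarith))
  have hl2 : Ioo (max 0 (x0 - ε)) x0 ∈ nhdsWithin x0 (Iio x0) :=
    Ioo_mem_nhdsLT (max_lt hx0.1 (by linarith))
  obtain ⟨y, hy, hyI⟩ := (hr.and hr2).exists
  obtain ⟨x, hx, hxI⟩ := (hl.and hl2).exists
  have hy1 := hyI.1
  have hy2 := lt_min_iff.1 hyI.2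
  have hx1 := hxI.2
  have hx2 := max_lt_iff.1 hxI.1
  simp only [slope_def_field, h0, sub_zero] at hy hx
  have e1 : 0 < d * v y t := by
    have : d * v y t = d * (v y t / (y - x0)) * (y - x0) := by
      have : y - x0 ≠ 0 := by linarith
      field_simp
    rw [this]; exact mul_pos hy (by linarith)
  have e2 : d * v x t < 0 := by
    have : d * v x t = d * (v x t / (x - x0)) * (x - x0) := by
      have : x - x0 ≠ 0 := by linarith
      field_simp
    rw [this]; exact mul_neg_of_pos_of_neg hx (by linarith)
  have hct : ∀ r ∈ Icc 0 R, ContinuousAt (fun s => v r s) t := by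
    intro r hr
    have : ContinuousOn (fun s => v r s) (Ioo t1 t2) :=
      hvc.comp (f := fun s : ℝ => (r, s)) (by fun_prop) (fun s hs => ⟨hr, hs⟩)
    exact this.continuousAt (isOpen_Ioo.mem_nhds ht)
  have hyR : y ∈ Icc 0 R := ⟨by linarith [hx0.1], by linarith⟩
  have hxR : x ∈ Icc 0 R := ⟨by linarith, by linarith [hx0.2]⟩
  have f1 : ∀ᶠ s in nhds t, 0 < d * v y s := ((hct y hyR).const_mul d).eventually_const_lt e1
  have f2 : ∀ᶠ s in nhds t, d * v x s < 0 := ((hct x hxR).const_mul d).eventually_lt_const e2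
  filter_upwards [f1, f2, isOpen_Ioo.mem_nhds ht] with s g1 g2 hs
  have hxy : x ≤ y := by linarith
  have hcr : ContinuousOn (fun r => d * v r s) (Icc x y) := by
    refine ContinuousOn.const_mul ?_ d
    exact hvc.comp (f := fun r : ℝ => (r, s)) (by fun_prop)
      (fun r hr => ⟨⟨hxR.1.trans hr.1, hr.2.trans hyR.2⟩, hs⟩)
  obtain ⟨w, hw, hw0⟩ := intermediate_value_Icc hxy hcr ⟨g2.le, g1.le⟩
  refine ⟨w, ⟨hxR.1.trans hw.1, hw.2.trans hyR.2⟩, ?_, ?_⟩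
  · rcases mul_eq_zero.1 hw0 with h | h
    · exact absurd h hd
    · exact h
  · rw [abs_lt]; constructor <;> linarith [hw.1, hw.2]

lemma zc_cont {n : ℕ} {Z : ℝ → Set ℝ} {I : Set ℝ} (hI : IsOpen I) {e : ℝ → Fin (n + 1) → ℝ}
    (he : ∀ t ∈ I, StrictMono (e t)) (her : ∀ t ∈ I, range (e t) = Z t)
    (hcard : ∀ t ∈ I, (Z t).ncard = n + 1)
    (hloc : ∀ t ∈ I, ∀ x ∈ Z t, ∀ ε > 0, ∀ᶠ s in nhds t, ∃ w ∈ Z s, |w - x| < ε) (i : Fin (n + 1)) :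
    ContinuousOn (fun t => e t i) I := by
  intro t ht
  refine ContinuousAt.continuousWithinAt ?_
  rw [Metric.continuousAt_iff']
  intro ε hε
  obtain ⟨η, ⟨h1, h2⟩, h3⟩ : ∃ η : ℝ, (η < ε ∧ ∀ p : Fin (n + 1) × Fin (n + 1), p.1 < p.2 →
      e t p.1 + η < e t p.2 - η) ∧ 0 < η := by
    have a1 : ∀ᶠ η in nhdsWithin (0:ℝ) (Ioi 0), η < ε :=
      mem_of_superset (Ioo_mem_nhdsGT hε) (fun x hx => hx.2)
    have a2 : ∀ᶠ η in nhdsWithin (0:ℝ) (Ioi 0), ∀ p : Fin (n + 1) × Fin (n + 1), p.1 < p.2 →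
        e t p.1 + η < e t p.2 - η := by
      rw [eventually_all]
      intro p
      by_cases hp : p.1 < p.2
      · have hlt := he t ht hp
        filter_upwards [Ioo_mem_nhdsGT (show 0 < (e t p.2 - e t p.1) / 2 by linarith)] with η hη _
        linarith [hη.2]
      · exact Eventually.of_forall (fun _ h => absurd h hp)
    exact ((a1.and a2).and self_mem_nhdsWithin).exists
  have hev : ∀ᶠ s in nhds t, ∀ j, ∃ w ∈ Z s, |w - e t j| < η := by
    rw [eventually_all]
    intro j
    exact hloc t ht _ (by rw [← her t ht]; exact mem_range_self j) η h3
  filter_upwards [hev, hI.mem_nhds ht] with s hs hsI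
  choose w hwZ hw using hs
  have hwm : StrictMono w := by
    intro a b hab
    have := h2 (a, b) hab
    have ha := abs_lt.1 (hw a)
    have hb := abs_lt.1 (hw b)
    simp only at this
    linarith [ha.2, hb.1]
  have hrange : range w = Z s := by
    have hfin : (Z s).Finite := finite_of_ncard_ne_zero (by rw [hcard s hsI]; omega)
    refine eq_of_subset_of_ncard_le (by rintro _ ⟨j, rfl⟩; exact hwZ j) ?_ hfin
    rw [hcard s hsI, ← image_univ, ncard_image_of_injective _ hwm.injective, ncard_univ]
    simp
  have heq : w = e s := (hwm.range_inj (he s hsI)).1 (by rw [hrange, her s hsI])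
  rw [Real.dist_eq, ← heq]
  exact (hw i).trans h1

theorem zero_curves_exist
    (m : ℕ) (hm : 2 ≤ m) (R t1 t2 : ℝ) (hR : 0 < R) (ht12 : t1 < t2)
    (b v : ℝ → ℝ → ℝ)
    (hb_smooth : ContDiffOn ℝ (⊤ : ℕ∞) (fun p : ℝ × ℝ => b p.1 p.2) (Icc 0 R ×ˢ Ioo t1 t2))
    (hb_bdd : ∃ C : ℝ, ∀ r ∈ Icc (0:ℝ) R, ∀ t ∈ Ioo t1 t2, |b r t| ≤ C)
    (hb_deriv_bdd : ∃ C : ℝ, ∀ r ∈ Icc (0:ℝ) R, ∀ t ∈ Ioo t1 t2,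
      |deriv (fun x => b x t) r| ≤ C ∧ |deriv (fun s => b r s) t| ≤ C)
    (hb0 : ∀ t ∈ Ioo t1 t2, b 0 t = (m : ℝ) - 1)
    (hbr0 : ∀ t ∈ Ioo t1 t2, deriv (fun x => b x t) 0 = 0)
    (hv_smooth : ContDiffOn ℝ (⊤ : ℕ∞) (fun p : ℝ × ℝ => v p.1 p.2) (Icc 0 R ×ˢ Ioo t1 t2))
    (hpde : ∀ r ∈ Ioo (0:ℝ) R, ∀ t ∈ Ioo t1 t2,
      deriv (fun s => v r s) t =
        deriv (deriv (fun x => v x t)) r + (((m : ℝ) - 1) / r) * deriv (fun x => v x t) r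
          - (b r t / r ^ 2) * v r t)
    (hbcR : (∀ t ∈ Ioo t1 t2, v R t = 0) ∨ (∀ t ∈ Ioo t1 t2, v R t ≠ 0))
    (hv0 : ∀ t ∈ Ioo t1 t2, v 0 t = 0)
    (hnz : ¬ ∀ r ∈ Icc (0:ℝ) R, ∀ t ∈ Ioo t1 t2, v r t = 0)
    (t0 : ℝ) (ht0 : t0 ∈ Ioo t1 t2) (n : ℕ) (ε0 : ℝ) (hε0 : 0 < ε0) (hε0' : t1 < t0 - ε0)
    (hsimple : ∀ t ∈ Ioo (t0 - ε0) t0, ∀ r ∈ Icc (0:ℝ) R,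
      v r t = 0 → deriv (fun x => v x t) r ≠ 0)
    (hcard : ∀ t ∈ Ioo (t0 - ε0) t0, {r ∈ Icc (0:ℝ) R | v r t = 0}.ncard = n + 1)
    :
    ∃ ζ : Fin (n + 1) → ℝ → ℝ,
      (∀ i, ContinuousOn (ζ i) (Ioo (t0 - ε0) t0)) ∧
      (∀ i, ∀ t ∈ Ioo (t0 - ε0) t0, ζ i t ∈ Icc (0:ℝ) R) ∧
      (∀ t ∈ Ioo (t0 - ε0) t0, ζ 0 t = 0) ∧
      (∀ t ∈ Ioo (t0 - ε0) t0, ∀ i j : Fin (n + 1), i < j → ζ i t < ζ j t) ∧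
      (∀ t ∈ Ioo (t0 - ε0) t0, {r ∈ Icc (0:ℝ) R | v r t = 0} = Set.range fun i => ζ i t) ∧
      (∀ i, ∃ L : ℝ, Tendsto (ζ i) (nhdsWithin t0 (Iio t0)) (nhds L)) := by
  have sub : ∀ t ∈ Ioo (t0 - ε0) t0, t ∈ Ioo t1 t2 := fun t ht =>
    ⟨by linarith [ht.1], by linarith [ht.2, ht0.2]⟩
  have hvc := hv_smooth.continuousOn
  have hfin : ∀ t ∈ Ioo (t0 - ε0) t0, {r ∈ Icc (0:ℝ) R | v r t = 0}.Finite := fun t ht =>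
    finite_of_ncard_ne_zero (by rw [hcard t ht]; omega)
  have ex : ∀ t, ∃ e : Fin (n + 1) → ℝ, t ∈ Ioo (t0 - ε0) t0 →
      StrictMono e ∧ range e = {r ∈ Icc (0:ℝ) R | v r t = 0} := by
    intro t
    by_cases ht : t ∈ Ioo (t0 - ε0) t0
    · have hc : (hfin t ht).toFinset.card = n + 1 := by
        rw [← ncard_eq_toFinset_card _ (hfin t ht), hcard t ht]
      refine ⟨(hfin t ht).toFinset.orderEmbOfFin hc, fun _ => ⟨OrderEmbedding.strictMono _, ?_⟩⟩
      rw [Finset.range_orderEmbOfFin, Finite.coe_toFinset]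
    · exact ⟨fun _ => 0, fun h => absurd h ht⟩
  choose e he using ex
  have hmem : ∀ t ∈ Ioo (t0 - ε0) t0, ∀ i, e t i ∈ Icc (0:ℝ) R ∧ v (e t i) t = 0 := by
    intro t ht i
    have : e t i ∈ range (e t) := mem_range_self i
    rw [(he t ht).2] at this
    exact this
  have hcont : ∀ i, ContinuousOn (fun t => e t i) (Ioo (t0 - ε0) t0) := by
    refine zc_cont isOpen_Ioo (fun t ht => (he t ht).1) (fun t ht => (he t ht).2) hcard ?_
    rintro t ht x ⟨hx, hx0⟩ ε hε
    rcases eq_or_lt_of_le hx.1 with h | h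
    · filter_upwards [isOpen_Ioo.mem_nhds (sub t ht)] with s hs
      exact ⟨x, ⟨hx, by rw [← h]; exact hv0 s hs⟩, by simpa using hε⟩
    rcases eq_or_lt_of_le hx.2 with h' | h'
    · rcases hbcR with hbc | hbc
      · filter_upwards [isOpen_Ioo.mem_nhds (sub t ht)] with s hs
        exact ⟨x, ⟨hx, by rw [h']; exact hbc s hs⟩, by simpa using hε⟩
      · rw [h'] at hx0
        exact absurd hx0 (hbc t (sub t ht))
    · filter_upwards [zc_local hvc (sub t ht) hε ⟨h, h'⟩ hx0 (hsimple t ht x hx hx0)] with s hs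
      obtain ⟨w, hw, hw0, hwx⟩ := hs
      exact ⟨w, ⟨hw, hw0⟩, hwx⟩
  have hne : ∀ t ∈ Ioo (t0 - ε0) t0, ∃ r ∈ Ioo 0 R, v r t ≠ 0 := by
    intro t ht
    by_contra hcon
    push Not at hcon
    refine (Ioo_infinite hR) ((hfin t ht).subset ?_)
    intro r hr
    exact ⟨⟨hr.1.le, hr.2.le⟩, hcon r hr⟩
  refine ⟨fun i t => e t i, hcont, fun i t ht => (hmem t ht i).1, ?_, ?_, ?_, ?_⟩
  · intro t ht
    have h0 : (0:ℝ) ∈ range (e t) := by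
      rw [(he t ht).2]; exact ⟨⟨le_rfl, hR.le⟩, hv0 t (sub t ht)⟩
    obtain ⟨j, hj⟩ := h0
    have h1 : e t 0 ≤ e t j := (he t ht).1.monotone (Fin.zero_le j)
    have h2 := (hmem t ht 0).1.1
    simp only
    linarith
  · intro t ht i j hij
    exact (he t ht).1 hij
  · intro t ht
    exact (he t ht).2.symm
  · intro i
    refine zc_limit (v := v) hε0 (hcont i) (fun t ht => (hmem t ht i).1) (fun t ht => (hmem t ht i).2) ?_ ?_
    · intro r hr
      have : ContinuousOn (fun s => v r s) (Ioo t1 t2) :=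
        hvc.comp (f := fun s : ℝ => (r, s)) (by fun_prop) (fun s hs => ⟨hr, hs⟩)
      exact this.continuousAt (isOpen_Ioo.mem_nhds ht0)
    · intro x y hx hxy hy hvan
      exact zc_uc m hm hR hb_smooth hb0 hv_smooth hpde hbcR hv0 ht0 hε0 hε0' hne hx hxy hy hvan
end

section
/- Lemma 2.5(iii): Let v be a classical solution of v_t = v_rr + ((m−1)/r) v_r − (b(r,t)/r²) v on [0,R] × (t1,t2), not identically zero, satisfying the boundary condition (1.5) and v(0,t) = 0 for all t ∈ (t1,t2). Let t0 ∈ (t1,t2), let ε0 > 0 be such that for every t ∈ (t0 − ε0, t0) all zeros of v(·,t) are simple and Z(v(·,t)) = n+1, and let ζ_0 ≡ 0, ζ_1, ..., ζ_n : (t0 − ε0, t0) → [0,R] be the continuous zero curves with ζ_0(t) < ζ_1(t) < ... < ζ_n(t) exhausting the zero set of v(·,t), each having a limit ζ_i(t0) as t → t0⁻. Then Z(v(·,t0)) < ∞; more precisely, {r ∈ [0,R] : v(r,t0) = 0} = {ζ_i(t0) : 0 ≤ i ≤ n}. -/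
open Set Filter

lemma aux_second_deriv {f f1 : ℝ → ℝ} {x f2 : ℝ}
    (h1 : ∀ᶠ y in nhds x, HasDerivAt f (f1 y) y) (h2 : HasDerivAt f1 f2 x)
    (hmin : IsLocalMin f x) : 0 ≤ f2 := by
  by_contra hneg
  push Not at hneg
  have hd : deriv f =ᶠ[nhds x] f1 := h1.mono fun y hy => hy.deriv
  have hdd : deriv (deriv f) x = f2 := by rw [hd.deriv_eq]; exact h2.deriv
  have hmax : IsLocalMax f x := by
    apply isLocalMax_of_deriv_deriv_neg
    · rw [hdd]; exact hneg
    · exact hmin.deriv_eq_zero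
    · exact h1.self_of_nhds.continuousAt
  have hc : f =ᶠ[nhds x] fun _ => f x := by
    filter_upwards [hmin, hmax] with y a b
    exact le_antisymm b a
  have h0 : deriv f =ᶠ[nhds x] deriv (fun _ => f x) := hc.deriv
  have : deriv (deriv f) x = 0 := by
    rw [h0.deriv_eq]; simp
  rw [hdd] at this
  linarith

lemma aux_left_deriv {f : ℝ → ℝ} {f' s t : ℝ} (hst : s < t) (h : HasDerivAt f f' t)
    (hmin : ∀ y ∈ Icc s t, f t ≤ f y) : f' ≤ 0 := by
  have h1 := h.hasDerivWithinAt (s := Iio t)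
  have h2 := (hasDerivWithinAt_iff_tendsto_slope' (s := Iio t) (by simp)).1 h1
  refine le_of_tendsto h2 ?_
  have : Ioo s t ∈ nhdsWithin t (Iio t) := Ioo_mem_nhdsLT hst
  filter_upwards [this] with y hy
  rw [slope_def_field]
  have := hmin y ⟨hy.1.le, hy.2.le⟩
  exact div_nonpos_of_nonneg_of_nonpos (by linarith) (by linarith [hy.2])

lemma aux_alg {d L Q P x x0 E y W U Ut Ux Uxx p q : ℝ} (hd : 0 < d) (hLQ : 0 < L - Q)
    (hL : (12 + 4 * d * P)^2 < 32 * d^2 * (L - Q)) (hP0 : 0 ≤ P) (hEp : 0 < E)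
    (hxm : x ∈ Icc (x0 - d) (x0 + d)) (hy : y = d^2 - (x - x0)^2)
    (hwv : W = U - E * y^2) (hneg : W < 0)
    (h1' : Ut + L * (E * y^2) ≤ Q * W)
    (h2 : 0 ≤ Uxx - E * (-4 * y + 8 * (x - x0)^2))
    (h3 : Ux - E * (-4 * (x - x0) * y) = 0)
    (h4 : Ut = Uxx + p * Ux + q * U) (h5 : -P ≤ p ∧ p ≤ P) (h6 : -Q ≤ q ∧ q ≤ Q) : False := by
  have hy0 : 0 ≤ y := by rw [hy]; nlinarith [hxm.1, hxm.2]
  have h7 : (Q - q) * W ≤ 0 :=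
    mul_nonpos_of_nonneg_of_nonpos (by linarith [h6.2]) hneg.le
  have h8 : Ux = E * (-4 * (x - x0) * y) := by linarith
  have hqw : q * W = q * U - q * (E * y^2) := by rw [hwv]; ring
  have h9 : E * ((-4 * y + 8 * (x-x0)^2) + p * (-4 * (x - x0) * y)
      + (q + L) * y^2) ≤ 0 := by
    rw [h8] at h4
    have e : E * ((-4 * y + 8 * (x-x0)^2) + p * (-4 * (x - x0) * y) + (q + L) * y^2)
      = E * (-4 * y + 8 * (x-x0)^2) + p * (E * (-4 * (x - x0) * y)) + q * (E * y^2)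
        + L * (E * y^2) := by ring
    have e2 : (Q - q) * W = Q * W - q * W := by ring
    rw [e]
    linarith
  have h10 : (-4 * y + 8 * (x-x0)^2) + p * (-4 * (x - x0) * y) + (q + L) * y^2 ≤ 0 := by
    by_contra hh
    push Not at hh
    linarith [mul_pos hEp hh]
  have h11 : p * (x - x0) ≤ P * d := by
    calc p * (x - x0) ≤ |p * (x - x0)| := le_abs_self _
      _ = |p| * |x - x0| := abs_mul _ _
      _ ≤ P * d := mul_le_mul (abs_le.2 h5) (abs_le.2 ⟨by linarith [hxm.1], by linarith [hxm.2]⟩)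
          (abs_nonneg _) hP0
  have h12 := mul_le_mul_of_nonneg_right h11 hy0
  have h13 : (x - x0)^2 = d^2 - y := by rw [hy]; ring
  have h14 : (L - Q) * y^2 ≤ (q + L) * y^2 :=
    mul_le_mul_of_nonneg_right (by linarith [h6.1]) (sq_nonneg y)
  have h15 : (L - Q) * y^2 - (12 + 4 * d * P) * y + 8 * d^2 ≤ 0 := by
    rw [h13] at h10
    have e : p * (-4 * (x - x0) * y) = -4 * (p * (x - x0) * y) := by ring
    rw [e] at h10
    linarith
  have h16 := mul_nonneg hLQ.le (neg_nonneg.2 h15)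
  nlinarith [sq_nonneg (2 * (L - Q) * y - (12 + 4 * d * P))]

lemma aux_strong_min (x0 d s T P Q : ℝ) (hd : 0 < d) (hsT : s < T)
    (u ut ux uxx p q : ℝ → ℝ → ℝ)
    (hc : ContinuousOn (fun z : ℝ × ℝ => u z.1 z.2) (Icc (x0 - d) (x0 + d) ×ˢ Icc s T))
    (ht : ∀ x ∈ Ioo (x0 - d) (x0 + d), ∀ t ∈ Ioc s T, HasDerivAt (fun t => u x t) (ut x t) t)
    (hx : ∀ x ∈ Ioo (x0 - d) (x0 + d), ∀ t ∈ Ioc s T, HasDerivAt (fun x => u x t) (ux x t) x)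
    (hxx : ∀ x ∈ Ioo (x0 - d) (x0 + d), ∀ t ∈ Ioc s T, HasDerivAt (fun x => ux x t) (uxx x t) x)
    (hpde : ∀ x ∈ Ioo (x0 - d) (x0 + d), ∀ t ∈ Ioc s T,
      ut x t = uxx x t + p x t * ux x t + q x t * u x t)
    (hp : ∀ x ∈ Ioo (x0 - d) (x0 + d), ∀ t ∈ Ioc s T, |p x t| ≤ P)
    (hq : ∀ x ∈ Ioo (x0 - d) (x0 + d), ∀ t ∈ Ioc s T, |q x t| ≤ Q)
    (hnn : ∀ x ∈ Icc (x0 - d) (x0 + d), ∀ t ∈ Icc s T, 0 ≤ u x t)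
    (hpos : ∀ x ∈ Icc (x0 - d) (x0 + d), 0 < u x s) : 0 < u x0 T := by
  have hx0m : x0 ∈ Ioo (x0 - d) (x0 + d) := ⟨by linarith, by linarith⟩
  have hTm : T ∈ Ioc s T := ⟨hsT, le_rfl⟩
  have hQ0 : 0 ≤ Q := (abs_nonneg _).trans (hq x0 hx0m T hTm)
  have hP0 : 0 ≤ P := (abs_nonneg _).trans (hp x0 hx0m T hTm)
  -- lower bound at the initial time
  obtain ⟨k, hk, hkb⟩ : ∃ k > 0, ∀ x ∈ Icc (x0 - d) (x0 + d), k * (d^2)^2 ≤ u x s := by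
    have hcs : ContinuousOn (fun x => u x s) (Icc (x0 - d) (x0 + d)) :=
      hc.comp (f := fun x => (x, s)) (by fun_prop) (fun x hx => ⟨hx, le_rfl, hsT.le⟩)
    obtain ⟨y, hy, hmin⟩ := isCompact_Icc.exists_isMinOn ⟨x0, hx0m.1.le, hx0m.2.le⟩ hcs
    refine ⟨u y s / (d^2)^2, div_pos (hpos y hy) (by positivity), fun x hx => ?_⟩
    rw [div_mul_cancel₀ _ (by positivity)]
    exact hmin hx
  -- the constants
  obtain ⟨L, hL⟩ : ∃ L : ℝ, (12 + 4 * d * P)^2 < 32 * d^2 * (L - Q) := by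
    refine ⟨Q + ((12 + 4 * d * P)^2 + 1) / (32 * d^2), ?_⟩
    have : 32 * d^2 * (Q + ((12 + 4 * d * P)^2 + 1) / (32 * d^2) - Q)
        = (12 + 4 * d * P)^2 + 1 := by field_simp; ring
    linarith
  have hLQ : 0 < L - Q := by
    by_contra hh
    push Not at hh
    nlinarith [sq_nonneg (12 + 4 * d * P), sq_nonneg d,
      mul_nonneg (sq_nonneg d) (neg_nonneg.2 hh)]
  set w : ℝ → ℝ → ℝ := fun x t =>
    u x t - k * Real.exp (-(L * (t - s))) * (d^2 - (x - x0)^2)^2 with hw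
  set G : ℝ × ℝ → ℝ := fun z => Real.exp (-(Q * (z.2 - s))) * w z.1 z.2 with hG
  have hGc : ContinuousOn G (Icc (x0 - d) (x0 + d) ×ˢ Icc s T) := by
    apply ContinuousOn.mul (by fun_prop)
    exact hc.sub (by fun_prop)
  obtain ⟨⟨x, t⟩, ⟨hxm, htm⟩, hmin⟩ := (isCompact_Icc.prod isCompact_Icc).exists_isMinOn
    ⟨(x0, T), ⟨hx0m.1.le, hx0m.2.le⟩, hsT.le, le_rfl⟩ hGc
  simp only at hxm htm
  have key : 0 ≤ w x t := by
    by_contra hneg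
    push Not at hneg
    have hwu : u x t < k * Real.exp (-(L * (t - s))) * (d^2 - (x - x0)^2)^2 := by
      simp only [hw] at hneg; linarith
    have hE : 0 < Real.exp (-(L * (t - s))) := Real.exp_pos _
    have hE2 : 0 < Real.exp (-(Q * (t - s))) := Real.exp_pos _
    have hts : t ≠ s := by
      rintro rfl
      have h1 := hkb x hxm
      simp only [sub_self, mul_zero, neg_zero, Real.exp_zero, mul_one] at hwu
      have hy0 : 0 ≤ d^2 - (x - x0)^2 := by nlinarith [hxm.1, hxm.2]
      have : (d^2 - (x - x0)^2)^2 ≤ (d^2)^2 :=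
        pow_le_pow_left₀ hy0 (by linarith [sq_nonneg (x - x0)]) 2
      nlinarith
    have hu0 := hnn x hxm t htm
    have hxa : x ≠ x0 - d := by
      rintro rfl
      have : d^2 - (x0 - d - x0)^2 = 0 := by ring
      rw [this] at hwu
      simp at hwu; linarith
    have hxb : x ≠ x0 + d := by
      rintro rfl
      have : d^2 - (x0 + d - x0)^2 = 0 := by ring
      rw [this] at hwu
      simp at hwu; linarith
    have hxo : x ∈ Ioo (x0 - d) (x0 + d) :=
      ⟨lt_of_le_of_ne hxm.1 (Ne.symm hxa), lt_of_le_of_ne hxm.2 hxb⟩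
    have hto : t ∈ Ioc s T := ⟨lt_of_le_of_ne htm.1 (Ne.symm hts), htm.2⟩
    -- time derivative
    have hwt : HasDerivAt (fun t => w x t)
        (ut x t + L * (k * Real.exp (-(L * (t - s))) * (d^2 - (x - x0)^2)^2)) t := by
      have e1 : HasDerivAt (fun t : ℝ => -(L * (t - s))) (-(L * 1)) t :=
        (((hasDerivAt_id t).sub_const s).const_mul L).neg
      have := (ht x hxo t hto).sub ((e1.exp.const_mul k).mul_const ((d^2 - (x - x0)^2)^2))
      refine this.congr_deriv ?_
      ring
    have hGt : HasDerivAt (fun t => G (x, t))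
        (Real.exp (-(Q * (t - s))) * (-(Q * 1)) * w x t + Real.exp (-(Q * (t - s))) *
          (ut x t + L * (k * Real.exp (-(L * (t - s))) * (d^2 - (x - x0)^2)^2))) t := by
      have e1 : HasDerivAt (fun t : ℝ => -(Q * (t - s))) (-(Q * 1)) t :=
        (((hasDerivAt_id t).sub_const s).const_mul Q).neg
      exact e1.exp.mul hwt
    have h1 := aux_left_deriv hto.1 hGt
      (fun y hy => hmin (a := (x, y)) ⟨hxm, hy.1, hy.2.trans hto.2⟩)
    have h1' : ut x t + L * (k * Real.exp (-(L * (t - s))) * (d^2 - (x - x0)^2)^2)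
        ≤ Q * w x t := by
      by_contra hh
      push Not at hh
      nlinarith [mul_pos hE2 (sub_pos.2 hh)]
    -- space derivatives
    have hwx : ∀ y ∈ Ioo (x0 - d) (x0 + d), HasDerivAt (fun y => w y t)
        (ux y t - k * Real.exp (-(L * (t - s))) *
          (-4 * (y - x0) * (d^2 - (y - x0)^2))) y := by
      intro y hy
      have e1 : HasDerivAt (fun y : ℝ => (d^2 - (y - x0)^2)^2)
          (-4 * (y - x0) * (d^2 - (y - x0)^2)) y := by
        have := ((((hasDerivAt_id y).sub_const x0).pow 2).const_sub (d^2)).pow 2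
        refine this.congr_deriv ?_
        simp; ring
      exact (hx y hy t hto).sub (e1.const_mul _)
    have hwxx : HasDerivAt (fun y => ux y t - k * Real.exp (-(L * (t - s))) *
          (-4 * (y - x0) * (d^2 - (y - x0)^2)))
        (uxx x t - k * Real.exp (-(L * (t - s))) *
          (-4 * (d^2 - (x - x0)^2) + 8 * (x - x0)^2)) x := by
      have e1 : HasDerivAt (fun y : ℝ => -4 * (y - x0) * (d^2 - (y - x0)^2))
          (-4 * (d^2 - (x - x0)^2) + 8 * (x - x0)^2) x := by
        have := (((hasDerivAt_id x).sub_const x0).const_mul (-4)).mul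
          ((((hasDerivAt_id x).sub_const x0).pow 2).const_sub (d^2))
        refine this.congr_deriv ?_
        simp; ring
      exact (hxx x hxo t hto).sub (e1.const_mul _)
    have hnb : ∀ᶠ y in nhds x, y ∈ Ioo (x0 - d) (x0 + d) := Ioo_mem_nhds hxo.1 hxo.2
    have hloc : IsLocalMin (fun y => w y t) x := by
      filter_upwards [hnb] with y hy
      have := hmin (a := (y, t)) ⟨⟨hy.1.le, hy.2.le⟩, htm⟩
      exact le_of_mul_le_mul_left this hE2
    have h2 := aux_second_deriv (hnb.mono hwx) hwxx hloc
    have h3 := hloc.hasDerivAt_eq_zero (hwx x hxo)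
    have h4 := hpde x hxo t hto
    have h5 := abs_le.1 (hp x hxo t hto)
    have h6 := abs_le.1 (hq x hxo t hto)
    exact aux_alg hd hLQ hL hP0 (mul_pos hk hE) hxm rfl rfl hneg h1' h2 h3 h4 h5 h6
  have hfin := hmin (a := (x0, T)) ⟨⟨hx0m.1.le, hx0m.2.le⟩, hsT.le, le_rfl⟩
  have hG0 : 0 ≤ G (x, t) := mul_nonneg (Real.exp_pos _).le key
  have hG1 : 0 ≤ G (x0, T) := hG0.trans hfin
  have hw1 : 0 ≤ w x0 T := by
    by_contra hh
    push Not at hh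
    have := mul_neg_of_pos_of_neg (Real.exp_pos (-(Q * (T - s)))) hh
    simp only [hG] at hG1
    linarith
  simp only [hw, sub_self] at hw1
  have : 0 < k * Real.exp (-(L * (T - s))) * (d^2 - 0^2)^2 := by
    have : d^2 - 0^2 = d^2 := by ring
    rw [this]
    have := Real.exp_pos (-(L * (T - s)))
    positivity
  linarith

theorem zero_set_at_limit_time
    (m : ℕ) (hm : 2 ≤ m) (R t1 t2 : ℝ) (hR : 0 < R) (ht12 : t1 < t2)
    (b v : ℝ → ℝ → ℝ)
    (hb_smooth : ContDiffOn ℝ (⊤ : ℕ∞) (fun p : ℝ × ℝ => b p.1 p.2) (Icc 0 R ×ˢ Ioo t1 t2))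
    (hb_bdd : ∃ C : ℝ, ∀ r ∈ Icc (0:ℝ) R, ∀ t ∈ Ioo t1 t2, |b r t| ≤ C)
    (hb_deriv_bdd : ∃ C : ℝ, ∀ r ∈ Icc (0:ℝ) R, ∀ t ∈ Ioo t1 t2,
      |deriv (fun x => b x t) r| ≤ C ∧ |deriv (fun s => b r s) t| ≤ C)
    (hb0 : ∀ t ∈ Ioo t1 t2, b 0 t = (m : ℝ) - 1)
    (hbr0 : ∀ t ∈ Ioo t1 t2, deriv (fun x => b x t) 0 = 0)
    (hv_smooth : ContDiffOn ℝ (⊤ : ℕ∞) (fun p : ℝ × ℝ => v p.1 p.2) (Icc 0 R ×ˢ Ioo t1 t2))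
    (hpde : ∀ r ∈ Ioo (0:ℝ) R, ∀ t ∈ Ioo t1 t2,
      deriv (fun s => v r s) t =
        deriv (deriv (fun x => v x t)) r + (((m : ℝ) - 1) / r) * deriv (fun x => v x t) r
          - (b r t / r ^ 2) * v r t)
    (hbcR : (∀ t ∈ Ioo t1 t2, v R t = 0) ∨ (∀ t ∈ Ioo t1 t2, v R t ≠ 0))
    (hv0 : ∀ t ∈ Ioo t1 t2, v 0 t = 0)
    (hnz : ¬ ∀ r ∈ Icc (0:ℝ) R, ∀ t ∈ Ioo t1 t2, v r t = 0)
    (t0 : ℝ) (ht0 : t0 ∈ Ioo t1 t2) (n : ℕ) (ε0 : ℝ) (hε0 : 0 < ε0) (hε0' : t1 < t0 - ε0)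
    (hsimple : ∀ t ∈ Ioo (t0 - ε0) t0, ∀ r ∈ Icc (0:ℝ) R,
      v r t = 0 → deriv (fun x => v x t) r ≠ 0)
    (hcard : ∀ t ∈ Ioo (t0 - ε0) t0, {r ∈ Icc (0:ℝ) R | v r t = 0}.ncard = n + 1)
    (ζ : Fin (n + 1) → ℝ → ℝ) (ζlim : Fin (n + 1) → ℝ)
    (hζ_cont : ∀ i, ContinuousOn (ζ i) (Ioo (t0 - ε0) t0))
    (hζ_mem : ∀ i, ∀ t ∈ Ioo (t0 - ε0) t0, ζ i t ∈ Icc (0:ℝ) R)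
    (hζ_zero : ∀ t ∈ Ioo (t0 - ε0) t0, ζ 0 t = 0)
    (hζ_mono : ∀ t ∈ Ioo (t0 - ε0) t0, ∀ i j : Fin (n + 1), i < j → ζ i t < ζ j t)
    (hζ_range : ∀ t ∈ Ioo (t0 - ε0) t0, {r ∈ Icc (0:ℝ) R | v r t = 0} = Set.range fun i => ζ i t)
    (hζ_lim : ∀ i, Tendsto (ζ i) (nhdsWithin t0 (Iio t0)) (nhds (ζlim i)))
    :
    {r ∈ Icc (0:ℝ) R | v r t0 = 0}.Finite ∧
    {r ∈ Icc (0:ℝ) R | v r t0 = 0} = Set.range ζlim := by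
  have hslice : ∀ r ∈ Icc (0:ℝ) R, ContinuousOn (fun t => v r t) (Ioo t1 t2) := fun r hr =>
    hv_smooth.continuousOn.comp (f := fun t => (r, t)) (by fun_prop) (fun t ht => ⟨hr, ht⟩)
  have hIoo : Ioo (t0 - ε0) t0 ∈ nhdsWithin t0 (Iio t0) := Ioo_mem_nhdsLT (by linarith)
  have hsub : ∀ t ∈ Ioo (t0 - ε0) t0, t ∈ Ioo t1 t2 := fun t ht =>
    ⟨by linarith [ht.1], by linarith [ht.2, ht0.2]⟩
  have hmemlim : ∀ i, ζlim i ∈ Icc (0:ℝ) R := fun i =>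
    isClosed_Icc.mem_of_tendsto (hζ_lim i) (by
      filter_upwards [hIoo] with t ht using hζ_mem i t ht)
  have hzlim : ∀ i, v (ζlim i) t0 = 0 := by
    intro i
    have h1 : Tendsto (fun t => (ζ i t, t)) (nhdsWithin t0 (Iio t0))
        (nhdsWithin (ζlim i, t0) (Icc 0 R ×ˢ Ioo t1 t2)) := by
      rw [tendsto_nhdsWithin_iff]
      refine ⟨(hζ_lim i).prodMk_nhds (tendsto_id.mono_left nhdsWithin_le_nhds), ?_⟩
      filter_upwards [hIoo] with t ht using ⟨hζ_mem i t ht, hsub t ht⟩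
    have h2 := (hv_smooth.continuousOn (ζlim i, t0) ⟨hmemlim i, ht0⟩).tendsto.comp h1
    refine tendsto_nhds_unique h2 (tendsto_const_nhds.congr' ?_)
    filter_upwards [hIoo] with t ht
    have : ζ i t ∈ {r ∈ Icc (0:ℝ) R | v r t = 0} := by
      rw [hζ_range t ht]; exact ⟨i, rfl⟩
    exact this.2.symm
  have heq : {r ∈ Icc (0:ℝ) R | v r t0 = 0} = Set.range ζlim := by
    apply Subset.antisymm
    swap
    · rintro _ ⟨i, rfl⟩
      exact ⟨hmemlim i, hzlim i⟩
    rintro r0 ⟨hr0, hvr0⟩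
    by_contra hnot
    -- `r0` is not the left endpoint
    have hr0pos : 0 < r0 := by
      refine lt_of_le_of_ne hr0.1 ?_
      rintro rfl
      apply hnot
      refine ⟨0, tendsto_nhds_unique (hζ_lim 0) (tendsto_const_nhds.congr' ?_)⟩
      filter_upwards [hIoo] with t ht using (hζ_zero t ht).symm
    have hr0R : r0 < R := by
      refine lt_of_le_of_ne hr0.2 ?_
      rintro rfl
      rcases hbcR with h | h
      swap
      · exact h t0 ht0 hvr0
      -- each time has some index at the endpoint
      have hev : ∀ᶠ t in nhdsWithin t0 (Iio t0), ζ (Fin.last n) t = r0 := by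
        filter_upwards [hIoo] with t ht
        have : r0 ∈ {r ∈ Icc (0:ℝ) r0 | v r t = 0} := ⟨hr0, h t (hsub t ht)⟩
        rw [hζ_range t ht] at this
        obtain ⟨i, hi⟩ := this
        simp only at hi
        rcases eq_or_lt_of_le (Fin.le_last i) with h' | h'
        · rw [← h']; exact hi
        · have := hζ_mono t ht i _ h'
          have := (hζ_mem (Fin.last n) t ht).2
          linarith
      exact hnot ⟨Fin.last n, tendsto_nhds_unique (hζ_lim _)
        (tendsto_const_nhds.congr' (hev.mono fun t ht => ht.symm))⟩
    -- a neighbourhood free of limit points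
    have hnb : (Set.range ζlim)ᶜ ∈ nhds r0 :=
      (Set.finite_range ζlim).isClosed.isOpen_compl.mem_nhds hnot
    obtain ⟨e, he, hball⟩ := Metric.mem_nhds_iff.1 hnb
    obtain ⟨d, hd, hd1, hd2, hd3⟩ : ∃ d > 0, 2 * d < e ∧ 2 * d ≤ r0 ∧ r0 + 2 * d ≤ R := by
      refine ⟨min (e / 3) (min (r0 / 2) ((R - r0) / 2)), ?_, ?_, ?_, ?_⟩
      · have : 0 < R - r0 := by linarith
        positivity
      · have := min_le_left (e / 3) (min (r0 / 2) ((R - r0) / 2)); linarith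
      · have := (min_le_right (e / 3) (min (r0 / 2) ((R - r0) / 2))).trans (min_le_left _ _)
        linarith
      · have := (min_le_right (e / 3) (min (r0 / 2) ((R - r0) / 2))).trans (min_le_right _ _)
        linarith
    have hev : ∀ᶠ t in nhdsWithin t0 (Iio t0), ∀ i, |ζ i t - ζlim i| < d :=
      Filter.eventually_all.2 fun i => by
        have := Metric.tendsto_nhds.1 (hζ_lim i) d hd
        simpa [Real.dist_eq] using this
    obtain ⟨l, hl, hlsub⟩ := (mem_nhdsLT_iff_exists_Ioo_subset).1 (inter_mem hev hIoo)
    have hl : l < t0 := hl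
    obtain ⟨s, hls, hst⟩ := exists_between hl
    have hIcR : ∀ x ∈ Icc (r0 - d) (r0 + d), x ∈ Ioo (0:ℝ) R := fun x hx =>
      ⟨by linarith [hx.1], by linarith [hx.2]⟩
    have hIcT : ∀ t ∈ Icc s t0, t ∈ Ioo t1 t2 := by
      intro t ht
      rcases eq_or_lt_of_le ht.2 with h | h
      · rw [h]; exact ht0
      · exact hsub t (hlsub ⟨by linarith [ht.1], h⟩).2
    have hne : ∀ x ∈ Icc (r0 - d) (r0 + d), ∀ t ∈ Ico s t0, v x t ≠ 0 := by
      intro x hx t ht h0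
      obtain ⟨ha, hb⟩ := hlsub (show t ∈ Ioo l t0 from ⟨by linarith [ht.1], ht.2⟩)
      have hm : x ∈ {r ∈ Icc (0:ℝ) R | v r t = 0} :=
        ⟨⟨(hIcR x hx).1.le, (hIcR x hx).2.le⟩, h0⟩
      rw [hζ_range t hb] at hm
      obtain ⟨i, hi⟩ := hm
      simp only at hi
      have h1 := abs_lt.1 (ha i)
      rw [hi] at h1
      have : ζlim i ∈ Metric.ball r0 e := by
        rw [Metric.mem_ball, Real.dist_eq, abs_lt]
        constructor <;> linarith [h1.1, h1.2, hx.1, hx.2]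
      exact hball this ⟨i, rfl⟩
    have hcQ : ContinuousOn (fun z : ℝ × ℝ => v z.1 z.2)
        (Icc (r0 - d) (r0 + d) ×ˢ Icc s t0) :=
      hv_smooth.continuousOn.mono (prod_mono
        (fun x hx => ⟨(hIcR x hx).1.le, (hIcR x hx).2.le⟩) hIcT)
    have hr0m : r0 ∈ Icc (r0 - d) (r0 + d) := ⟨by linarith, by linarith⟩
    -- a sign making the solution positive
    obtain ⟨σ, hσ⟩ : ∃ σ : ℝ, ∀ x ∈ Icc (r0 - d) (r0 + d), ∀ t ∈ Ico s t0, 0 < σ * v x t := by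
      refine ⟨v r0 s, fun x hx t ht => ?_⟩
      have hpc : IsPreconnected (Icc (r0 - d) (r0 + d) ×ˢ Ico s t0) :=
        isPreconnected_Icc.prod isPreconnected_Ico
      have hcc : ContinuousOn (fun z : ℝ × ℝ => v r0 s * v z.1 z.2)
          (Icc (r0 - d) (r0 + d) ×ˢ Ico s t0) :=
        continuousOn_const.mul (hcQ.mono (prod_mono Subset.rfl Ico_subset_Icc_self))
      have hsm : s ∈ Ico s t0 := ⟨le_rfl, hst⟩
      by_contra hh
      push Not at hh
      have hiv := hpc.intermediate_value (a := (x, t)) (b := (r0, s)) ⟨hx, ht⟩ ⟨hr0m, hsm⟩ hcc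
      obtain ⟨z, hz, hz0⟩ := hiv (show (0:ℝ) ∈ Icc _ _ from ⟨hh, mul_self_nonneg _⟩)
      rcases mul_eq_zero.1 hz0 with h | h
      · exact hne r0 hr0m s hsm h
      · exact hne z.1 hz.1 z.2 hz.2 h
    obtain ⟨C, hC⟩ := hb_bdd
    have hC0 : 0 ≤ C := (abs_nonneg _).trans (hC r0 hr0 t0 ht0)
    have hIoR : ∀ x ∈ Ioo (r0 - d) (r0 + d), x ∈ Ioo (0:ℝ) R := fun x hx =>
      hIcR x ⟨hx.1.le, hx.2.le⟩
    have hIoT : ∀ t ∈ Ioc s t0, t ∈ Ioo t1 t2 := fun t ht => hIcT t ⟨ht.1.le, ht.2⟩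
    have hsm : ∀ x ∈ Ioo (0:ℝ) R, ∀ t ∈ Ioo t1 t2,
        ContDiffAt ℝ (⊤ : ℕ∞) (fun p : ℝ × ℝ => v p.1 p.2) (x, t) := fun x hx t ht =>
      hv_smooth.contDiffAt (prod_mem_nhds (Icc_mem_nhds hx.1 hx.2) (Ioo_mem_nhds ht.1 ht.2))
    have hsx : ∀ x ∈ Ioo (0:ℝ) R, ∀ t ∈ Ioo t1 t2,
        ContDiffAt ℝ (⊤ : ℕ∞) (fun y => v y t) x := fun x hx t ht =>
      (hsm x hx t ht).comp (f := fun y => (y, t)) x (by fun_prop)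
    have hst' : ∀ x ∈ Ioo (0:ℝ) R, ∀ t ∈ Ioo t1 t2,
        ContDiffAt ℝ (⊤ : ℕ∞) (fun y => v x y) t := fun x hx t ht =>
      (hsm x hx t ht).comp (f := fun y => (x, y)) t (by fun_prop)
    have hm1 : (0:ℝ) ≤ (m:ℝ) - 1 := by
      have : (2:ℝ) ≤ m := by exact_mod_cast hm
      linarith
    have hfinal := aux_strong_min r0 d s t0 (((m:ℝ) - 1) / d) (C / d^2) hd hst
      (fun x t => σ * v x t) (fun x t => σ * deriv (fun s => v x s) t)
      (fun x t => σ * deriv (fun y => v y t) x)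
      (fun x t => σ * deriv (deriv (fun y => v y t)) x)
      (fun x _ => ((m:ℝ) - 1) / x) (fun x t => -(b x t / x^2))
      (continuousOn_const.mul hcQ)
      (fun x hx t ht => ((hst' x (hIoR x hx) t (hIoT t ht)).differentiableAt
        (by simp)).hasDerivAt.const_mul σ)
      (fun x hx t ht => ((hsx x (hIoR x hx) t (hIoT t ht)).differentiableAt
        (by simp)).hasDerivAt.const_mul σ)
      (fun x hx t ht => by
        have h2 : ContDiffAt ℝ (⊤ : ℕ∞) (deriv (fun y => v y t)) x :=
          (hsx x (hIoR x hx) t (hIoT t ht)).derivWithin (le_of_eq rfl)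
        exact (h2.differentiableAt (by simp)).hasDerivAt.const_mul σ)
      (fun x hx t ht => by
        rw [hpde x (hIoR x hx) t (hIoT t ht)]; ring)
      (fun x hx t ht => by
        have hxd : d ≤ x := by linarith [hx.1]
        rw [abs_of_nonneg (div_nonneg hm1 (by linarith))]
        exact div_le_div_of_nonneg_left hm1 hd hxd)
      (fun x hx t ht => by
        have hxd : d ≤ x := by linarith [hx.1]
        have hx' := hIoR x hx
        rw [abs_neg, abs_div, abs_of_nonneg (sq_nonneg x)]
        exact div_le_div₀ hC0 (hC x ⟨hx'.1.le, hx'.2.le⟩ t (hIoT t ht)) (by positivity)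
          (pow_le_pow_left₀ hd.le hxd 2))
      (fun x hx t ht => by
        rcases eq_or_lt_of_le ht.2 with h | h
        swap
        · exact (hσ x hx t ⟨ht.1, h⟩).le
        subst h
        have hca : ContinuousAt (fun t => σ * v x t) t :=
          continuousAt_const.mul (hst' x (hIcR x hx) t ht0).continuousAt
        refine ge_of_tendsto (hca.tendsto.mono_left (nhdsWithin_le_nhds (s := Iio t))) ?_
        filter_upwards [Ioo_mem_nhdsLT hst] with y hy
        exact (hσ x hx y ⟨hy.1.le, hy.2⟩).le)
      (fun x hx => hσ x hx s ⟨le_rfl, hst⟩)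
    simp only [hvr0, mul_zero, lt_self_iff_false] at hfinal
  exact ⟨heq ▸ Set.finite_range ζlim, heq⟩
end

section
/- Lemma 2.6(i): Let v be a classical solution of v_t = v_rr + ((m−1)/r) v_r − (b(r,t)/r²) v on [0,R] × (t1,t2), not identically zero, satisfying the boundary condition (1.5) and v(0,t) = 0 for all t ∈ (t1,t2), and let t1 < T1 < T2 < t2. If there exist n points 0 < r_1 < r_2 < ... < r_n ≤ R such that v(r_i,T2) · v(r_{i+1},T2) < 0 for all 1 ≤ i ≤ n−1, then there also exist n points 0 < r'_1 < r'_2 < ... < r'_n ≤ R such that v(r'_i,T1) · v(r'_{i+1},T1) < 0 for all 1 ≤ i ≤ n−1. -/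
open Set Filter

lemma aux_sin (φ : ℝ → ℝ) (hφ : Continuous φ) (h0 : φ 0 ∈ Icc 0 Real.pi)
    (hs : ∀ u ∈ Icc (0:ℝ) 1, 0 ≤ Real.sin (φ u)) : φ 1 ∈ Icc 0 Real.pi := by
  have hpi := Real.pi_pos
  have h01 : (0:ℝ) ≤ 1 := zero_le_one
  constructor
  · by_contra h
    push Not at h
    have hmem : max (φ 1) (-(Real.pi/2)) ∈ Icc (φ 1) (φ 0) :=
      ⟨le_max_left _ _, max_le (by linarith [h0.1]) (by linarith [h0.1])⟩
    obtain ⟨u, hu, hu'⟩ := intermediate_value_Icc' h01 hφ.continuousOn hmem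
    have := hs u hu
    rw [hu'] at this
    have h2 : Real.sin (max (φ 1) (-(Real.pi/2))) < 0 :=
      Real.sin_neg_of_neg_of_neg_pi_lt (max_lt h (by linarith))
        (lt_max_of_lt_right (by linarith))
    linarith
  · by_contra h
    push Not at h
    have hmem : min (φ 1) (3*Real.pi/2) ∈ Icc (φ 0) (φ 1) :=
      ⟨le_min (by linarith [h0.2]) (by linarith [h0.2]), min_le_left _ _⟩
    obtain ⟨u, hu, hu'⟩ := intermediate_value_Icc h01 hφ.continuousOn hmem
    have := hs u hu
    rw [hu'] at this
    have h2 : 0 < Real.sin (min (φ 1) (3*Real.pi/2) - Real.pi) :=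
      Real.sin_pos_of_pos_of_lt_pi (by have : Real.pi < min (φ 1) (3*Real.pi/2) := lt_min h (by linarith)
                                       linarith)
        (by have := min_le_right (φ 1) (3*Real.pi/2)
            linarith)
    rw [Real.sin_sub_pi] at h2
    linarith

lemma aux_cross (f g : ℝ → ℝ × ℝ) (hf : Continuous f) (hg : Continuous g) (T1 T2 : ℝ)
    (hfT : ∀ s, (f s).2 ∈ Icc T1 T2) (hgT : ∀ s, (g s).2 ∈ Icc T1 T2)
    (hf0 : (f 0).2 = T1) (hf1 : (f 1).2 = T2) (hg0 : (g 0).2 = T1) (hg1 : (g 1).2 = T2)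
    (h0 : (g 0).1 < (f 0).1) (h1 : (f 1).1 < (g 1).1) : ∃ s t, f s = g t := by
  by_contra hne
  push Not at hne
  let F : C(ℝ × ℝ, ℂ) := ⟨fun p => (((f p.1).1 - (g p.2).1 : ℝ) : ℂ) +
    (((f p.1).2 - (g p.2).2 : ℝ) : ℂ) * Complex.I, by fun_prop⟩
  have Fre : ∀ p, (F p).re = (f p.1).1 - (g p.2).1 := fun p => by simp [F]
  have Fim : ∀ p, (F p).im = (f p.1).2 - (g p.2).2 := fun p => by simp [F]
  have hF : ∀ p, F p ∈ ({0}ᶜ : Set ℂ) := by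
    intro p hp
    have hp : F p = 0 := hp
    apply hne p.1 p.2
    have a := Fre p
    have b := Fim p
    rw [hp] at a b
    simp only [Complex.zero_re, Complex.zero_im] at a b
    exact Prod.ext (by linarith) (by linarith)
  have h00 : Complex.exp ((Real.log ((f 0).1 - (g 0).1) : ℝ) : ℂ) = F (0,0) := by
    rw [← Complex.ofReal_exp, Real.exp_log (by linarith)]
    simp [F, hf0, hg0]
  obtain ⟨G, ⟨hG0, hG⟩, -⟩ := Complex.isCoveringMapOn_exp.existsUnique_continuousMap_lifts F h00 hF
  have hGe : ∀ p, Complex.exp (G p) = F p := fun p => congrFun hG p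
  have him : ∀ p, Real.exp (G p).re * Real.sin (G p).im = (f p.1).2 - (g p.2).2 := fun p => by
    rw [← Complex.exp_im, hGe, Fim]
  have hre : ∀ p, Real.exp (G p).re * Real.cos (G p).im = (f p.1).1 - (g p.2).1 := fun p => by
    rw [← Complex.exp_re, hGe, Fre]
  have hup : ∀ p : ℝ × ℝ, (g p.2).2 ≤ (f p.1).2 → 0 ≤ Real.sin (G p).im := fun p hp => by
    have := him p
    by_contra hlt
    push Not at hlt
    have := mul_neg_of_pos_of_neg (Real.exp_pos (G p).re) hlt
    linarith
  have hdn : ∀ p : ℝ × ℝ, (f p.1).2 ≤ (g p.2).2 → 0 ≤ Real.sin (-(G p).im) := fun p hp => by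
    rw [Real.sin_neg]
    have := him p
    by_contra hlt
    have := mul_pos (Real.exp_pos (G p).re) (show 0 < Real.sin (G p).im by linarith)
    linarith
  have hz : (G (0,0)).im = 0 := by rw [hG0]; simp
  have hpi := Real.pi_pos
  have a1 := aux_sin (fun s => (G (s,0)).im) (by fun_prop) (by simp [hz, hpi.le])
    (fun u _ => hup _ (by simp only [hg0]; exact (hfT u).1))
  have a2 := aux_sin (fun s => (G (1,s)).im) (by fun_prop) a1
    (fun u _ => hup _ (by simp only [hf1]; exact (hgT u).2))
  have b1 := aux_sin (fun s => -(G (0,s)).im) (by fun_prop) (by simp [hz, hpi.le])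
    (fun u _ => hdn _ (by simp only [hf0]; exact (hgT u).1))
  have b2 := aux_sin (fun s => -(G (s,1)).im) (by fun_prop) b1
    (fun u _ => hdn _ (by simp only [hg1]; exact (hfT u).2))
  have hz1 : (G (1,1)).im = 0 := by
    have h1 : 0 ≤ (G (1,1)).im := a2.1
    have h2 : 0 ≤ -(G (1,1)).im := b2.1
    linarith
  have := hre (1,1)
  rw [hz1, Real.cos_zero, mul_one] at this
  have := Real.exp_pos (G (1,1)).re
  simp only at *
  linarith

lemma aux_dd (f : ℝ → ℝ) (x : ℝ) (h : IsLocalMax f x) (hc : ContinuousAt f x) :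
    deriv (deriv f) x ≤ 0 := by
  by_contra hlt
  push Not at hlt
  have hd := h.deriv_eq_zero
  have hmin := isLocalMin_of_deriv_deriv_pos hlt hd hc
  have heq : f =ᶠ[nhds x] fun _ => f x := by
    filter_upwards [h, hmin] with y h1 h2 using le_antisymm h1 h2
  have : deriv (deriv f) x = 0 := by
    rw [heq.deriv.deriv_eq]
    simp
  linarith

lemma aux_left (h : ℝ → ℝ) (t D : ℝ) (hd : HasDerivAt h D t)
    (hle : ∀ᶠ s in nhdsWithin t (Iio t), h s ≤ h t) : 0 ≤ D := by
  have h1 := (hasDerivWithinAt_iff_tendsto_slope' (s := Iio t) (by simp)).1 hd.hasDerivWithinAt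
  refine ge_of_tendsto h1 ?_
  filter_upwards [hle, self_mem_nhdsWithin] with s hs hst
  rw [slope_def_field]
  have : s < t := hst
  exact div_nonneg_of_nonpos (by linarith) (by linarith)

lemma aux_path (m : ℝ) (R t1 t2 T1 T2 C : ℝ) (hR : 0 < R) (b w : ℝ → ℝ → ℝ)
    (hw : ContDiffOn ℝ (⊤ : ℕ∞) (fun p : ℝ × ℝ => w p.1 p.2) (Icc 0 R ×ˢ Ioo t1 t2))
    (hpde : ∀ r ∈ Ioo (0:ℝ) R, ∀ t ∈ Ioo t1 t2,
      deriv (fun s => w r s) t =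
        deriv (deriv (fun x => w x t)) r + ((m - 1) / r) * deriv (fun x => w x t) r
          - (b r t / r ^ 2) * w r t)
    (hbcR : (∀ t ∈ Ioo t1 t2, w R t = 0) ∨ (∀ t ∈ Ioo t1 t2, w R t ≠ 0))
    (hw0 : ∀ t ∈ Ioo t1 t2, w 0 t = 0)
    (hT1 : t1 < T1) (hT12 : T1 < T2) (hT2 : T2 < t2)
    (hC : ∀ r ∈ Ioo (0:ℝ) R, ∀ t ∈ Icc T1 T2, - (b r t / r ^ 2) ≤ C)
    (ρ : ℝ) (hρ : ρ ∈ Icc 0 R) (hpos : 0 < w ρ T2) :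
    ∃ x, JoinedIn {p : ℝ × ℝ | p ∈ Icc 0 R ×ˢ Icc T1 T2 ∧ 0 < w p.1 p.2} (x, T1) (ρ, T2) := by
  set K : Set (ℝ × ℝ) := Icc 0 R ×ˢ Icc T1 T2 with hK
  set U : Set (ℝ × ℝ) := {p | p ∈ K ∧ 0 < w p.1 p.2} with hU
  have hsub : Icc T1 T2 ⊆ Ioo t1 t2 := fun t ht => ⟨by linarith [ht.1], by linarith [ht.2]⟩
  have hKsub : K ⊆ Icc 0 R ×ˢ Ioo t1 t2 := prod_mono le_rfl hsub
  have hKc : IsCompact K := isCompact_Icc.prod isCompact_Icc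
  have hKconv : Convex ℝ K := (convex_Icc 0 R).prod (convex_Icc T1 T2)
  have hcont : ContinuousOn (fun p : ℝ × ℝ => w p.1 p.2) K := hw.continuousOn.mono hKsub
  by_contra hno
  push Not at hno
  let P : Set (ℝ × ℝ) := {p | JoinedIn U p (ρ, T2)}
  have hPU : P ⊆ U := fun p hp => hp.source_mem
  have hPK : P ⊆ K := fun p hp => (hPU hp).1
  have hp0 : ((ρ, T2) : ℝ × ℝ) ∈ P := JoinedIn.refl ⟨⟨hρ, hT12.le, le_rfl⟩, hpos⟩
  -- local structure
  have hloc : ∀ q ∈ U, ∃ ε > 0, ∀ p ∈ Metric.ball q ε ∩ K, JoinedIn U p q := by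
    intro q hq
    have h1 : ∀ᶠ p in nhdsWithin q K, 0 < w p.1 p.2 :=
      (hcont q hq.1).eventually (lt_mem_nhds hq.2)
    obtain ⟨ε, hε, hball⟩ := Metric.mem_nhdsWithin_iff.1 h1
    refine ⟨ε, hε, fun p hp => ?_⟩
    have hcv : Convex ℝ (Metric.ball q ε ∩ K) := (convex_ball q ε).inter hKconv
    refine JoinedIn.of_segment_subset fun z hz => ?_
    have hz' := hcv.segment_subset hp ⟨Metric.mem_ball_self hε, hq.1⟩ hz
    exact ⟨hz'.2, hball hz'⟩
  -- maximum
  let E : ℝ × ℝ → ℝ := fun p => Real.exp (-(C+1) * p.2) * w p.1 p.2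
  have hE : ContinuousOn E K := by
    apply ContinuousOn.mul _ hcont
    fun_prop
  have hclK : closure P ⊆ K := closure_minimal hPK hKc.isClosed
  obtain ⟨q, hqcl, hqmax⟩ := (hKc.of_isClosed_subset isClosed_closure hclK).exists_isMaxOn
    ⟨_, subset_closure hp0⟩ (hE.mono hclK)
  have hqK := hclK hqcl
  have hqpos : 0 < w q.1 q.2 := by
    have h1 : E (ρ, T2) ≤ E q := hqmax (subset_closure hp0)
    have h2 : 0 < E (ρ, T2) := mul_pos (Real.exp_pos _) hpos
    exact pos_of_mul_pos_right (lt_of_lt_of_le h2 h1) (Real.exp_pos _).le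
  obtain ⟨ε, hε, hball⟩ := hloc q ⟨hqK, hqpos⟩
  have hqP : q ∈ P := by
    obtain ⟨p, hpP, hpd⟩ := Metric.mem_closure_iff.1 hqcl ε hε
    have := hball p ⟨by rw [Metric.mem_ball, dist_comm]; exact hpd, hPK hpP⟩
    exact this.symm.trans hpP
  have hballP : ∀ p ∈ Metric.ball q ε ∩ K, E p ≤ E q := fun p hp =>
    hqmax (subset_closure ((hball p hp).trans hqP))
  obtain ⟨r, t⟩ := q
  simp only at hqpos
  have htT1 : T1 < t := by
    rcases hqK.2.1.lt_or_eq with h | h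
    · exact h
    · simp only at h
      subst h
      exact absurd hqP (hno r)
  have htT2 : t ≤ T2 := hqK.2.2
  have htI : t ∈ Ioo t1 t2 := ⟨by linarith, by linarith⟩
  have hr0 : 0 < r := by
    rcases hqK.1.1.lt_or_eq with h | h
    · exact h
    · simp only at h
      rw [← h, hw0 t htI] at hqpos
      exact absurd hqpos (lt_irrefl _)
  have hrR : r < R := by
    rcases hqK.1.2.lt_or_eq with h | h
    · exact h
    · exfalso
      simp only at h
      subst h
      rcases hbcR with h | h
      · rw [h t htI] at hqpos
        exact lt_irrefl _ hqpos
      · apply hno r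
        refine JoinedIn.trans ?_ hqP
        refine JoinedIn.of_segment_subset ?_
        have hcR : ContinuousOn (fun s => w r s) (Icc T1 t) := by
          refine hcont.comp (f := fun s => (r, s)) (by fun_prop) ?_
          intro s hs
          exact ⟨⟨hR.le, le_rfl⟩, hs.1, hs.2.trans htT2⟩
        have hposR : ∀ s ∈ Icc T1 t, 0 < w r s := by
          intro s hs
          by_contra hneg
          push Not at hneg
          obtain ⟨z, hz, hz'⟩ := intermediate_value_Icc hs.2
            (hcR.mono (Icc_subset_Icc_left hs.1)) (show (0:ℝ) ∈ Icc _ _ from ⟨hneg, hqpos.le⟩)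
          exact h z (hsub ⟨hs.1.trans hz.1, hz.2.trans htT2⟩) hz'
        have hcv : Convex ℝ (({r} : Set ℝ) ×ˢ Icc T1 t) := (convex_singleton r).prod (convex_Icc T1 t)
        intro z hz
        have hz' := hcv.segment_subset (x := (r, T1)) (y := (r, t)) ⟨rfl, le_rfl, htT1.le⟩ ⟨rfl, htT1.le, le_rfl⟩ hz
        obtain ⟨z1, z2⟩ := z
        obtain ⟨hz1, hz2⟩ := hz'
        simp only [mem_singleton_iff] at hz1
        subst hz1
        exact ⟨⟨⟨hR.le, le_rfl⟩, hz2.1, hz2.2.trans htT2⟩, hposR _ hz2⟩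
  -- derivatives
  have hnhds : Icc 0 R ×ˢ Ioo t1 t2 ∈ nhds (r, t) :=
    prod_mem_nhds (Icc_mem_nhds hr0 hrR) (Ioo_mem_nhds htI.1 htI.2)
  have hCD : ContDiffAt ℝ (⊤ : ℕ∞) (fun p : ℝ × ℝ => w p.1 p.2) (r, t) := hw.contDiffAt hnhds
  have hdiff : DifferentiableAt ℝ (fun p : ℝ × ℝ => w p.1 p.2) (r, t) := hCD.differentiableAt (by simp)
  have hdt : DifferentiableAt ℝ (fun s => w r s) t :=
    DifferentiableAt.comp (g := fun p : ℝ × ℝ => w p.1 p.2) (f := fun s => (r, s)) t hdiff (by fun_prop)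
  have hdr : DifferentiableAt ℝ (fun x => w x t) r :=
    DifferentiableAt.comp (g := fun p : ℝ × ℝ => w p.1 p.2) (f := fun x => (x, t)) r hdiff (by fun_prop)
  have hmaxr : IsLocalMax (fun x => w x t) r := by
    have h1 : ∀ᶠ x in nhds r, x ∈ Metric.ball r ε := Metric.ball_mem_nhds r hε
    filter_upwards [h1, Icc_mem_nhds hr0 hrR] with x hx hx'
    have := hballP (x, t) ⟨by
      rw [Metric.mem_ball, Prod.dist_eq]; exact max_lt hx (by simpa using hε), hx', hqK.2⟩
    exact le_of_mul_le_mul_left this (Real.exp_pos _)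
  have hr1 : deriv (fun x => w x t) r = 0 := hmaxr.deriv_eq_zero
  have hr2 := aux_dd _ _ hmaxr hdr.continuousAt
  have hEd : HasDerivAt (fun s => Real.exp (-(C+1) * s) * w r s)
      (Real.exp (-(C+1) * t) * (-(C+1)) * w r t + Real.exp (-(C+1) * t) * deriv (fun s => w r s) t) t := by
    have h1 : HasDerivAt (fun s : ℝ => -(C+1) * s) (-(C+1)) t := by
      simpa using (hasDerivAt_id t).const_mul (-(C+1))
    exact h1.exp.mul hdt.hasDerivAt
  have hDt := aux_left _ _ _ hEd (by
    have h1 : ∀ᶠ s in nhdsWithin t (Iio t), s ∈ Metric.ball t ε :=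
      nhdsWithin_le_nhds (Metric.ball_mem_nhds t hε)
    have h2 : ∀ᶠ s in nhdsWithin t (Iio t), T1 < s := nhdsWithin_le_nhds (lt_mem_nhds htT1)
    filter_upwards [h1, h2, self_mem_nhdsWithin] with s hs hs1 hs2
    have hs2 : s < t := hs2
    exact hballP (r, s) ⟨by
      rw [Metric.mem_ball, Prod.dist_eq]; exact max_lt (by simpa using hε) hs, hqK.1, hs1.le, by
        show s ≤ T2
        linarith⟩)
  have hDt' : 0 ≤ deriv (fun s => w r s) t - (C+1) * w r t := by
    refine nonneg_of_mul_nonneg_right (a := Real.exp (-(C+1) * t)) ?_ (Real.exp_pos _)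
    linarith
  have hp := hpde r ⟨hr0, hrR⟩ t htI
  rw [hr1] at hp
  have hb := mul_le_mul_of_nonneg_right (hC r ⟨hr0, hrR⟩ t ⟨htT1.le, htT2⟩) hqpos.le
  linarith

lemma aux_ext (w : ℝ → ℝ → ℝ) (K : Set (ℝ × ℝ)) (p q : ℝ × ℝ)
    (h : JoinedIn {p : ℝ × ℝ | p ∈ K ∧ 0 < w p.1 p.2} p q) :
    ∃ f : ℝ → ℝ × ℝ, Continuous f ∧ f 0 = p ∧ f 1 = q ∧ ∀ s, f s ∈ K ∧ 0 < w (f s).1 (f s).2 := by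
  obtain ⟨γ, hγ⟩ := h
  refine ⟨γ.extend, γ.continuous_extend, by simp, by simp, fun s => ?_⟩
  have hm : γ.extend s ∈ range γ.extend := ⟨s, rfl⟩
  rw [Path.extend_range] at hm
  obtain ⟨u, hu⟩ := hm
  rw [← hu]
  exact hγ u

theorem sign_changes_persist_backward
    (m : ℕ) (hm : 2 ≤ m) (R t1 t2 : ℝ) (hR : 0 < R) (ht12 : t1 < t2)
    (b v : ℝ → ℝ → ℝ)
    (hb_smooth : ContDiffOn ℝ (⊤ : ℕ∞) (fun p : ℝ × ℝ => b p.1 p.2) (Icc 0 R ×ˢ Ioo t1 t2))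
    (hb_bdd : ∃ C : ℝ, ∀ r ∈ Icc (0:ℝ) R, ∀ t ∈ Ioo t1 t2, |b r t| ≤ C)
    (hb_deriv_bdd : ∃ C : ℝ, ∀ r ∈ Icc (0:ℝ) R, ∀ t ∈ Ioo t1 t2,
      |deriv (fun x => b x t) r| ≤ C ∧ |deriv (fun s => b r s) t| ≤ C)
    (hb0 : ∀ t ∈ Ioo t1 t2, b 0 t = (m : ℝ) - 1)
    (hbr0 : ∀ t ∈ Ioo t1 t2, deriv (fun x => b x t) 0 = 0)
    (hv_smooth : ContDiffOn ℝ (⊤ : ℕ∞) (fun p : ℝ × ℝ => v p.1 p.2) (Icc 0 R ×ˢ Ioo t1 t2))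
    (hpde : ∀ r ∈ Ioo (0:ℝ) R, ∀ t ∈ Ioo t1 t2,
      deriv (fun s => v r s) t =
        deriv (deriv (fun x => v x t)) r + (((m : ℝ) - 1) / r) * deriv (fun x => v x t) r
          - (b r t / r ^ 2) * v r t)
    (hbcR : (∀ t ∈ Ioo t1 t2, v R t = 0) ∨ (∀ t ∈ Ioo t1 t2, v R t ≠ 0))
    (hv0 : ∀ t ∈ Ioo t1 t2, v 0 t = 0)
    (hnz : ¬ ∀ r ∈ Icc (0:ℝ) R, ∀ t ∈ Ioo t1 t2, v r t = 0)
    (T1 T2 : ℝ) (hT1 : t1 < T1) (hT12 : T1 < T2) (hT2 : T2 < t2)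
    (n : ℕ) (r : ℕ → ℝ)
    (hr_pos : ∀ i < n, 0 < r i)
    (hr_mono : ∀ i, i + 1 < n → r i < r (i + 1))
    (hr_le : ∀ i < n, r i ≤ R)
    (hsign : ∀ i, i + 1 < n → v (r i) T2 * v (r (i + 1)) T2 < 0) :
    ∃ r' : ℕ → ℝ,
      (∀ i < n, 0 < r' i) ∧
      (∀ i, i + 1 < n → r' i < r' (i + 1)) ∧
      (∀ i < n, r' i ≤ R) ∧
      (∀ i, i + 1 < n → v (r' i) T1 * v (r' (i + 1)) T1 < 0) := by
  rcases Nat.lt_or_ge n 2 with hn | hn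
  · exact ⟨fun _ => R, fun _ _ => hR, fun i hi => by omega, fun _ _ => le_rfl,
      fun i hi => by omega⟩
  have hsub : Icc T1 T2 ⊆ Ioo t1 t2 := fun t ht => ⟨by linarith [ht.1], by linarith [ht.2]⟩
  have hm1 : (0:ℝ) < (m:ℝ) - 1 := by
    have : (2:ℝ) ≤ m := by exact_mod_cast hm
    linarith
  -- bound from above on the potential
  obtain ⟨C, hC⟩ : ∃ C, ∀ r ∈ Ioo (0:ℝ) R, ∀ t ∈ Icc T1 T2, - (b r t / r ^ 2) ≤ C := by
    have hKc : IsCompact (Icc (0:ℝ) R ×ˢ Icc T1 T2) := isCompact_Icc.prod isCompact_Icc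
    have hbc : ContinuousOn (fun p : ℝ × ℝ => b p.1 p.2) (Icc (0:ℝ) R ×ˢ Icc T1 T2) :=
      hb_smooth.continuousOn.mono (prod_mono le_rfl hsub)
    let S : Set (ℝ × ℝ) := (Icc (0:ℝ) R ×ˢ Icc T1 T2) ∩ (fun p : ℝ × ℝ => b p.1 p.2) ⁻¹' Iic 0
    have hSc : IsCompact S := hKc.of_isClosed_subset
      (hbc.preimage_isClosed_of_isClosed hKc.isClosed isClosed_Iic) inter_subset_left
    have hS0 : ∀ p ∈ S, p.1 ≠ 0 := by
      rintro ⟨x, t⟩ hp h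
      simp only at h
      subst h
      have h1 : b 0 t ≤ 0 := hp.2
      rw [hb0 t (hsub hp.1.2)] at h1
      linarith
    have hc : ContinuousOn (fun p : ℝ × ℝ => -(b p.1 p.2 / p.1 ^ 2)) S :=
      ((hbc.mono inter_subset_left).div (by fun_prop) (fun p hp => pow_ne_zero 2 (hS0 p hp))).neg
    obtain ⟨C, hC⟩ := hSc.bddAbove_image hc
    refine ⟨max C 0, fun x hx t ht => ?_⟩
    rcases le_or_gt (b x t) 0 with h | h
    · exact le_max_of_le_left (hC ⟨(x, t), ⟨⟨Ioo_subset_Icc_self hx, ht⟩, h⟩, rfl⟩)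
    · refine le_max_of_le_right ?_
      have : 0 ≤ b x t / x ^ 2 := by positivity
      linarith
  have hne : ∀ i < n, v (r i) T2 ≠ 0 := by
    intro i hi h
    rcases Nat.lt_or_ge (i+1) n with h1 | h1
    · have := hsign i h1
      rw [h] at this
      simp at this
    · obtain ⟨j, rfl⟩ : ∃ j, i = j + 1 := ⟨i - 1, by omega⟩
      have := hsign j hi
      rw [h] at this
      simp at this
  have key : ∀ i, ∃ f : ℝ → ℝ × ℝ, i < n → Continuous f ∧ (f 0).2 = T1 ∧ f 1 = (r i, T2) ∧
      ∀ s, f s ∈ Icc 0 R ×ˢ Icc T1 T2 ∧ 0 < v (f s).1 (f s).2 * v (r i) T2 := by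
    intro i
    by_cases hi : i < n
    swap
    · exact ⟨fun _ => 0, fun h => absurd h hi⟩
    have hρ : r i ∈ Icc 0 R := ⟨(hr_pos i hi).le, hr_le i hi⟩
    rcases lt_or_gt_of_ne (hne i hi) with h | h
    · obtain ⟨x, hx⟩ := aux_path m R t1 t2 T1 T2 C hR b (fun x t => - v x t) hv_smooth.neg
        (by
          intro x hx t ht
          have h1 : (deriv fun x => -v x t) = fun x => -deriv (fun x => v x t) x := by
            funext y
            exact deriv.fun_neg
          rw [h1]
          simp only [deriv.fun_neg]
          rw [hpde x hx t ht]
          ring)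
        (by simpa using hbcR) (by simpa using hv0) hT1 hT12 hT2 hC (r i) hρ (by simpa using h)
      obtain ⟨f, hf, hf0, hf1, hfs⟩ := aux_ext (fun x t => - v x t) _ _ _ hx
      exact ⟨f, fun _ => ⟨hf, by rw [hf0], hf1, fun s => ⟨(hfs s).1,
        mul_pos_of_neg_of_neg (by simpa using (hfs s).2) h⟩⟩⟩
    · obtain ⟨x, hx⟩ := aux_path m R t1 t2 T1 T2 C hR b v hv_smooth hpde hbcR hv0
        hT1 hT12 hT2 hC (r i) hρ h
      obtain ⟨f, hf, hf0, hf1, hfs⟩ := aux_ext v _ _ _ hx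
      exact ⟨f, fun _ => ⟨hf, by rw [hf0], hf1, fun s => ⟨(hfs s).1, mul_pos (hfs s).2 h⟩⟩⟩
  choose f hf using key
  have hopp : ∀ i, i + 1 < n → ∀ s t, v (f i s).1 (f i s).2 * v (f (i+1) t).1 (f (i+1) t).2 < 0 := by
    intro i hi s t
    have h1 := ((hf i (by omega)).2.2.2 s).2
    have h2 := ((hf (i+1) hi).2.2.2 t).2
    have h3 := hsign i hi
    by_contra hcon
    push Not at hcon
    have h4 := mul_pos h1 h2
    have h5 := mul_nonpos_of_nonneg_of_nonpos hcon h3.le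
    linarith
  have hopp0 : ∀ i, i + 1 < n → v (f i 0).1 T1 * v (f (i+1) 0).1 T1 < 0 := by
    intro i hi
    have := hopp i hi 0 0
    rwa [(hf i (by omega)).2.1, (hf (i+1) hi).2.1] at this
  refine ⟨fun i => (f i 0).1, fun i hi => ?_, fun i hi => ?_, fun i hi => ?_, hopp0⟩
  · have h1 := (hf i hi).2.2.2 0
    rcases h1.1.1.1.lt_or_eq with h | h
    · exact h
    · have h2 := h1.2
      rw [← h, hv0 _ (hsub h1.1.2), zero_mul] at h2
      exact absurd h2 (lt_irrefl _)
  · by_contra hcon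
    simp only [not_lt] at hcon
    have hi' : i < n := by omega
    rcases hcon.lt_or_eq with h | h
    · obtain ⟨s, t, hst⟩ := aux_cross (f i) (f (i+1)) (hf i hi').1 (hf (i+1) hi).1 T1 T2
        (fun s => ((hf i hi').2.2.2 s).1.2) (fun s => ((hf (i+1) hi).2.2.2 s).1.2)
        (hf i hi').2.1 (by rw [(hf i hi').2.2.1]) (hf (i+1) hi).2.1 (by rw [(hf (i+1) hi).2.2.1])
        h (by rw [(hf i hi').2.2.1, (hf (i+1) hi).2.2.1]; exact hr_mono i hi)
      have := hopp i hi s t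
      rw [hst] at this
      exact absurd this (not_lt.2 (mul_self_nonneg _))
    · have := hopp0 i hi
      rw [h] at this
      exact absurd this (not_lt.2 (mul_self_nonneg _))
  · exact ((hf i hi).2.2.2 0).1.1.2
end
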